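/- arXiv:1701.00766 — 5 statements merged into one kernel-verified Lean document; each statement's English description precedes it below -/
import Mathlib

section
/- Let X = (X_1,…,X_k) ∈ D^k(H)^-. Then there exists c > 0 with 𝒫(R, rX) ≤ c²·I for all r ∈ [0,1) if and only if the spectral radius of X_i is strictly less than 1 for every i ∈ {1,…,k}. -/
open ContinuousLinearMap

noncomputable section

/-- `ℓ²(ℕ^k; H)`. -/
abbrev L2 (k : ℕ) (H : Type*) [NormedAddCommGroup H] : Type _ :=
  lp (fun _ : Fin k → ℕ => H) 2

variable {k : ℕ} {H : Type*} [NormedAddCommGroup H] [InnerProductSpace ℂ H] [CompleteSpace H]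

/-- The Loewner (operator) order: `S ≤ T` iff `T - S` is a positive operator. -/
def opLE {E : Type*} [NormedAddCommGroup E] [InnerProductSpace ℂ E] [CompleteSpace E]
    (S T : E →L[ℂ] E) : Prop := (T - S).IsPositive

/-- The defect operator `Δ_X(I) = (id - Φ_{X_1}) ∘ ⋯ ∘ (id - Φ_{X_k})(I)`,
where `Φ_{X_i}(Y) = X_i Y X_i*`. -/
def defect (X : Fin k → (H →L[ℂ] H)) : H →L[ℂ] H :=
  ((List.ofFn fun i => fun Y : H →L[ℂ] H => Y - X i * Y * adjoint (X i)).foldr (· ∘ ·) id) 1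

/-- Membership in the regular polydisk `D^k(H)`: pairwise commuting operators of norm `< 1`
with positive invertible defect operator. -/
def memPolydisk (X : Fin k → (H →L[ℂ] H)) : Prop :=
  (∀ i j, Commute (X i) (X j)) ∧ (∀ i, ‖X i‖ < 1) ∧
    (defect X).IsPositive ∧ IsUnit (defect X)

/-- Membership in the closed regular polydisk `D^k(H)⁻`: pairwise commuting contractions `X`
with `rX ∈ D^k(H)` for all `r ∈ (0,1)`. -/
def memClosedPolydisk (X : Fin k → (H →L[ℂ] H)) : Prop :=
  (∀ i j, Commute (X i) (X j)) ∧ (∀ i, ‖X i‖ ≤ 1) ∧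
    ∀ r ∈ Set.Ioo (0 : ℝ) 1, memPolydisk (fun i => ((r : ℂ) • X i))

/-- `P` is the pluriharmonic Poisson kernel `𝒫(R, rX)` on `ℓ²(ℕ^k; H)`: it is characterized by
`⟨𝒫(R,rX)(δ_β h), δ_α ℓ⟩ = r^{Σ|α_i - β_i|} ⟨(∏ X_i^{(β_i-α_i)⁺})(∏ (X_i*)^{(α_i-β_i)⁺}) h, ℓ⟩`. -/
def IsPoissonKernel (X : Fin k → (H →L[ℂ] H)) (r : ℝ)
    (P : L2 k H →L[ℂ] L2 k H) : Prop :=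
  ∀ (α β : Fin k → ℕ) (h ℓ : H),
    inner (𝕜 := ℂ) (P (lp.single 2 β h)) (lp.single 2 α ℓ) =
      ((r ^ (∑ i, ((α i - β i) + (β i - α i))) : ℝ) : ℂ) *
        inner (𝕜 := ℂ)
          (((List.ofFn fun i => X i ^ (β i - α i)).prod *
            (List.ofFn fun i => (adjoint (X i)) ^ (α i - β i)).prod) h) ℓ

/-- The two-sided Harnack-type domination `c⁻² 𝒫(R,rB) ≤ 𝒫(R,rA) ≤ c² 𝒫(R,rB)` for all
`r ∈ [0,1)`, expressed in terms of the Poisson kernel families. -/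
def PoissonSandwich (PA PB : ℝ → (L2 k H →L[ℂ] L2 k H)) (c : ℝ) : Prop :=
  ∀ r ∈ Set.Ico (0 : ℝ) 1,
    opLE (((c : ℂ) ^ 2)⁻¹ • PB r) (PA r) ∧ opLE (PA r) (((c : ℂ) ^ 2) • PB r)

/-- Poisson equivalence of two points, expressed via their Poisson kernel families. -/
def PoissonEquiv (PA PB : ℝ → (L2 k H →L[ℂ] L2 k H)) : Prop :=
  ∃ c : ℝ, 1 ≤ c ∧ PoissonSandwich PA PB c

/-- The Poisson distance `δ_P`, expressed via the Poisson kernel families. -/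
def deltaP (PA PB : ℝ → (L2 k H →L[ℂ] L2 k H)) : ℝ :=
  Real.log (sInf {c : ℝ | 1 ≤ c ∧ PoissonSandwich PA PB c})


lemma aux_approx (T : H →L[ℂ] H) (z : ℂ) (hz : z ∈ spectrum ℂ T) (h1 : ‖z‖ = 1)
    (hT : ‖T‖ ≤ 1) (ε : ℝ) (hε : 0 < ε) : ∃ h : H, ‖h‖ = 1 ∧ ‖T h - z • h‖ ≤ ε := by
  by_contra! hcon
  have hnt : Nontrivial (H →L[ℂ] H) := by
    by_contra hn
    rw [not_nontrivial_iff_subsingleton] at hn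
    exact hz (by simp [Subsingleton.elim (algebraMap ℂ (H →L[ℂ] H) z - T) 1])
  have hntH : Nontrivial H := by
    by_contra hn
    rw [not_nontrivial_iff_subsingleton] at hn
    exact not_subsingleton (H →L[ℂ] H) ⟨fun a b => by ext x; exact Subsingleton.elim _ _⟩
  have hb : ∀ h : H, ε * ‖h‖ ≤ ‖T h - z • h‖ := by
    intro h
    by_cases h0 : h = 0
    · simp [h0]
    have hp : 0 < ‖h‖ := norm_pos_iff.2 h0
    have := hcon (((‖h‖⁻¹ : ℝ) : ℂ) • h) (by
      rw [norm_smul]; simp [hp.ne'])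
    rw [map_smul, smul_comm, ← smul_sub, norm_smul] at this
    simp only [Complex.norm_real, norm_inv, norm_norm] at this
    rw [inv_mul_eq_div, lt_div_iff₀ hp] at this
    exact this.le
  have hun : IsUnit (algebraMap ℂ (H →L[ℂ] H) (((1 + ε / 4 : ℝ) : ℂ) * z) - T) := by
    apply spectrum.mem_resolventSet_of_norm_lt
    rw [norm_mul, h1, Complex.norm_real, Real.norm_of_nonneg (by positivity)]
    linarith
  obtain ⟨u, hu⟩ := hun
  have hdist : ∀ h : H, ‖(ε / 4 : ℂ) • (z • h)‖ = ε / 4 * ‖h‖ := by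
    intro h
    rw [norm_smul, norm_smul, h1, one_mul, norm_div, Complex.norm_real,
      Real.norm_of_nonneg hε.le]
    norm_num
  have huh : ∀ h : H, 3 * ε / 4 * ‖h‖ ≤ ‖(u : H →L[ℂ] H) h‖ := by
    intro h
    have e : (u : H →L[ℂ] H) h = (ε / 4 : ℂ) • (z • h) - (T h - z • h) := by
      rw [hu]
      simp [Algebra.algebraMap_eq_smul_one]
      module
    have h2 := norm_sub_norm_le (T h - z • h) ((ε / 4 : ℂ) • (z • h))
    rw [norm_sub_rev (T h - z • h) _, ← e, hdist] at h2
    linarith [hb h]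
  have hinv : ‖((u⁻¹ : (H →L[ℂ] H)ˣ) : H →L[ℂ] H)‖ ≤ (3 * ε / 4)⁻¹ := by
    apply ContinuousLinearMap.opNorm_le_bound _ (by positivity)
    intro v
    have h3 := huh (((u⁻¹ : (H →L[ℂ] H)ˣ) : H →L[ℂ] H) v)
    rw [← ContinuousLinearMap.mul_apply, Units.mul_inv, ContinuousLinearMap.one_apply] at h3
    rw [inv_mul_eq_div, le_div_iff₀ (by positivity)]
    linarith
  apply hz
  have hlt : ‖(algebraMap ℂ (H →L[ℂ] H) z - T) - u‖
      < ‖((u⁻¹ : (H →L[ℂ] H)ˣ) : H →L[ℂ] H)‖⁻¹ := by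
    have h4 : ‖(algebraMap ℂ (H →L[ℂ] H) z - T) - u‖ ≤ ε / 4 := by
      apply ContinuousLinearMap.opNorm_le_bound _ (by positivity)
      intro h
      rw [← hdist, hu, ← norm_neg ((ε / 4 : ℂ) • (z • h))]
      apply le_of_eq
      congr 1
      simp [Algebra.algebraMap_eq_smul_one]
      module
    have h5 := inv_anti₀ (Units.norm_pos (u⁻¹)) hinv
    rw [inv_inv] at h5
    linarith
  exact (Units.ofNearby u _ hlt).isUnit

lemma aux_summable (T : H →L[ℂ] H) (h : spectralRadius ℂ T < 1) :
    Summable fun n : ℕ => ‖T ^ n‖ := by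
  obtain ⟨ρ, hρ, hρ1⟩ := ENNReal.lt_iff_exists_nnreal_btwn.1 h
  have ht := spectrum.pow_nnnorm_pow_one_div_tendsto_nhds_spectralRadius T
  have hev := ht.eventually_lt_const hρ
  have hρ1' : ρ < 1 := by exact_mod_cast hρ1
  refine Summable.of_norm_bounded_eventually_nat (g := fun n => (ρ : ℝ) ^ n)
    (summable_geometric_of_lt_one ρ.2 (by exact_mod_cast hρ1')) ?_
  filter_upwards [hev, Filter.eventually_gt_atTop 0] with n hn hn0
  rw [norm_norm]
  have h2 : ((‖T ^ n‖₊ : ENNReal) ^ (1 / n : ℝ)) ^ (n : ℝ) ≤ (ρ : ENNReal) ^ (n : ℝ) :=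
    ENNReal.rpow_le_rpow hn.le (by positivity)
  rw [← ENNReal.rpow_mul, one_div, inv_mul_cancel₀ (by positivity), ENNReal.rpow_one,
    ENNReal.rpow_natCast] at h2
  exact_mod_cast h2

lemma aux_prod_single {M : Type*} [Monoid M] : ∀ {n : ℕ} (f : Fin n → M) (i : Fin n),
    (∀ j, j ≠ i → f j = 1) → (List.ofFn f).prod = f i := by
  intro n
  induction n with
  | zero => intro f i; exact i.elim0
  | succ n ih =>
    intro f i hf
    rw [List.ofFn_succ, List.prod_cons]
    refine Fin.cases ?_ ?_ i (motive := fun i => (∀ j, j ≠ i → f j = 1) →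
      f 0 * (List.ofFn fun i => f i.succ).prod = f i) hf
    · intro hf
      have : (fun i : Fin n => f i.succ) = fun _ => 1 := by
        funext j; exact hf _ (Fin.succ_ne_zero j)
      rw [this]; simp
    · intro i hf
      rw [hf 0 (Fin.succ_ne_zero i).symm, one_mul]
      exact ih (fun j => f j.succ) i (fun j hj => hf _ (by simpa using hj))

lemma aux_norm_prod : ∀ {n : ℕ} (f : Fin n → (H →L[ℂ] H)),
    ‖(List.ofFn f).prod‖ ≤ ∏ i, ‖f i‖ := by
  intro n
  induction n with
  | zero => intro f; simp only [List.ofFn_zero, List.prod_nil, Finset.univ_eq_empty, Finset.prod_empty]; exact ContinuousLinearMap.norm_id_le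
  | succ n ih =>
    intro f
    rw [List.ofFn_succ, List.prod_cons, Fin.prod_univ_succ]
    exact (norm_mul_le _ _).trans (by gcongr; exact ih _)

lemma aux_star_prod : ∀ {n : ℕ} (f : Fin n → (H →L[ℂ] H)), (∀ i j, Commute (f i) (f j)) →
    star (List.ofFn f).prod = (List.ofFn fun i => star (f i)).prod := by
  intro n
  induction n with
  | zero => intro f _; simp
  | succ n ih =>
    intro f hf
    rw [List.ofFn_succ, List.prod_cons, List.ofFn_succ, List.prod_cons,
      ← ih _ (fun i j => hf _ _), ← star_mul]
    congr 1
    apply Commute.list_prod_right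
    intro x hx
    rw [List.mem_ofFn'] at hx
    obtain ⟨j, rfl⟩ := hx
    exact hf _ _

/-- The Schur kernel. -/
def auxK (X : Fin k → (H →L[ℂ] H)) (α β : Fin k → ℕ) : ℝ :=
  ∏ i, (‖X i ^ (β i - α i)‖ * ‖X i ^ (α i - β i)‖)

lemma auxK_nonneg (X : Fin k → (H →L[ℂ] H)) (α β : Fin k → ℕ) : 0 ≤ auxK X α β :=
  Finset.prod_nonneg fun _ _ => by positivity

lemma auxK_symm (X : Fin k → (H →L[ℂ] H)) (α β : Fin k → ℕ) : auxK X α β = auxK X β α :=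
  Finset.prod_congr rfl fun _ _ => mul_comm _ _

lemma aux_one_sum (T : H →L[ℂ] H) (h : Summable fun n : ℕ => ‖T ^ n‖) :
    ∃ C : ℝ, 0 ≤ C ∧ ∀ (a : ℕ) (S : Finset ℕ),
      ∑ m ∈ S, ‖T ^ (m - a)‖ * ‖T ^ (a - m)‖ ≤ C := by
  let f : ℤ → ℝ := fun z => ‖T ^ z.toNat‖ * ‖T ^ (-z).toNat‖
  have hf0 : ∀ z, 0 ≤ f z := fun z => by positivity
  have h1 : ‖(1 : H →L[ℂ] H)‖ ≤ 1 := ContinuousLinearMap.norm_id_le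
  have hf : Summable f := by
    apply Summable.of_nat_of_neg
    · refine Summable.of_nonneg_of_le (fun n => hf0 _) (fun n => ?_) h
      simp only [f, Int.toNat_natCast, Int.toNat_neg_natCast, pow_zero]
      exact mul_le_of_le_one_right (norm_nonneg _) h1
    · refine Summable.of_nonneg_of_le (fun n => hf0 _) (fun n => ?_) h
      simp only [f, neg_neg, Int.toNat_natCast, Int.toNat_neg_natCast, pow_zero]
      exact mul_le_of_le_one_left (norm_nonneg _) h1
  refine ⟨∑' z, f z, tsum_nonneg hf0, fun a S => ?_⟩
  have hinj : Function.Injective fun m : ℕ => (m : ℤ) - a := by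
    intro m n hmn; simpa using hmn
  have := hf.sum_le_tsum (S.map ⟨_, hinj⟩) (fun z _ => hf0 z)
  rw [Finset.sum_map] at this
  refine le_trans (le_of_eq (Finset.sum_congr rfl fun m _ => ?_)) this
  simp only [f, Function.Embedding.coeFn_mk]
  congr 3 <;> congr 1 <;> omega

lemma aux_K_sum (X : Fin k → (H →L[ℂ] H)) (h : ∀ i, Summable fun n : ℕ => ‖X i ^ n‖) :
    ∃ C : ℝ, 0 ≤ C ∧ ∀ (α : Fin k → ℕ) (S : Finset (Fin k → ℕ)), ∑ β ∈ S, auxK X α β ≤ C := by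
  choose C hC0 hC using fun i => aux_one_sum (X i) (h i)
  refine ⟨∏ i, C i, Finset.prod_nonneg fun i _ => hC0 i, fun α S => ?_⟩
  have hsub : S ⊆ Fintype.piFinset fun i => S.image fun β => β i := by
    intro β hβ
    rw [Fintype.mem_piFinset]
    exact fun i => Finset.mem_image_of_mem _ hβ
  refine (Finset.sum_le_sum_of_subset_of_nonneg hsub fun β _ _ => auxK_nonneg X α β).trans ?_
  unfold auxK
  rw [← Finset.prod_univ_sum (fun i => S.image fun β => β i)
    (fun i m => ‖X i ^ (m - α i)‖ * ‖X i ^ (α i - m)‖)]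
  exact Finset.prod_le_prod (fun i _ => Finset.sum_nonneg fun _ _ => by positivity)
    fun i _ => hC i _ _

lemma aux_entry (X : Fin k → (H →L[ℂ] H)) (r : ℝ) (hr : r ∈ Set.Ico (0 : ℝ) 1)
    (P : L2 k H →L[ℂ] L2 k H) (hP : IsPoissonKernel X r P) (α β : Fin k → ℕ) (h l : H) :
    ‖inner (𝕜 := ℂ) (P (lp.single 2 β h)) (lp.single 2 α l)‖ ≤ auxK X α β * (‖h‖ * ‖l‖) := by
  rw [hP, norm_mul, Complex.norm_real, Real.norm_of_nonneg (pow_nonneg hr.1 _)]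
  refine (mul_le_of_le_one_left (norm_nonneg _) (pow_le_one₀ hr.1 hr.2.le)).trans ?_
  refine (norm_inner_le_norm _ _).trans ?_
  rw [← mul_assoc]
  gcongr
  refine (ContinuousLinearMap.le_opNorm _ _).trans ?_
  gcongr
  refine (norm_mul_le _ _).trans ?_
  unfold auxK
  rw [Finset.prod_mul_distrib]
  refine mul_le_mul (aux_norm_prod _) ((aux_norm_prod _).trans (le_of_eq ?_)) (norm_nonneg _)
    (Finset.prod_nonneg fun _ _ => norm_nonneg _)
  refine Finset.prod_congr rfl fun i _ => ?_
  rw [← ContinuousLinearMap.star_eq_adjoint, ← star_pow, norm_star]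

lemma aux_conj (X : Fin k → (H →L[ℂ] H)) (hX : ∀ i j, Commute (X i) (X j)) (r : ℝ)
    (P : L2 k H →L[ℂ] L2 k H) (hP : IsPoissonKernel X r P) (α β : Fin k → ℕ) (h l : H) :
    (starRingEnd ℂ) (inner (𝕜 := ℂ) (P (lp.single 2 β h)) (lp.single 2 α l)) =
      inner (𝕜 := ℂ) (P (lp.single 2 α l)) (lp.single 2 β h) := by
  rw [hP, hP, map_mul, Complex.conj_ofReal, inner_conj_symm]
  congr 1
  · congr 2
    exact Finset.sum_congr rfl fun i _ => add_comm _ _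
  · have e1 : ∀ a : Fin k → ℕ, (List.ofFn fun i => (adjoint (X i)) ^ (a i)).prod =
        star (List.ofFn fun i => X i ^ (a i)).prod := by
      intro a
      rw [aux_star_prod _ (fun i j => (hX i j).pow_pow _ _)]
      simp [ContinuousLinearMap.star_eq_adjoint, star_pow]
    rw [e1 (fun i => α i - β i), e1 (fun i => β i - α i)]
    rw [ContinuousLinearMap.star_eq_adjoint, ContinuousLinearMap.star_eq_adjoint,
      ContinuousLinearMap.mul_apply, ContinuousLinearMap.mul_apply,
      ← ContinuousLinearMap.adjoint_inner_left, ContinuousLinearMap.adjoint_inner_right]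

lemma aux_self (S : Finset (Fin k → ℕ)) (x : (Fin k → ℕ) → H) :
    inner (𝕜 := ℂ) (∑ α ∈ S, lp.single 2 α (x α) : L2 k H) (∑ α ∈ S, lp.single 2 α (x α) : L2 k H)
      = ((∑ α ∈ S, ‖x α‖ ^ 2 : ℝ) : ℂ) := by
  rw [sum_inner]
  push_cast
  refine Finset.sum_congr rfl fun α hα => ?_
  rw [inner_sum, Finset.sum_eq_single α]
  · rw [lp.inner_single_left, lp.single_apply_self, inner_self_eq_norm_sq_to_K]; rfl
  · intro β _ hβ
    rw [lp.inner_single_left, lp.single_apply_ne _ _ _ hβ.symm, inner_zero_right]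
  · exact fun h => absurd hα h

lemma aux_backward (X : Fin k → (H →L[ℂ] H)) (hX : ∀ i j, Commute (X i) (X j)) (r : ℝ)
    (hr : r ∈ Set.Ico (0 : ℝ) 1) (P : L2 k H →L[ℂ] L2 k H) (hP : IsPoissonKernel X r P)
    (C : ℝ) (hC : ∀ (α : Fin k → ℕ) (S : Finset (Fin k → ℕ)), ∑ β ∈ S, auxK X α β ≤ C) :
    opLE P ((C : ℂ) • (1 : L2 k H →L[ℂ] L2 k H)) := by
  unfold opLE
  set T := (C : ℂ) • (1 : L2 k H →L[ℂ] L2 k H) - P with hT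
  have key : ∀ (S : Finset (Fin k → ℕ)) (x : (Fin k → ℕ) → H),
      inner (𝕜 := ℂ) (T (∑ α ∈ S, lp.single 2 α (x α))) (∑ α ∈ S, lp.single 2 α (x α) : L2 k H)
        ∈ {z : ℂ | 0 ≤ z.re ∧ z.im = 0} := by
    intro S x
    have hPs : inner (𝕜 := ℂ) (P (∑ α ∈ S, lp.single 2 α (x α)))
        (∑ α ∈ S, lp.single 2 α (x α) : L2 k H) = ∑ β ∈ S, ∑ α ∈ S,
          inner (𝕜 := ℂ) (P (lp.single 2 β (x β))) (lp.single 2 α (x α)) := by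
      rw [map_sum, sum_inner]
      exact Finset.sum_congr rfl fun β _ => inner_sum _ _ _
    have hTs : inner (𝕜 := ℂ) (T (∑ α ∈ S, lp.single 2 α (x α)))
        (∑ α ∈ S, lp.single 2 α (x α) : L2 k H) = ((C * ∑ α ∈ S, ‖x α‖ ^ 2 : ℝ) : ℂ) -
        ∑ β ∈ S, ∑ α ∈ S,
          inner (𝕜 := ℂ) (P (lp.single 2 β (x β))) (lp.single 2 α (x α)) := by
      rw [← hPs, hT, ContinuousLinearMap.sub_apply, inner_sub_left,
        ContinuousLinearMap.smul_apply, ContinuousLinearMap.one_apply, inner_smul_left, aux_self,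
        Complex.conj_ofReal, Complex.ofReal_mul]
    set Q := ∑ β ∈ S, ∑ α ∈ S,
          inner (𝕜 := ℂ) (P (lp.single 2 β (x β))) (lp.single 2 α (x α)) with hQ
    have hQim : Q.im = 0 := by
      rw [← Complex.conj_eq_iff_im, hQ, map_sum]
      simp_rw [map_sum]
      rw [Finset.sum_comm]
      refine Finset.sum_congr rfl fun β _ => Finset.sum_congr rfl fun α _ => ?_
      exact aux_conj X hX r P hP _ _ _ _
    have hQre : Q.re ≤ C * ∑ α ∈ S, ‖x α‖ ^ 2 := by
      have hh : ∑ β ∈ S, ∑ α ∈ S, auxK X α β * ‖x α‖ ^ 2 ≤ C * ∑ α ∈ S, ‖x α‖ ^ 2 := by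
        rw [Finset.sum_comm, Finset.mul_sum]
        refine Finset.sum_le_sum fun α _ => ?_
        rw [← Finset.sum_mul]
        gcongr
        exact hC α S
      have hh2 : ∑ β ∈ S, ∑ α ∈ S, auxK X α β * ‖x β‖ ^ 2 ≤ C * ∑ α ∈ S, ‖x α‖ ^ 2 := by
        rw [Finset.mul_sum]
        refine Finset.sum_le_sum fun β _ => ?_
        rw [← Finset.sum_mul]
        gcongr
        simp_rw [auxK_symm X _ β]
        exact hC β S
      calc Q.re ≤ ‖Q‖ := Complex.re_le_norm _
        _ ≤ ∑ β ∈ S, ∑ α ∈ S, auxK X α β * (‖x β‖ * ‖x α‖) := by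
          refine (norm_sum_le _ _).trans (Finset.sum_le_sum fun β _ => ?_)
          refine (norm_sum_le _ _).trans (Finset.sum_le_sum fun α _ => ?_)
          exact aux_entry X r hr P hP _ _ _ _
        _ ≤ ∑ β ∈ S, ∑ α ∈ S, ((1 / 2) * (auxK X α β * ‖x α‖ ^ 2) +
              (1 / 2) * (auxK X α β * ‖x β‖ ^ 2)) := by
          refine Finset.sum_le_sum fun β _ => Finset.sum_le_sum fun α _ => ?_
          have := mul_nonneg (auxK_nonneg X α β) (sq_nonneg (‖x α‖ - ‖x β‖))
          linarith
        _ ≤ C * ∑ α ∈ S, ‖x α‖ ^ 2 := by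
          simp_rw [Finset.sum_add_distrib, ← Finset.mul_sum]
          linarith
    rw [hTs]
    constructor
    · rw [Complex.sub_re, Complex.ofReal_re]; linarith
    · rw [Complex.sub_im, Complex.ofReal_im, hQim, sub_zero]
  have hall : ∀ x : L2 k H, inner (𝕜 := ℂ) (T x) x ∈ {z : ℂ | 0 ≤ z.re ∧ z.im = 0} := by
    intro x
    have hcl : IsClosed {z : ℂ | 0 ≤ z.re ∧ z.im = 0} :=
      (isClosed_le continuous_const Complex.continuous_re).inter
        (isClosed_eq Complex.continuous_im continuous_const)
    have hs : Filter.Tendsto (fun S : Finset (Fin k → ℕ) =>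
        (∑ α ∈ S, lp.single 2 α (x α) : L2 k H)) Filter.atTop (nhds x) :=
      lp.hasSum_single (by norm_num) x
    have hc : Continuous fun y : L2 k H => inner (𝕜 := ℂ) (T y) y := by fun_prop
    exact hcl.mem_of_tendsto ((hc.tendsto x).comp hs) (Filter.Eventually.of_forall fun S => key S x)
  rw [ContinuousLinearMap.isPositive_iff_complex]
  intro x
  refine ⟨?_, (hall x).1⟩
  apply Complex.ext
  · simp
  · simpa using (hall x).2.symm

lemma aux_entry_single (X : Fin k → (H →L[ℂ] H)) (r : ℝ)
    (P : L2 k H →L[ℂ] L2 k H) (hP : IsPoissonKernel X r P) (i : Fin k) (n m : ℕ) (h l : H) :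
    inner (𝕜 := ℂ) (P (lp.single 2 (Pi.single i m) h)) (lp.single 2 (Pi.single i n) l) =
      ((r ^ ((n - m) + (m - n)) : ℝ) : ℂ) *
        inner (𝕜 := ℂ) ((X i ^ (m - n)) ((adjoint (X i) ^ (n - m)) h)) l := by
  rw [hP, aux_prod_single _ i, aux_prod_single _ i, Finset.sum_eq_single i]
  · simp
  · intro j _ hj; simp [hj]
  · simp
  · intro j hj; simp [hj]
  · intro j hj; simp [hj]

lemma aux_pow_approx (T : H →L[ℂ] H) (hT : ‖T‖ ≤ 1) (z : ℂ) (h1 : ‖z‖ = 1) (h : H) (δ : ℝ)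
    (hh : ‖T h - z • h‖ ≤ δ) (n : ℕ) : ‖(T ^ n) h - z ^ n • h‖ ≤ n * δ := by
  induction n with
  | zero => simp
  | succ n ih =>
    have e : (T ^ (n + 1)) h - z ^ (n + 1) • h =
        T ((T ^ n) h - z ^ n • h) + z ^ n • (T h - z • h) := by
      rw [pow_succ', ContinuousLinearMap.mul_apply, map_sub, map_smul, pow_succ, mul_smul,
        smul_sub]
      abel
    rw [e]
    refine (norm_add_le _ _).trans ?_
    rw [norm_smul, norm_pow, h1, one_pow, one_mul]
    have := T.le_of_opNorm_le hT ((T ^ n) h - z ^ n • h)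
    rw [Nat.cast_succ]
    linarith

lemma aux_re (T : H →L[ℂ] H) (hT : ‖T‖ ≤ 1) (z : ℂ) (h1 : ‖z‖ = 1) (h : H) (hn : ‖h‖ = 1)
    (N : ℕ) (hN : 0 < N) (hh : ‖T h - z • h‖ ≤ 1 / (2 * N)) (j : ℕ) (hj : j ≤ N) :
    1 / 2 ≤ (z ^ j * inner (𝕜 := ℂ) ((T ^ j) h) h).re := by
  have ha := aux_pow_approx T hT z h1 h _ hh j
  have hN' : (0 : ℝ) < N := by exact_mod_cast hN
  have hj' : (j : ℝ) ≤ N := by exact_mod_cast hj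
  have hb : (j : ℝ) * (1 / (2 * N)) ≤ 1 / 2 := by
    rw [mul_one_div, div_le_iff₀ (by positivity)]; linarith
  have hzz : z ^ j * (starRingEnd ℂ) (z ^ j) = 1 := by
    rw [Complex.mul_conj, Complex.normSq_eq_norm_sq, norm_pow, h1]; simp
  have e : z ^ j * inner (𝕜 := ℂ) ((T ^ j) h) h =
      1 + z ^ j * inner (𝕜 := ℂ) ((T ^ j) h - z ^ j • h) h := by
    rw [inner_sub_left, inner_smul_left, inner_self_eq_norm_sq_to_K, hn, mul_sub, ← mul_assoc, hzz]
    simp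
  rw [e, Complex.add_re, Complex.one_re]
  have hle : ‖z ^ j * inner (𝕜 := ℂ) ((T ^ j) h - z ^ j • h) h‖ ≤ 1 / 2 := by
    rw [norm_mul, norm_pow, h1, one_pow, one_mul]
    refine (norm_inner_le_norm _ _).trans ?_
    rw [hn, mul_one]
    linarith
  have := Complex.abs_re_le_norm (z ^ j * inner (𝕜 := ℂ) ((T ^ j) h - z ^ j • h) h)
  have := (abs_le.1 (this.trans hle)).1
  linarith

lemma aux_forward (X : Fin k → (H →L[ℂ] H)) (i : Fin k) (hXi : ‖X i‖ ≤ 1)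
    (P : ℝ → (L2 k H →L[ℂ] L2 k H))
    (hP : ∀ r ∈ Set.Ico (0 : ℝ) 1, IsPoissonKernel X r (P r)) (c : ℝ)
    (hc : ∀ r ∈ Set.Ico (0 : ℝ) 1,
        opLE (P r) (((c : ℂ) ^ 2) • (1 : L2 k H →L[ℂ] L2 k H))) :
    spectralRadius ℂ (X i) < 1 := by
  by_contra hcon
  rw [not_lt] at hcon
  have hne : (spectrum ℂ (X i)).Nonempty := by
    by_contra hemp
    rw [Set.not_nonempty_iff_eq_empty] at hemp
    simp [spectralRadius, hemp] at hcon
  obtain ⟨z, hz, hzr⟩ := spectrum.exists_nnnorm_eq_spectralRadius_of_nonempty hne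
  have hz1 : 1 ≤ ‖z‖ := by
    rw [← hzr] at hcon
    exact_mod_cast hcon
  have hz2 : ‖z‖ ≤ 1 := by
    refine (spectrum.norm_le_norm_mul_of_mem hz).trans ?_
    exact mul_le_one₀ hXi (norm_nonneg _) ContinuousLinearMap.norm_id_le
  have h1 : ‖z‖ = 1 := le_antisymm hz2 hz1
  obtain ⟨N, hN⟩ := exists_nat_gt (4 * c ^ 2)
  have hNr : (0 : ℝ) < N := lt_of_le_of_lt (by positivity) hN
  have hNp : 0 < N := by exact_mod_cast hNr
  have hN1 : (1 : ℝ) ≤ N := by exact_mod_cast hNp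
  obtain ⟨h, hn, hh⟩ := aux_approx (X i) z hz h1 hXi (1 / (2 * N)) (by positivity)
  set r : ℝ := 1 - 1 / (2 * N) with hrdef
  have hq : 1 / (2 * (N : ℝ)) ≤ 1 / 2 := by
    apply one_div_le_one_div_of_le <;> linarith
  have hq0 : 0 < 1 / (2 * (N : ℝ)) := by positivity
  have hr : r ∈ Set.Ico (0 : ℝ) 1 := ⟨by rw [hrdef]; linarith, by rw [hrdef]; linarith⟩
  have hrN : 1 / 2 ≤ r ^ N := by
    have := one_add_mul_le_pow (a := -(1 / (2 * (N : ℝ)))) (by linarith) N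
    have e : 1 + (N : ℝ) * -(1 / (2 * N)) = 1 / 2 := by field_simp; norm_num
    rw [e] at this
    simpa [hrdef, sub_eq_add_neg] using this
  have hpos := (hc r hr).re_inner_nonneg_left
    (∑ m ∈ Finset.range N, lp.single 2 (Pi.single i m) ((starRingEnd ℂ z) ^ m • h))
  have hinjv : ∀ m n : ℕ, (Pi.single i m : Fin k → ℕ) = Pi.single i n → m = n :=
    fun m n hmn => Pi.single_injective i hmn
  have hzz : z * (starRingEnd ℂ) z = 1 := by
    rw [Complex.mul_conj, Complex.normSq_eq_norm_sq, h1]; simp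
  have hxx : inner (𝕜 := ℂ)
      (∑ m ∈ Finset.range N, lp.single 2 (Pi.single i m) ((starRingEnd ℂ z) ^ m • h) : L2 k H)
      (∑ m ∈ Finset.range N, lp.single 2 (Pi.single i m) ((starRingEnd ℂ z) ^ m • h) : L2 k H)
      = (N : ℂ) := by
    rw [sum_inner]
    have : ∀ m ∈ Finset.range N, inner (𝕜 := ℂ)
      (lp.single 2 (Pi.single i m) ((starRingEnd ℂ z) ^ m • h) : L2 k H)
      (∑ m ∈ Finset.range N, lp.single 2 (Pi.single i m) ((starRingEnd ℂ z) ^ m • h) : L2 k H)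
      = 1 := by
      intro m hm
      rw [inner_sum, Finset.sum_eq_single m]
      · rw [lp.inner_single_left, lp.single_apply_self, inner_self_eq_norm_sq_to_K, norm_smul,
          norm_pow, RCLike.norm_conj, h1, hn]
        simp
      · intro n _ hnm
        rw [lp.inner_single_left, lp.single_apply_ne, inner_zero_right]
        exact fun e => hnm (hinjv _ _ e).symm
      · exact fun h => absurd hm h
    rw [Finset.sum_congr rfl this]
    simp
  have hent : ∀ m ∈ Finset.range N, ∀ n ∈ Finset.range N, 1 / 4 ≤
      (inner (𝕜 := ℂ) (P r (lp.single 2 (Pi.single i m) ((starRingEnd ℂ z) ^ m • h)))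
        (lp.single 2 (Pi.single i n) ((starRingEnd ℂ z) ^ n • h))).re := by
    intro m hm n hnn
    rw [Finset.mem_range] at hm hnn
    rw [aux_entry_single X r (P r) (hP r hr), Complex.re_ofReal_mul]
    have hrp : 1 / 2 ≤ r ^ ((n - m) + (m - n)) :=
      hrN.trans (pow_le_pow_of_le_one hr.1 hr.2.le (by omega))
    have hre : 1 / 2 ≤ (inner (𝕜 := ℂ) ((X i ^ (m - n)) ((adjoint (X i) ^ (n - m))
        ((starRingEnd ℂ z) ^ m • h))) ((starRingEnd ℂ z) ^ n • h)).re := by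
      rcases le_total n m with hle | hle
      · obtain ⟨j, rfl⟩ := Nat.exists_eq_add_of_le hle
        have e1 : n + j - n = j := by omega
        have e2 : n - (n + j) = 0 := by omega
        rw [e1, e2, pow_zero, ContinuousLinearMap.one_apply, map_smul, inner_smul_left,
          inner_smul_right, map_pow, Complex.conj_conj]
        have e3 : z ^ (n + j) * ((starRingEnd ℂ) z ^ n * inner (𝕜 := ℂ) ((X i ^ j) h) h) =
            z ^ j * inner (𝕜 := ℂ) ((X i ^ j) h) h := by
          calc _ = (z * (starRingEnd ℂ) z) ^ n * (z ^ j * inner (𝕜 := ℂ) ((X i ^ j) h) h) := by ring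
            _ = _ := by rw [hzz, one_pow, one_mul]
        rw [e3]
        exact aux_re (X i) hXi z h1 h hn N hNp hh j (by omega)
      · obtain ⟨j, rfl⟩ := Nat.exists_eq_add_of_le hle
        have e1 : m + j - m = j := by omega
        have e2 : m - (m + j) = 0 := by omega
        rw [e1, e2, pow_zero, ContinuousLinearMap.one_apply, map_smul, inner_smul_left,
          inner_smul_right, map_pow, Complex.conj_conj]
        have e4 : inner (𝕜 := ℂ) ((adjoint (X i) ^ j) h) h =
            (starRingEnd ℂ) (inner (𝕜 := ℂ) ((X i ^ j) h) h) := by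
          rw [inner_conj_symm, ← ContinuousLinearMap.star_eq_adjoint, ← star_pow,
            ContinuousLinearMap.star_eq_adjoint, ContinuousLinearMap.adjoint_inner_left]
        have e3 : z ^ m * ((starRingEnd ℂ) z ^ (m + j) *
            inner (𝕜 := ℂ) ((adjoint (X i) ^ j) h) h) =
            (starRingEnd ℂ) (z ^ j * inner (𝕜 := ℂ) ((X i ^ j) h) h) := by
          rw [e4, map_mul, map_pow]
          calc _ = (z * (starRingEnd ℂ) z) ^ m * ((starRingEnd ℂ) z ^ j *
                (starRingEnd ℂ) (inner (𝕜 := ℂ) ((X i ^ j) h) h)) := by ring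
            _ = _ := by rw [hzz, one_pow, one_mul]
        rw [e3, Complex.conj_re]
        exact aux_re (X i) hXi z h1 h hn N hNp hh j (by omega)
    nlinarith
  have hPs : (N : ℝ) * (N * (1 / 4)) ≤ (inner (𝕜 := ℂ) (P r
      (∑ m ∈ Finset.range N, lp.single 2 (Pi.single i m) ((starRingEnd ℂ z) ^ m • h)))
      (∑ m ∈ Finset.range N, lp.single 2 (Pi.single i m) ((starRingEnd ℂ z) ^ m • h) :
        L2 k H)).re := by
    rw [map_sum, sum_inner, Complex.re_sum]
    have : (N : ℝ) * (N * (1 / 4)) =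
        ∑ m ∈ Finset.range N, ∑ n ∈ Finset.range N, (1 / 4 : ℝ) := by simp
    rw [this]
    refine Finset.sum_le_sum fun m hm => ?_
    rw [inner_sum, Complex.re_sum]
    exact Finset.sum_le_sum fun n hnn => hent m hm n hnn
  rw [ContinuousLinearMap.sub_apply, inner_sub_left, ContinuousLinearMap.smul_apply,
    ContinuousLinearMap.one_apply, inner_smul_left, hxx] at hpos
  have e5 : ((starRingEnd ℂ) ((c : ℂ) ^ 2) * (N : ℂ)) = ((c ^ 2 * N : ℝ) : ℂ) := by
    simp
  rw [e5, map_sub] at hpos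
  simp only [RCLike.re_to_complex, Complex.ofReal_re] at hpos
  nlinarith

/-- For `X ∈ D^k(H)⁻`, there is `c > 0` with `𝒫(R, rX) ≤ c² I` for all
`r ∈ [0,1)` iff the spectral radius of each `X_i` is strictly less than `1`. -/
theorem stmt_8 (hk : 1 ≤ k) (X : Fin k → (H →L[ℂ] H)) (hX : memClosedPolydisk X)
    (P : ℝ → (L2 k H →L[ℂ] L2 k H))
    (hP : ∀ r ∈ Set.Ico (0 : ℝ) 1, IsPoissonKernel X r (P r)) :
    (∃ c : ℝ, 0 < c ∧ ∀ r ∈ Set.Ico (0 : ℝ) 1,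
        opLE (P r) (((c : ℂ) ^ 2) • (1 : L2 k H →L[ℂ] L2 k H))) ↔
      ∀ i, spectralRadius ℂ (X i) < 1 := by
  constructor
  · rintro ⟨c, _, hc⟩ i
    exact aux_forward X i (hX.2.1 i) P hP c hc
  · intro h
    obtain ⟨C, hC0, hC⟩ := aux_K_sum X fun i => aux_summable (X i) (h i)
    refine ⟨Real.sqrt (C + 1), Real.sqrt_pos.2 (by linarith), fun r hr => ?_⟩
    have e : ((Real.sqrt (C + 1) : ℝ) : ℂ) ^ 2 = ((C + 1 : ℝ) : ℂ) := by
      rw [← Complex.ofReal_pow, Real.sq_sqrt (by linarith)]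
    rw [e]
    exact aux_backward X hX.1 r hr (P r) (hP r hr) (C + 1)
      fun α S => (hC α S).trans (by linarith)

end
end

section
/- Let X = (X_1,…,X_k) ∈ D^k(H)^-. The following are equivalent: (i) the spectral radius of X_i is strictly less than 1 for every i, and there exists a > 0 such that 𝒫(R, rX) ≥ a·I for all r ∈ [0,1); (ii) X ∈ D^k(H), i.e., ‖X_i‖ < 1 for all i and Δ_X(I) is positive and invertible; (iii) there exists c ≥ 1 such that c^{-2}·I ≤ 𝒫(R, rX) ≤ c²·I for all r ∈ [0,1). -/
open ContinuousLinearMap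

noncomputable section

variable {k : ℕ} {H : Type*} [NormedAddCommGroup H] [InnerProductSpace ℂ H] [CompleteSpace H]

section helpers
set_option linter.unusedSectionVars false
set_option linter.deprecated false
universe v
open scoped ComplexOrder

theorem defect_succ {n : ℕ} (X : Fin (n + 1) → (H →L[ℂ] H)) :
    defect X = defect (fun i : Fin n => X i.succ)
      - X 0 * defect (fun i : Fin n => X i.succ) * adjoint (X 0) := by
  simp [defect, List.ofFn_succ]

theorem continuous_defect {n : ℕ} {f : ℝ → Fin n → (H →L[ℂ] H)} (hf : ∀ i, Continuous fun r => f r i) :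
    Continuous fun r => defect (f r) := by
  induction n with
  | zero => simp [defect]; exact continuous_const
  | succ n ih =>
    have h := ih (f := fun r i => f r i.succ) (fun i => hf i.succ)
    simp only [defect_succ]
    have ha : Continuous fun r => adjoint (f r 0) :=
      (ContinuousLinearMap.adjoint (𝕜 := ℂ) (E := H) (F := H)).continuous.comp (hf 0)
    exact h.sub (((hf 0).mul h).mul ha)

theorem defect_zero {n : ℕ} : defect (fun _ : Fin n => (0 : H →L[ℂ] H)) = 1 := by
  induction n with
  | zero => simp [defect]
  | succ n ih => rw [defect_succ, ih]; simp

/-- existence of commutative ring -/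
theorem exists_calc {H : Type v} [NormedAddCommGroup H] [InnerProductSpace ℂ H] [CompleteSpace H]
    {n : ℕ} (Y : Fin n → (H →L[ℂ] H)) (hY : ∀ i j, Commute (Y i) (Y j)) :
    ∃ (R : Type v) (_ : CommRing R) (φ : R →+* Module.End ℂ (H →L[ℂ] H)) (A B : Fin n → R),
      (∀ i Z, φ (A i) Z = Y i * Z) ∧ (∀ i Z, φ (B i) Z = Z * adjoint (Y i)) := by
  have hY' : ∀ i j, adjoint (Y i) * adjoint (Y j) = adjoint (Y j) * adjoint (Y i) := by
    intro i j
    have := congrArg star (hY i j).eq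
    simp only [star_mul, ContinuousLinearMap.star_eq_adjoint] at this
    exact this.symm
  let s : Set (Module.End ℂ (H →L[ℂ] H)) :=
    Set.range (fun i => LinearMap.mulLeft ℂ (Y i)) ∪
      Set.range (fun i => LinearMap.mulRight ℂ (adjoint (Y i)))
  have hs : ∀ x ∈ s, ∀ y ∈ s, x * y = y * x := by
    rintro x (⟨i, rfl⟩ | ⟨i, rfl⟩) y (⟨j, rfl⟩ | ⟨j, rfl⟩)
    · refine LinearMap.ext fun Z => ?_
      simp only [Module.End.mul_apply, LinearMap.mulLeft_apply, ← mul_assoc, (hY i j).eq]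
    · refine LinearMap.ext fun Z => ?_
      simp only [Module.End.mul_apply, LinearMap.mulLeft_apply, LinearMap.mulRight_apply, mul_assoc]
    · refine LinearMap.ext fun Z => ?_
      simp only [Module.End.mul_apply, LinearMap.mulLeft_apply, LinearMap.mulRight_apply, mul_assoc]
    · refine LinearMap.ext fun Z => ?_
      simp only [Module.End.mul_apply, LinearMap.mulRight_apply, mul_assoc, hY' i j]
  exact ⟨Subring.closure s, Subring.closureCommRingOfComm hs, (Subring.closure s).subtype,
    fun i => ⟨_, Subring.subset_closure (Or.inl ⟨i, rfl⟩)⟩,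
    fun i => ⟨_, Subring.subset_closure (Or.inr ⟨i, rfl⟩)⟩,
    fun i Z => rfl, fun i Z => rfl⟩

section calc_lemmas
variable {R : Type*} [CommRing R] (φ : R →+* Module.End ℂ (H →L[ℂ] H))

theorem phi_pow_left {a : R} {y : H →L[ℂ] H} (h : ∀ Z, φ a Z = y * Z) (m : ℕ) (Z : H →L[ℂ] H) :
    φ (a ^ m) Z = y ^ m * Z := by
  induction m generalizing Z with
  | zero => simp
  | succ m ih => rw [pow_succ, map_mul, Module.End.mul_apply, h, ih, pow_succ, mul_assoc]

theorem phi_pow_right {a : R} {y : H →L[ℂ] H} (h : ∀ Z, φ a Z = Z * y) (m : ℕ) (Z : H →L[ℂ] H) :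
    φ (a ^ m) Z = Z * y ^ m := by
  induction m generalizing Z with
  | zero => simp
  | succ m ih => rw [pow_succ, map_mul, Module.End.mul_apply, h, ih, pow_succ', mul_assoc]

theorem phi_prod_left {n : ℕ} (A : Fin n → R) (Y : Fin n → (H →L[ℂ] H))
    (h : ∀ i Z, φ (A i) Z = Y i * Z) (m : Fin n → ℕ) (Z : H →L[ℂ] H) :
    φ (∏ i, A i ^ m i) Z = (List.ofFn fun i => Y i ^ m i).prod * Z := by
  induction n generalizing Z with
  | zero => simp
  | succ n ih =>
    rw [Fin.prod_univ_succ, map_mul, Module.End.mul_apply,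
      ih (fun i => A i.succ) (fun i => Y i.succ) (fun i Z => h i.succ Z),
      phi_pow_left φ (h 0), List.ofFn_succ, List.prod_cons, mul_assoc]

theorem phi_prod_right {n : ℕ} (A : Fin n → R) (Y : Fin n → (H →L[ℂ] H))
    (h : ∀ i Z, φ (A i) Z = Z * Y i) (m : Fin n → ℕ) (Z : H →L[ℂ] H) :
    φ (∏ i, A i ^ m i) Z = Z * (List.ofFn fun i => Y i ^ m i).prod := by
  induction n generalizing Z with
  | zero => simp
  | succ n ih =>
    rw [Fin.prod_univ_succ, mul_comm, map_mul, Module.End.mul_apply,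
      ih (fun i => A i.succ) (fun i => Y i.succ) (fun i Z => h i.succ Z),
      phi_pow_right φ (h 0), List.ofFn_succ, List.prod_cons, mul_assoc]

theorem phi_defect {n : ℕ} (A B : Fin n → R) (Y : Fin n → (H →L[ℂ] H))
    (hA : ∀ i Z, φ (A i) Z = Y i * Z) (hB : ∀ i Z, φ (B i) Z = Z * adjoint (Y i)) :
    φ (∏ i, (1 - A i * B i)) 1 = defect Y := by
  induction n with
  | zero => simp [defect]
  | succ n ih =>
    rw [Fin.prod_univ_succ, map_mul, Module.End.mul_apply,
      ih (fun i => A i.succ) (fun i => B i.succ) (fun i => Y i.succ) (fun i Z => hA i.succ Z)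
        (fun i Z => hB i.succ Z), defect_succ]
    simp only [map_sub, map_one, map_mul, LinearMap.sub_apply, Module.End.mul_apply,
      Module.End.one_apply, hA, hB, mul_assoc]

end calc_lemmas

theorem prod_smul_pow {n : ℕ} (c : ℂ) (Y : Fin n → (H →L[ℂ] H)) (m : Fin n → ℕ) :
    (List.ofFn fun i => (c • Y i) ^ m i).prod
      = c ^ (∑ i, m i) • (List.ofFn fun i => Y i ^ m i).prod := by
  induction n with
  | zero => simp
  | succ n ih =>
    rw [List.ofFn_succ, List.ofFn_succ, List.prod_cons, List.prod_cons,
      ih (fun i => Y i.succ) (fun i => m i.succ), Fin.sum_univ_succ, smul_pow, smul_mul_smul_comm,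
      pow_add]

/-- entry symbols -/
def symb {R : Type*} [CommRing R] {n : ℕ} (A B : Fin n → R) (s : Finset (Fin n)) (α β : Fin n → ℕ) : R :=
  ∏ i, if i ∈ s then (if α i = β i then 1 - A i * B i else 0)
    else A i ^ (β i - α i) * B i ^ (α i - β i)

theorem symb_insert {R : Type*} [CommRing R] {n : ℕ} (A B : Fin n → R) (s : Finset (Fin n))
    (i : Fin n) (hi : i ∉ s) (α β : Fin n → ℕ) :
    symb A B (insert i s) α β = symb A B s α β - B i * symb A B s α (β + Pi.single i 1)
      - A i * symb A B s (α + Pi.single i 1) β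
      + A i * B i * symb A B s (α + Pi.single i 1) (β + Pi.single i 1) := by
  set C : R := ∏ j ∈ Finset.univ.erase i, (if j ∈ s then (if α j = β j then 1 - A j * B j else 0)
    else A j ^ (β j - α j) * B j ^ (α j - β j)) with hC
  have key : ∀ (t : Finset (Fin n)) (a b : Fin n → ℕ), (∀ j, j ≠ i → (j ∈ t ↔ j ∈ s)) →
      (∀ j, j ≠ i → a j = α j) → (∀ j, j ≠ i → b j = β j) →
      symb A B t a b = (if i ∈ t then (if a i = b i then 1 - A i * B i else 0)
        else A i ^ (b i - a i) * B i ^ (a i - b i)) * C := by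
    intro t a b ht ha hb
    rw [symb, ← Finset.mul_prod_erase Finset.univ _ (Finset.mem_univ i)]
    congr 1
    refine Finset.prod_congr rfl fun j hj => ?_
    have hj' := Finset.ne_of_mem_erase hj
    simp only [ht j hj', ha j hj', hb j hj']
  have hs : ∀ (a : Fin n → ℕ) j, j ≠ i → (a + Pi.single i 1 : Fin n → ℕ) j = a j := by
    intro a j hj; simp [hj]
  rw [key (insert i s) α β (by intro j hj; simp [hj]) (by simp) (by simp),
    key s α β (by simp) (by simp) (by simp),
    key s α (β + Pi.single i 1) (by simp) (by simp) (hs β),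
    key s (α + Pi.single i 1) β (by simp) (hs α) (by simp),
    key s (α + Pi.single i 1) (β + Pi.single i 1) (by simp) (hs α) (hs β)]
  simp only [hi, if_false, Finset.mem_insert_self, if_true, Pi.add_apply, Pi.single_eq_same]
  rcases lt_trichotomy (α i) (β i) with h | h | h
  · obtain ⟨d, hd⟩ : ∃ d, β i = α i + d + 1 := ⟨β i - α i - 1, by omega⟩
    have e1 : β i - α i = d + 1 := by omega
    have e2 : α i - β i = 0 := by omega
    have e3 : β i + 1 - α i = d + 2 := by omega
    have e4 : α i - (β i + 1) = 0 := by omega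
    have e5 : β i - (α i + 1) = d := by omega
    have e6 : α i + 1 - β i = 0 := by omega
    have e7 : β i + 1 - (α i + 1) = d + 1 := by omega
    have e8 : α i + 1 - (β i + 1) = 0 := by omega
    rw [if_neg h.ne, e1, e2, e3, e4, e5, e6, e7, e8]
    ring
  · simp [h]; ring
  · obtain ⟨d, hd⟩ : ∃ d, α i = β i + d + 1 := ⟨α i - β i - 1, by omega⟩
    have e1 : α i - β i = d + 1 := by omega
    have e2 : β i - α i = 0 := by omega
    have e3 : α i + 1 - β i = d + 2 := by omega
    have e4 : β i - (α i + 1) = 0 := by omega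
    have e5 : α i - (β i + 1) = d := by omega
    have e6 : β i + 1 - α i = 0 := by omega
    have e7 : α i + 1 - (β i + 1) = d + 1 := by omega
    have e8 : β i + 1 - (α i + 1) = 0 := by omega
    rw [if_neg h.ne', e1, e2, e3, e4, e5, e6, e7, e8]
    ring

theorem symb_univ {R : Type*} [CommRing R] {n : ℕ} (A B : Fin n → R) (α β : Fin n → ℕ) :
    symb A B Finset.univ α β = if α = β then ∏ i, (1 - A i * B i) else 0 := by
  split_ifs with h
  · subst h; simp [symb]
  · obtain ⟨i, hi⟩ := Function.ne_iff.mp h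
    exact Finset.prod_eq_zero (Finset.mem_univ i) (by simp [hi])

theorem symb_single {R : Type*} [CommRing R] {n : ℕ} (A B : Fin n → R) (i : Fin n) (α : Fin n → ℕ) :
    symb A B {i} α α = 1 - A i * B i := by
  rw [symb, Finset.prod_eq_single i]
  · simp
  · intro j _ hj; simp [hj]
  · simp

/-- operator with given entries -/
def HasEntries {n : ℕ} (Q : L2 n H →L[ℂ] L2 n H) (M : (Fin n → ℕ) → (Fin n → ℕ) → (H →L[ℂ] H)) : Prop :=
  ∀ (α β : Fin n → ℕ) (h ℓ : H),
    inner (𝕜 := ℂ) (Q (lp.single 2 β h)) (lp.single 2 α ℓ) = inner (𝕜 := ℂ) (M α β h) ℓ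

theorem kernel_entries {R : Type*} [CommRing R] (φ : R →+* Module.End ℂ (H →L[ℂ] H))
    {n : ℕ} (A B : Fin n → R) (X : Fin n → (H →L[ℂ] H)) (r : ℝ)
    (hA : ∀ i Z, φ (A i) Z = ((r : ℂ) • X i) * Z)
    (hB : ∀ i Z, φ (B i) Z = Z * adjoint ((r : ℂ) • X i))
    (P : L2 n H →L[ℂ] L2 n H) (hP : IsPoissonKernel X r P) :
    HasEntries P (fun α β => φ (symb A B ∅ α β) 1) := by
  intro α β h l
  rw [hP]
  have e : φ (symb A B ∅ α β) 1 = ((r : ℂ) ^ (∑ i, ((α i - β i) + (β i - α i)))) •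
      ((List.ofFn fun i => X i ^ (β i - α i)).prod *
            (List.ofFn fun i => (adjoint (X i)) ^ (α i - β i)).prod) := by
    simp only [symb, Finset.notMem_empty, if_false]
    rw [Finset.prod_mul_distrib, map_mul, Module.End.mul_apply,
      phi_prod_right φ B _ hB, phi_prod_left φ A _ hA, one_mul]
    have : ∀ i, adjoint ((r : ℂ) • X i) = (r : ℂ) • adjoint (X i) := by
      intro i
      rw [← ContinuousLinearMap.star_eq_adjoint, star_smul, ContinuousLinearMap.star_eq_adjoint]
      simp
    simp only [this]
    rw [prod_smul_pow, prod_smul_pow, smul_mul_smul_comm, ← pow_add, Finset.sum_add_distrib, add_comm]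
  simp only [e]
  rw [ContinuousLinearMap.smul_apply, inner_smul_left]
  simp
theorem shift_mem {n : ℕ} (Y : H →L[ℂ] H) (i : Fin n) (u : L2 n H) :
    Summable (fun α : Fin n → ℕ => ‖u (α + Pi.single i 1)‖ ^ 2) ∧
    (∑' α : Fin n → ℕ, ‖u (α + Pi.single i 1)‖ ^ 2) ≤ ‖u‖ ^ 2 := by
  have h := lp.hasSum_norm (p := 2) (by norm_num) u
  simp only [ENNReal.toReal_ofNat, Real.rpow_ofNat] at h
  have hinj : Function.Injective (fun α : Fin n → ℕ => α + Pi.single i 1) := add_left_injective _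
  refine ⟨h.summable.comp_injective hinj, ?_⟩
  rw [← h.tsum_eq]
  exact tsum_comp_le_tsum_of_inj h.summable (fun _ => by positivity) hinj

/-- shifted -/
def shiftOp {n : ℕ} (Y : H →L[ℂ] H) (i : Fin n) : L2 n H →L[ℂ] L2 n H :=
  LinearMap.mkContinuous
    { toFun := fun u => ⟨fun α => Y (u (α + Pi.single i 1)), by
        apply memℓp_gen
        simp only [ENNReal.toReal_ofNat, Real.rpow_ofNat]
        refine Summable.of_nonneg_of_le (fun _ => by positivity) (fun α => ?_)
          ((shift_mem Y i u).1.mul_left (‖Y‖ ^ 2))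
        rw [← mul_pow]
        gcongr
        exact Y.le_opNorm _⟩
      map_add' := fun u v => by ext α; simp; rfl
      map_smul' := fun c u => by ext α; simp } ‖Y‖ (by
    intro u
    refine lp.norm_le_of_forall_sum_le (by norm_num) (by positivity) ?_
    intro s
    simp only [ENNReal.toReal_ofNat, Real.rpow_ofNat, LinearMap.coe_mk, AddHom.coe_mk]
    calc ∑ α ∈ s, ‖Y (u (α + Pi.single i 1))‖ ^ 2
        ≤ ∑ α ∈ s, ‖Y‖ ^ 2 * ‖u (α + Pi.single i 1)‖ ^ 2 := by
          refine Finset.sum_le_sum fun α _ => ?_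
          rw [← mul_pow]
          gcongr
          exact Y.le_opNorm _
      _ = ‖Y‖ ^ 2 * ∑ α ∈ s, ‖u (α + Pi.single i 1)‖ ^ 2 := by rw [Finset.mul_sum]
      _ ≤ ‖Y‖ ^ 2 * ‖u‖ ^ 2 := by
          gcongr
          exact ((shift_mem Y i u).1.sum_le_tsum s (fun _ _ => by positivity)).trans (shift_mem Y i u).2
      _ = (‖Y‖ * ‖u‖) ^ 2 := by ring)

theorem shiftOp_apply {n : ℕ} (Y : H →L[ℂ] H) (i : Fin n) (u : L2 n H) (α : Fin n → ℕ) :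
    shiftOp Y i u α = Y (u (α + Pi.single i 1)) := rfl

theorem shiftOp_norm {n : ℕ} (Y : H →L[ℂ] H) (i : Fin n) : ‖shiftOp Y i‖ ≤ ‖Y‖ :=
  LinearMap.mkContinuous_norm_le _ (norm_nonneg _) _

theorem adj_shiftOp_single {n : ℕ} (Y : H →L[ℂ] H) (i : Fin n) (β : Fin n → ℕ) (h : H) :
    adjoint (shiftOp Y i) (lp.single 2 β h) = lp.single 2 (β + Pi.single i 1) (adjoint Y h) := by
  refine ext_inner_right ℂ fun w => ?_
  rw [ContinuousLinearMap.adjoint_inner_left, lp.inner_single_left, lp.inner_single_left,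
    shiftOp_apply, ContinuousLinearMap.adjoint_inner_left]

theorem adj_shiftOp_zero {n : ℕ} (Y : H →L[ℂ] H) (i : Fin n) (u : L2 n H) :
    (adjoint (shiftOp Y i) u) 0 = 0 := by
  refine ext_inner_left (𝕜 := ℂ) (E := H) fun l => ?_
  have e := lp.inner_single_left (𝕜 := ℂ) (0 : Fin n → ℕ) l (adjoint (shiftOp Y i) u)
  refine e.symm.trans ?_
  rw [ContinuousLinearMap.adjoint_inner_right]
  have : shiftOp Y i (lp.single 2 0 l) = 0 := by
    ext α
    rw [shiftOp_apply, lp.single_apply_ne]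
    · simp
    · intro h0
      have := congrFun h0 i
      simp at this
  rw [this]; simp

theorem step_entries {R : Type*} [CommRing R] (φ : R →+* Module.End ℂ (H →L[ℂ] H))
    {n : ℕ} (A B : Fin n → R) (Y : Fin n → (H →L[ℂ] H))
    (hA : ∀ i Z, φ (A i) Z = Y i * Z) (hB : ∀ i Z, φ (B i) Z = Z * adjoint (Y i))
    (s : Finset (Fin n)) (i : Fin n) (hi : i ∉ s)
    (Q : L2 n H →L[ℂ] L2 n H) (hQ : HasEntries Q (fun α β => φ (symb A B s α β) 1)) :
    HasEntries (adjoint (1 - adjoint (shiftOp (Y i) i)) * Q * (1 - adjoint (shiftOp (Y i) i)))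
      (fun α β => φ (symb A B (insert i s) α β) 1) := by
  intro α β h l
  simp only [ContinuousLinearMap.mul_apply, ContinuousLinearMap.adjoint_inner_left]
  simp only [ContinuousLinearMap.sub_apply, ContinuousLinearMap.one_apply, adj_shiftOp_single,
    map_sub, inner_sub_left, inner_sub_right, hQ _ _ _ _]
  rw [symb_insert A B s i hi]
  have e1 : ∀ x : R, φ (B i * x) 1 = φ x 1 * adjoint (Y i) := by
    intro x; rw [map_mul, Module.End.mul_apply, hB]
  have e2 : ∀ x : R, φ (A i * x) 1 = Y i * φ x 1 := by
    intro x; rw [map_mul, Module.End.mul_apply, hA]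
  simp only [map_sub, map_add, LinearMap.sub_apply, LinearMap.add_apply, mul_assoc, e1, e2,
    ContinuousLinearMap.sub_apply, ContinuousLinearMap.add_apply, ContinuousLinearMap.mul_apply,
    inner_sub_left, inner_add_left, ContinuousLinearMap.adjoint_inner_right]
  ring

theorem exists_T {R : Type*} [CommRing R] (φ : R →+* Module.End ℂ (H →L[ℂ] H))
    {n : ℕ} (A B : Fin n → R) (Y : Fin n → (H →L[ℂ] H))
    (hA : ∀ i Z, φ (A i) Z = Y i * Z) (hB : ∀ i Z, φ (B i) Z = Z * adjoint (Y i))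
    (ρ : ℝ) (hρ : ρ < 1) (hY : ∀ i, ‖Y i‖ ≤ ρ)
    (Q : L2 n H →L[ℂ] L2 n H) (hQ : HasEntries Q (fun α β => φ (symb A B ∅ α β) 1))
    (s : Finset (Fin n)) :
    ∃ T : L2 n H →L[ℂ] L2 n H, IsUnit T ∧ (∀ u, ‖T u‖ ≤ 2 ^ s.card * ‖u‖) ∧
      (∀ u, (1 - ρ) ^ s.card * ‖u‖ ≤ ‖T u‖) ∧ (∀ u, (T u) 0 = u 0) ∧
      HasEntries (adjoint T * Q * T) (fun α β => φ (symb A B s α β) 1) := by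
  induction s using Finset.induction_on with
  | empty =>
    refine ⟨1, isUnit_one, by simp, by simp, by simp, ?_⟩
    have : adjoint (1 : L2 n H →L[ℂ] L2 n H) = 1 := by
      rw [← ContinuousLinearMap.star_eq_adjoint, star_one]
    simpa [this] using hQ
  | insert i s hi ih =>
    obtain ⟨T, h1, h2, h3, h4, h5⟩ := ih
    set W := adjoint (shiftOp (Y i) i) with hW
    have hWn : ‖W‖ ≤ ρ := by
      rw [hW, LinearIsometryEquiv.norm_map]
      exact (shiftOp_norm _ _).trans (hY i)
    have hWu : ∀ u, ‖W u‖ ≤ ρ * ‖u‖ := fun u => (W.le_opNorm u).trans (by gcongr)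
    refine ⟨T * (1 - W), h1.mul ?_, ?_, ?_, ?_, ?_⟩
    · exact isUnit_one_sub_of_norm_lt_one (hWn.trans_lt hρ)
    · intro u
      rw [Finset.card_insert_of_notMem hi]
      have : ‖(1 - W) u‖ ≤ 2 * ‖u‖ := by
        rw [ContinuousLinearMap.sub_apply, ContinuousLinearMap.one_apply]
        have := norm_sub_le u (W u)
        nlinarith [hWu u, norm_nonneg u]
      calc ‖T ((1 - W) u)‖ ≤ 2 ^ s.card * ‖(1 - W) u‖ := h2 _
        _ ≤ 2 ^ s.card * (2 * ‖u‖) := by gcongr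
        _ = _ := by ring
    · intro u
      rw [Finset.card_insert_of_notMem hi]
      have : (1 - ρ) * ‖u‖ ≤ ‖(1 - W) u‖ := by
        rw [ContinuousLinearMap.sub_apply, ContinuousLinearMap.one_apply]
        have := norm_sub_norm_le u (W u)
        nlinarith [hWu u, norm_nonneg u]
      have h0 : 0 ≤ 1 - ρ := by linarith
      calc (1 - ρ) ^ (s.card + 1) * ‖u‖ = (1 - ρ) ^ s.card * ((1 - ρ) * ‖u‖) := by ring
        _ ≤ (1 - ρ) ^ s.card * ‖(1 - W) u‖ := by gcongr
        _ ≤ _ := h3 _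
    · intro u
      rw [ContinuousLinearMap.mul_apply, h4, ContinuousLinearMap.sub_apply,
        ContinuousLinearMap.one_apply, lp.coeFn_sub, Pi.sub_apply, hW, adj_shiftOp_zero, sub_zero]
    · have := step_entries φ A B Y hA hB s i hi _ h5
      rw [← hW] at this
      have e : adjoint (T * (1 - W)) = adjoint (1 - W) * adjoint T := by
        simp only [← ContinuousLinearMap.star_eq_adjoint, star_mul]
      rw [e]
      simpa only [mul_assoc] using this

theorem isPositive_of_nonneg {E : Type*} [NormedAddCommGroup E] [InnerProductSpace ℂ E]
    [CompleteSpace E] {T : E →L[ℂ] E} (h : ∀ x, 0 ≤ inner (𝕜 := ℂ) (T x) x) : T.IsPositive := by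
  rw [ContinuousLinearMap.isPositive_iff_complex]
  intro x
  have := h x
  rw [Complex.le_def] at this
  refine ⟨?_, this.1⟩
  apply Complex.ext
  · simp
  · simpa using this.2

theorem diag_positive {n : ℕ} (Q : L2 n H →L[ℂ] L2 n H) (D : H →L[ℂ] H) (hD : D.IsPositive)
    (hQ : HasEntries Q (fun α β => if α = β then D else 0)) : Q.IsPositive := by
  refine isPositive_of_nonneg fun u => ?_
  have hu := lp.hasSum_single (p := 2) (by norm_num) u
  have hc : Continuous fun v : L2 n H => inner (𝕜 := ℂ) (Q v) v := Q.continuous.inner continuous_id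
  have ht := (hc.tendsto u).comp hu
  refine ge_of_tendsto' ht fun s => ?_
  simp only [Function.comp_apply, map_sum, sum_inner, inner_sum, hQ _ _ _ _]
  refine Finset.sum_nonneg fun β hβ => Finset.sum_nonneg fun α hα => ?_
  split_ifs with h
  · subst h; exact hD.inner_nonneg_left _
  · simp
theorem opLE_left_iff {E : Type*} [NormedAddCommGroup E] [InnerProductSpace ℂ E]
    [CompleteSpace E] {a : ℝ} {T : E →L[ℂ] E} :
    opLE ((a : ℂ) • (1 : E →L[ℂ] E)) T ↔
      ∀ x, ((a * ‖x‖ ^ 2 : ℝ) : ℂ) ≤ inner (𝕜 := ℂ) (T x) x := by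
  have key : ∀ x, inner (𝕜 := ℂ) ((T - (a : ℂ) • (1 : E →L[ℂ] E)) x) x
      = inner (𝕜 := ℂ) (T x) x - ((a * ‖x‖ ^ 2 : ℝ) : ℂ) := by
    intro x
    simp [inner_sub_left, inner_smul_left, inner_self_eq_norm_sq_to_K]
  constructor
  · intro h x
    have := h.inner_nonneg_left x
    rw [key] at this
    exact sub_nonneg.mp this
  · intro h
    refine isPositive_of_nonneg fun x => ?_
    rw [key]
    exact sub_nonneg.mpr (h x)

theorem opLE_right_iff {E : Type*} [NormedAddCommGroup E] [InnerProductSpace ℂ E]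
    [CompleteSpace E] {a : ℝ} {T : E →L[ℂ] E} :
    opLE T ((a : ℂ) • (1 : E →L[ℂ] E)) ↔
      ∀ x, inner (𝕜 := ℂ) (T x) x ≤ ((a * ‖x‖ ^ 2 : ℝ) : ℂ) := by
  have key : ∀ x, inner (𝕜 := ℂ) (((a : ℂ) • (1 : E →L[ℂ] E) - T) x) x
      = ((a * ‖x‖ ^ 2 : ℝ) : ℂ) - inner (𝕜 := ℂ) (T x) x := by
    intro x
    simp [inner_sub_left, inner_smul_left, inner_self_eq_norm_sq_to_K]
  constructor
  · intro h x
    have := h.inner_nonneg_left x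
    rw [key] at this
    exact sub_nonneg.mp this
  · intro h
    refine isPositive_of_nonneg fun x => ?_
    rw [key]
    exact sub_nonneg.mpr (h x)

theorem one_entries {n : ℕ} (c : ℂ) :
    HasEntries (c • (1 : L2 n H →L[ℂ] L2 n H))
      (fun α β => if α = β then c • (1 : H →L[ℂ] H) else 0) := by
  intro α β h l
  rw [ContinuousLinearMap.smul_apply, ContinuousLinearMap.one_apply, inner_smul_left,
    lp.inner_single_left]
  by_cases hab : α = β
  · subst hab
    simp [mul_comm]
  · rw [lp.single_apply_ne _ _ _ (Ne.symm hab)]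
    simp [hab]

theorem diag_lower {n : ℕ} (G : L2 n H →L[ℂ] L2 n H) (D : H →L[ℂ] H) (a : ℝ)
    (hG : HasEntries G (fun α β => if α = β then D else 0))
    (hD : opLE ((a : ℂ) • (1 : H →L[ℂ] H)) D) : opLE ((a : ℂ) • (1 : L2 n H →L[ℂ] L2 n H)) G := by
  refine diag_positive _ (D - (a : ℂ) • (1 : H →L[ℂ] H)) hD ?_
  intro α β h l
  have h1 := hG α β h l
  have h2 := one_entries (n := n) (H := H) (a : ℂ) α β h l
  rw [ContinuousLinearMap.sub_apply, inner_sub_left, h1, h2]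
  dsimp only
  split_ifs <;> simp [inner_sub_left]

theorem diag_upper {n : ℕ} (G : L2 n H →L[ℂ] L2 n H) (D : H →L[ℂ] H) (a : ℝ)
    (hG : HasEntries G (fun α β => if α = β then D else 0))
    (hD : opLE D ((a : ℂ) • (1 : H →L[ℂ] H))) : opLE G ((a : ℂ) • (1 : L2 n H →L[ℂ] L2 n H)) := by
  refine diag_positive _ ((a : ℂ) • (1 : H →L[ℂ] H) - D) hD ?_
  intro α β h l
  have h1 := hG α β h l
  have h2 := one_entries (n := n) (H := H) (a : ℂ) α β h l
  rw [ContinuousLinearMap.sub_apply, inner_sub_left, h1, h2]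
  dsimp only
  split_ifs <;> simp [inner_sub_left]

theorem norm_rX {n : ℕ} (X : Fin n → (H →L[ℂ] H)) (ρ : ℝ) (hX : ∀ i, ‖X i‖ ≤ ρ) (r : ℝ)
    (hr : r ∈ Set.Ico (0 : ℝ) 1) (i : Fin n) : ‖(r : ℂ) • X i‖ ≤ r * ρ := by
  rw [norm_smul, Complex.norm_real, Real.norm_of_nonneg hr.1]
  exact mul_le_mul_of_nonneg_left (hX i) hr.1

theorem comm_rX {n : ℕ} (X : Fin n → (H →L[ℂ] H)) (hc : ∀ i j, Commute (X i) (X j)) (r : ℝ) :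
    ∀ i j, Commute ((r : ℂ) • X i) ((r : ℂ) • X j) :=
  fun i j => ((hc i j).smul_left _).smul_right _

theorem entry_lower {n : ℕ} (X : Fin n → (H →L[ℂ] H)) (hc : ∀ i j, Commute (X i) (X j))
    (hX : ∀ i, ‖X i‖ ≤ 1) (r : ℝ) (hr : r ∈ Set.Ico (0 : ℝ) 1)
    (P : L2 n H →L[ℂ] L2 n H) (hP : IsPoissonKernel X r P) (a : ℝ) (ha : 0 < a)
    (hPa : opLE ((a : ℂ) • (1 : L2 n H →L[ℂ] L2 n H)) P) :
    opLE ((a : ℂ) • (1 : H →L[ℂ] H)) (defect fun i => (r : ℂ) • X i) ∧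
    ∀ i, opLE ((a : ℂ) • (1 : H →L[ℂ] H))
      (1 - ((r : ℂ) • X i) * adjoint ((r : ℂ) • X i)) := by
  obtain ⟨R, _, φ, A, B, hA, hB⟩ := exists_calc (fun i => (r : ℂ) • X i) (comm_rX X hc r)
  have hE := kernel_entries φ A B X r hA hB P hP
  have main : ∀ s, opLE ((a : ℂ) • (1 : H →L[ℂ] H)) (φ (symb A B s 0 0) 1) := by
    intro s
    obtain ⟨T, -, -, -, h4, h5⟩ := exists_T φ A B _ hA hB r hr.2
      (fun i => by simpa using norm_rX X 1 hX r hr i) P hE s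
    rw [opLE_left_iff] at hPa ⊢
    intro h
    have e := h5 0 0 h h
    simp only [ContinuousLinearMap.mul_apply, ContinuousLinearMap.adjoint_inner_left] at e
    rw [← e]
    refine le_trans ?_ (hPa _)
    rw [Complex.real_le_real]
    have h6 := lp.norm_apply_le_norm (p := 2) (by norm_num) (T (lp.single 2 (0 : Fin n → ℕ) h)) 0
    rw [h4, lp.single_apply_self] at h6
    gcongr
  constructor
  · have := main Finset.univ
    rw [symb_univ, if_pos rfl, phi_defect φ A B _ hA hB] at this
    exact this
  · intro i
    have := main {i}
    rw [symb_single] at this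
    simpa only [map_sub, map_one, map_mul, LinearMap.sub_apply, Module.End.mul_apply,
      Module.End.one_apply, hA, hB, one_mul] using this

theorem opLE_limit {f : ℝ → (H →L[ℂ] H)} (hf : Continuous f) {a : ℝ}
    (h : ∀ r ∈ Set.Ico (0 : ℝ) 1, opLE ((a : ℂ) • (1 : H →L[ℂ] H)) (f r)) :
    opLE ((a : ℂ) • (1 : H →L[ℂ] H)) (f 1) := by
  rw [opLE_left_iff]
  intro x
  have hc : Continuous fun r => inner (𝕜 := ℂ) (f r x) x :=
    (hf.clm_apply continuous_const).inner continuous_const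
  have ht := (hc.tendsto 1).mono_left (nhdsWithin_le_nhds (s := Set.Iio 1))
  refine ge_of_tendsto ht ?_
  filter_upwards [Ico_mem_nhdsLT (show (0 : ℝ) < 1 by norm_num)] with r hr
  exact opLE_left_iff.mp (h r hr) x

theorem lower_imp {n : ℕ} (X : Fin n → (H →L[ℂ] H)) (hc : ∀ i j, Commute (X i) (X j))
    (hX : ∀ i, ‖X i‖ ≤ 1) (P : ℝ → (L2 n H →L[ℂ] L2 n H))
    (hP : ∀ r ∈ Set.Ico (0 : ℝ) 1, IsPoissonKernel X r (P r)) (a : ℝ) (ha : 0 < a)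
    (hPa : ∀ r ∈ Set.Ico (0 : ℝ) 1, opLE ((a : ℂ) • (1 : L2 n H →L[ℂ] L2 n H)) (P r)) :
    memPolydisk X := by
  have hE := fun r hr => entry_lower X hc hX r hr (P r) (hP r hr) a ha (hPa r hr)
  have hcr : ∀ i, Continuous fun r : ℝ => (r : ℂ) • X i := fun i =>
    Complex.continuous_ofReal.smul continuous_const
  have h1 := opLE_limit (continuous_defect (f := fun r i => (r : ℂ) • X i) hcr)
    (fun r hr => (hE r hr).1)
  simp only [Complex.ofReal_one, one_smul] at h1
  have h2 : ∀ i, opLE ((a : ℂ) • (1 : H →L[ℂ] H)) (1 - X i * adjoint (X i)) := by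
    intro i
    have hca : Continuous fun r : ℝ => adjoint ((r : ℂ) • X i) :=
      (ContinuousLinearMap.adjoint (𝕜 := ℂ) (E := H) (F := H)).continuous.comp (hcr i)
    have := opLE_limit (f := fun r : ℝ => 1 - ((r : ℂ) • X i) * adjoint ((r : ℂ) • X i))
      (continuous_const.sub ((hcr i).mul hca)) (fun r hr => (hE r hr).2 i)
    simpa only [Complex.ofReal_one, one_smul] using this
  rw [opLE_left_iff] at h1
  refine ⟨hc, ?_, ?_, ?_⟩
  · intro i
    have h3 := opLE_left_iff.mp (h2 i)
    rw [← LinearIsometryEquiv.norm_map (ContinuousLinearMap.adjoint (𝕜 := ℂ) (E := H) (F := H))]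
    have h4 : ‖adjoint (X i)‖ ≤ √(1 - a) := by
      refine ContinuousLinearMap.opNorm_le_bound _ (Real.sqrt_nonneg _) fun h => ?_
      have h5 := h3 h
      have e : inner (𝕜 := ℂ) ((1 - X i * adjoint (X i)) h) h
          = ((‖h‖ ^ 2 - ‖adjoint (X i) h‖ ^ 2 : ℝ) : ℂ) := by
        rw [ContinuousLinearMap.sub_apply, ContinuousLinearMap.mul_apply, inner_sub_left,
          ← ContinuousLinearMap.adjoint_inner_right (X i), inner_self_eq_norm_sq_to_K,
          ContinuousLinearMap.one_apply, inner_self_eq_norm_sq_to_K]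
        simp
      rw [e, Complex.real_le_real] at h5
      have h6 : ‖adjoint (X i) h‖ ^ 2 ≤ (1 - a) * ‖h‖ ^ 2 := by linarith
      have h7 := Real.abs_le_sqrt h6
      rwa [Real.sqrt_mul' _ (by positivity), Real.sqrt_sq (norm_nonneg _), abs_of_nonneg (norm_nonneg _)] at h7
    refine h4.trans_lt ?_
    rw [Real.sqrt_lt' one_pos]
    linarith
  · refine isPositive_of_nonneg fun x => le_trans ?_ (h1 x)
    rw [Complex.zero_le_real]
    positivity
  · refine ContinuousLinearMap.isUnit_of_forall_le_norm_inner_map (𝕜 := ℂ) (defect X)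
      (c := ⟨a, ha.le⟩) ha fun x => ?_
    have h5 := (Complex.le_def.mp (h1 x)).1
    rw [Complex.ofReal_re] at h5
    have h6 := Complex.re_le_norm (inner (𝕜 := ℂ) (defect X x) x)
    have : ‖x‖ ^ 2 * a ≤ ‖inner (𝕜 := ℂ) (defect X x) x‖ := by linarith
    exact this

theorem exists_lower_of_unit (D : H →L[ℂ] H) (hD : D.IsPositive) (hu : IsUnit D) :
    ∃ ε : ℝ, 0 < ε ∧ algebraMap ℝ (H →L[ℂ] H) ε ≤ D := by
  have h0 : 0 ≤ D := (ContinuousLinearMap.nonneg_iff_isPositive D).mpr hD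
  rcases subsingleton_or_nontrivial (H →L[ℂ] H) with hs | hs
  · exact ⟨1, one_pos, (Subsingleton.elim _ _ : algebraMap ℝ (H →L[ℂ] H) 1 = D).le⟩
  obtain ⟨r, hr, h⟩ := (CFC.exists_pos_algebraMap_le_iff (A := H →L[ℂ] H) (a := D)
    hD.isSelfAdjoint).mpr (by
      intro x hx
      refine lt_of_le_of_ne (spectrum_nonneg_of_nonneg h0 hx) ?_
      rintro rfl
      exact spectrum.zero_notMem ℝ hu hx)
  exact ⟨r, hr, h⟩

theorem opLE_iff_alg (a : ℝ) (D : H →L[ℂ] H) :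
    opLE ((a : ℂ) • (1 : H →L[ℂ] H)) D ↔ algebraMap ℝ (H →L[ℂ] H) a ≤ D := by
  rw [ContinuousLinearMap.le_def, opLE, Algebra.algebraMap_eq_smul_one]
  rfl

theorem uniform_bounds {n : ℕ} (X : Fin n → (H →L[ℂ] H))
    (hX : ∀ r ∈ Set.Icc (0 : ℝ) 1, (defect fun i => (r : ℂ) • X i).IsPositive ∧
      IsUnit (defect fun i => (r : ℂ) • X i)) :
    (∃ ε : ℝ, 0 < ε ∧ ∀ r ∈ Set.Icc (0 : ℝ) 1,
      opLE ((ε : ℂ) • (1 : H →L[ℂ] H)) (defect fun i => (r : ℂ) • X i)) ∧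
    (∃ K : ℝ, 0 < K ∧ ∀ r ∈ Set.Icc (0 : ℝ) 1,
      opLE (defect fun i => (r : ℂ) • X i) ((K : ℂ) • (1 : H →L[ℂ] H))) := by
  have hcr : ∀ i, Continuous fun r : ℝ => (r : ℂ) • X i := fun i =>
    Complex.continuous_ofReal.smul continuous_const
  have hcont := continuous_defect (f := fun r i => (r : ℂ) • X i) hcr
  set f : ℝ → (H →L[ℂ] H) := fun r => defect fun i => (r : ℂ) • X i with hf
  constructor
  · suffices h : ∃ ε : ℝ, 0 < ε ∧ ∀ r ∈ Set.Icc (0 : ℝ) 1, r ∈ Set.Icc (0 : ℝ) 1 →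
        algebraMap ℝ (H →L[ℂ] H) ε ≤ f r by
      obtain ⟨ε, h1, h2⟩ := h
      exact ⟨ε, h1, fun r hr => (opLE_iff_alg _ _).mpr (h2 r hr hr)⟩
    have mono : ∀ a b : ℝ, a ≤ b → algebraMap ℝ (H →L[ℂ] H) a ≤ algebraMap ℝ (H →L[ℂ] H) b :=
      fun a b hab => algebraMap_mono (H →L[ℂ] H) hab
    refine isCompact_Icc.induction_on (p := fun s => ∃ ε : ℝ, 0 < ε ∧ ∀ r ∈ s,
      r ∈ Set.Icc (0 : ℝ) 1 → algebraMap ℝ (H →L[ℂ] H) ε ≤ f r) ?_ ?_ ?_ ?_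
    · exact ⟨1, one_pos, by simp⟩
    · rintro s t hst ⟨ε, h1, h2⟩
      exact ⟨ε, h1, fun r hr => h2 r (hst hr)⟩
    · rintro s t ⟨ε, h1, h2⟩ ⟨ε', h1', h2'⟩
      refine ⟨min ε ε', lt_min h1 h1', ?_⟩
      rintro r (hr | hr) hrI
      · exact (mono _ _ (min_le_left _ _)).trans (h2 r hr hrI)
      · exact (mono _ _ (min_le_right _ _)).trans (h2' r hr hrI)
    · intro r0 hr0
      obtain ⟨ε, h1, h2⟩ := exists_lower_of_unit _ (hX r0 hr0).1 (hX r0 hr0).2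
      refine ⟨{r | ‖f r - f r0‖ < ε / 2}, mem_nhdsWithin_of_mem_nhds ?_, ε / 2, by positivity, ?_⟩
      · have hc : Continuous fun r => ‖f r - f r0‖ := (hcont.sub continuous_const).norm
        exact (isOpen_lt hc continuous_const).mem_nhds (by simp [h1])
      · intro r hr hrI
        have hsa : IsSelfAdjoint (f r - f r0) :=
          (hX r hrI).1.isSelfAdjoint.sub (hX r0 hr0).1.isSelfAdjoint
        have h3 := hsa.neg_algebraMap_norm_le_self
        have h4 := mono ‖f r - f r0‖ (ε / 2) (le_of_lt hr)
        calc algebraMap ℝ (H →L[ℂ] H) (ε / 2)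
            = algebraMap ℝ (H →L[ℂ] H) ε - algebraMap ℝ (H →L[ℂ] H) (ε / 2) := by
              rw [← map_sub]; congr 1; ring
          _ ≤ f r0 - algebraMap ℝ (H →L[ℂ] H) ‖f r - f r0‖ := sub_le_sub h2 h4
          _ ≤ f r0 + (f r - f r0) := by rw [sub_eq_add_neg]; exact add_le_add le_rfl h3
          _ = f r := by abel
  · obtain ⟨K, hK⟩ := isCompact_Icc.exists_bound_of_continuousOn
      (hcont.continuousOn (s := Set.Icc (0 : ℝ) 1))
    refine ⟨max K 1, by positivity, fun r hr => ?_⟩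
    rw [opLE_right_iff]
    intro x
    have h1 := (hX r hr).1.inner_nonneg_left x
    rw [Complex.le_def] at h1 ⊢
    refine ⟨?_, ?_⟩
    · rw [Complex.ofReal_re]
      refine (Complex.re_le_norm _).trans ((norm_inner_le_norm _ _).trans ?_)
      have h2 := (f r).le_opNorm x
      have h3 : ‖f r‖ ≤ max K 1 := (hK r hr).trans (le_max_left _ _)
      calc ‖f r x‖ * ‖x‖ ≤ (max K 1 * ‖x‖) * ‖x‖ := by
            gcongr
            exact h2.trans (by gcongr)
        _ = _ := by ring
    · rw [Complex.ofReal_im]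
      exact h1.2.symm

theorem kernel_bounds {n : ℕ} (X : Fin n → (H →L[ℂ] H)) (hc : ∀ i j, Commute (X i) (X j))
    (ρ : ℝ) (hρ0 : 0 ≤ ρ) (hρ : ρ < 1) (hX : ∀ i, ‖X i‖ ≤ ρ) (r : ℝ) (hr : r ∈ Set.Ico (0 : ℝ) 1)
    (P : L2 n H →L[ℂ] L2 n H) (hP : IsPoissonKernel X r P) (ε K : ℝ) (hε : 0 < ε) (hK : 0 < K)
    (h1 : opLE ((ε : ℂ) • (1 : H →L[ℂ] H)) (defect fun i => (r : ℂ) • X i))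
    (h2 : opLE (defect fun i => (r : ℂ) • X i) ((K : ℂ) • (1 : H →L[ℂ] H))) (c : ℝ)
    (hc1 : (c ^ 2)⁻¹ ≤ ε / (2 ^ n) ^ 2) (hc2 : K / ((1 - ρ) ^ n) ^ 2 ≤ c ^ 2) :
    opLE (((c : ℂ) ^ 2)⁻¹ • (1 : L2 n H →L[ℂ] L2 n H)) P ∧
      opLE P (((c : ℂ) ^ 2) • (1 : L2 n H →L[ℂ] L2 n H)) := by
  obtain ⟨R, _, φ, A, B, hA, hB⟩ := exists_calc (fun i => (r : ℂ) • X i) (comm_rX X hc r)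
  have hE := kernel_entries φ A B X r hA hB P hP
  have hn : ∀ i, ‖(r : ℂ) • X i‖ ≤ ρ := fun i =>
    (norm_rX X ρ hX r hr i).trans (by nlinarith [hr.2])
  obtain ⟨T, hT, hTu, hTl, -, hTe⟩ := exists_T φ A B _ hA hB ρ hρ hn P hE Finset.univ
  simp only [symb_univ, Finset.card_univ, Fintype.card_fin] at hTe hTu hTl
  have hG : HasEntries (adjoint T * P * T)
      (fun α β => if α = β then (defect fun i => (r : ℂ) • X i) else 0) := by
    intro α β h l
    rw [hTe α β h l, ← phi_defect φ A B _ hA hB]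
    dsimp only
    split_ifs <;> simp
  have g1 := opLE_left_iff.mp (diag_lower _ _ _ hG h1)
  have g2 := opLE_right_iff.mp (diag_upper _ _ _ hG h2)
  simp only [ContinuousLinearMap.mul_apply, ContinuousLinearMap.adjoint_inner_left] at g1 g2
  obtain ⟨V, rfl⟩ := hT
  have hsurj : ∀ v, ∃ u, (V : L2 n H →L[ℂ] L2 n H) u = v := fun v =>
    ⟨(↑V⁻¹ : L2 n H →L[ℂ] L2 n H) v, by
      rw [← ContinuousLinearMap.mul_apply, Units.mul_inv, ContinuousLinearMap.one_apply]⟩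
  have hq : 0 < (1 - ρ) ^ n := pow_pos (by linarith) n
  have e1 : ((c : ℂ) ^ 2)⁻¹ = (((c ^ 2)⁻¹ : ℝ) : ℂ) := by push_cast; rfl
  have e2 : (c : ℂ) ^ 2 = ((c ^ 2 : ℝ) : ℂ) := by push_cast; rfl
  rw [e1, e2, opLE_left_iff, opLE_right_iff]
  constructor
  · intro v
    obtain ⟨u, rfl⟩ := hsurj v
    refine le_trans ?_ (g1 u)
    rw [Complex.real_le_real]
    have h3 := hTu u
    calc (c ^ 2)⁻¹ * ‖(V : L2 n H →L[ℂ] L2 n H) u‖ ^ 2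
        ≤ ε / (2 ^ n) ^ 2 * (2 ^ n * ‖u‖) ^ 2 := by gcongr
      _ = ε * ‖u‖ ^ 2 := by field_simp
  · intro v
    obtain ⟨u, rfl⟩ := hsurj v
    refine le_trans (g2 u) ?_
    rw [Complex.real_le_real]
    have h3 := hTl u
    calc K * ‖u‖ ^ 2 = K / ((1 - ρ) ^ n) ^ 2 * ((1 - ρ) ^ n * ‖u‖) ^ 2 := by field_simp
      _ ≤ c ^ 2 * ‖(V : L2 n H →L[ℂ] L2 n H) u‖ ^ 2 := by gcongr

theorem polydisk_imp {n : ℕ} (X : Fin n → (H →L[ℂ] H)) (hX : memClosedPolydisk X)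
    (hX' : memPolydisk X) (P : ℝ → (L2 n H →L[ℂ] L2 n H))
    (hP : ∀ r ∈ Set.Ico (0 : ℝ) 1, IsPoissonKernel X r (P r)) :
    ∃ c : ℝ, 1 ≤ c ∧ ∀ r ∈ Set.Ico (0 : ℝ) 1,
        opLE (((c : ℂ) ^ 2)⁻¹ • (1 : L2 n H →L[ℂ] L2 n H)) (P r) ∧
        opLE (P r) (((c : ℂ) ^ 2) • (1 : L2 n H →L[ℂ] L2 n H)) := by
  have hall : ∀ r ∈ Set.Icc (0 : ℝ) 1, (defect fun i => (r : ℂ) • X i).IsPositive ∧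
      IsUnit (defect fun i => (r : ℂ) • X i) := by
    intro r hr
    rcases eq_or_lt_of_le hr.1 with h0 | h0
    · subst h0
      simp only [Complex.ofReal_zero, zero_smul, defect_zero]
      exact ⟨ContinuousLinearMap.isPositive_one, isUnit_one⟩
    · rcases eq_or_lt_of_le hr.2 with h1 | h1
      · subst h1
        simpa only [Complex.ofReal_one, one_smul] using hX'.2.2
      · exact (hX.2.2 r ⟨h0, h1⟩).2.2
  obtain ⟨⟨ε, hε, h1⟩, K, hK, h2⟩ := uniform_bounds X hall
  obtain ⟨ρ, hρ0, hρ, hXρ⟩ : ∃ ρ : ℝ, 0 ≤ ρ ∧ ρ < 1 ∧ ∀ i, ‖X i‖ ≤ ρ := by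
    refine ⟨(Finset.univ.sup fun i => ‖X i‖₊ : NNReal), NNReal.coe_nonneg _, ?_, fun i => ?_⟩
    · have : (Finset.univ.sup fun i => ‖X i‖₊) < 1 :=
        (Finset.sup_lt_iff (by simp)).mpr fun i _ => hX'.2.1 i
      exact_mod_cast this
    · exact_mod_cast Finset.le_sup (f := fun i => ‖X i‖₊) (Finset.mem_univ i)
  have hq : 0 < (1 - ρ) ^ n := pow_pos (by linarith) n
  have hp1 : 0 < ε / (2 ^ n) ^ 2 := by positivity
  have hp2 : 0 < K / ((1 - ρ) ^ n) ^ 2 := by positivity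
  set e := ε / (2 ^ n) ^ 2 with he
  set K' := K / ((1 - ρ) ^ n) ^ 2 with hK'
  have hei : 0 < e⁻¹ := inv_pos.mpr hp1
  refine ⟨1 + e⁻¹ + K', by linarith, fun r hr => ?_⟩
  refine kernel_bounds X hX.1 ρ hρ0 hρ hXρ r hr (P r) (hP r hr) ε K hε hK
    (h1 r ⟨hr.1, hr.2.le⟩) (h2 r ⟨hr.1, hr.2.le⟩) _ ?_ ?_
  · rw [← he]
    apply inv_le_of_inv_le₀ hp1
    nlinarith
  · rw [← hK']
    nlinarith

end helpers

/-- For `X ∈ D^k(H)⁻` the following are equivalent: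
(i) every `X_i` has spectral radius `< 1` and `𝒫(R, rX) ≥ a I` for some `a > 0` and all
`r ∈ [0,1)`; (ii) `X ∈ D^k(H)`; (iii) there is `c ≥ 1` with `c⁻² I ≤ 𝒫(R, rX) ≤ c² I`
for all `r ∈ [0,1)`. -/
theorem stmt_9 (hk : 1 ≤ k) (X : Fin k → (H →L[ℂ] H)) (hX : memClosedPolydisk X)
    (P : ℝ → (L2 k H →L[ℂ] L2 k H))
    (hP : ∀ r ∈ Set.Ico (0 : ℝ) 1, IsPoissonKernel X r (P r)) :
    (((∀ i, spectralRadius ℂ (X i) < 1) ∧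
        ∃ a : ℝ, 0 < a ∧ ∀ r ∈ Set.Ico (0 : ℝ) 1,
          opLE (((a : ℝ) : ℂ) • (1 : L2 k H →L[ℂ] L2 k H)) (P r)) ↔
      memPolydisk X) ∧
    (memPolydisk X ↔
      ∃ c : ℝ, 1 ≤ c ∧ ∀ r ∈ Set.Ico (0 : ℝ) 1,
        opLE (((c : ℂ) ^ 2)⁻¹ • (1 : L2 k H →L[ℂ] L2 k H)) (P r) ∧
        opLE (P r) (((c : ℂ) ^ 2) • (1 : L2 k H →L[ℂ] L2 k H))) := by
  have lo : ∀ c : ℝ, 1 ≤ c → ((c : ℂ) ^ 2)⁻¹ = (((c ^ 2)⁻¹ : ℝ) : ℂ) := by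
    intro c _; push_cast; rfl
  have f1 : memPolydisk X → ∃ c : ℝ, 1 ≤ c ∧ ∀ r ∈ Set.Ico (0 : ℝ) 1,
        opLE (((c : ℂ) ^ 2)⁻¹ • (1 : L2 k H →L[ℂ] L2 k H)) (P r) ∧
        opLE (P r) (((c : ℂ) ^ 2) • (1 : L2 k H →L[ℂ] L2 k H)) :=
    fun h => polydisk_imp X hX h P hP
  refine ⟨⟨?_, ?_⟩, f1, ?_⟩
  · rintro ⟨-, a, ha, h⟩
    exact lower_imp X hX.1 hX.2.1 P hP a ha h
  · intro h
    refine ⟨fun i => ?_, ?_⟩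
    · rcases subsingleton_or_nontrivial H with hs | hs
      · have : Subsingleton (H →L[ℂ] H) := ⟨fun a b => by ext x; exact Subsingleton.elim _ _⟩
        rw [spectrum.SpectralRadius.of_subsingleton]
        exact zero_lt_one
      · refine (spectrum.spectralRadius_le_nnnorm (X i)).trans_lt ?_
        exact_mod_cast h.2.1 i
    · obtain ⟨c, hc, hc'⟩ := f1 h
      refine ⟨(c ^ 2)⁻¹, by positivity, fun r hr => ?_⟩
      rw [← lo c hc]
      exact (hc' r hr).1
  · rintro ⟨c, hc, h⟩
    refine lower_imp X hX.1 hX.2.1 P hP (c ^ 2)⁻¹ (by positivity) fun r hr => ?_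
    rw [← lo c hc]
    exact (h r hr).1

end
end

section
/- Let A, B ∈ D^k(H). Then A and B are Poisson equivalent and δ_P(A, B) = ln max{ ‖C_A C_B^{-1}‖, ‖C_B C_A^{-1}‖ }. -/
open ContinuousLinearMap

noncomputable section

variable {k : ℕ} {H : Type*} [NormedAddCommGroup H] [InnerProductSpace ℂ H] [CompleteSpace H]

set_option linter.unusedSectionVars false
open Filter Topology
open scoped ComplexOrder

theorem mon_add {M : Type*} [Monoid M] : ∀ {k : ℕ} (X : Fin k → M)
    (_ : ∀ i j, Commute (X i) (X j)) (u v : Fin k → ℕ),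
    (List.ofFn fun i => X i ^ (u + v) i).prod =
      (List.ofFn fun i => X i ^ u i).prod * (List.ofFn fun i => X i ^ v i).prod
  | 0, X, hX, u, v => by simp
  | k+1, X, hX, u, v => by
    have ih := mon_add (fun i : Fin k => X i.succ) (fun i j => hX _ _)
      (fun i => u i.succ) (fun i => v i.succ)
    simp only [Pi.add_apply] at ih
    simp only [List.ofFn_succ, List.prod_cons, Pi.add_apply, ih]
    rw [pow_add]
    have hc : Commute (X 0 ^ v 0) (List.ofFn fun i : Fin k => X i.succ ^ u i.succ).prod := by
      apply Commute.list_prod_right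
      intro x hx
      obtain ⟨i, rfl⟩ := (List.mem_ofFn' _ _).1 hx
      exact (hX _ _).pow_pow _ _
    simp only [mul_assoc]
    rw [← mul_assoc (X 0 ^ v 0), hc.eq, mul_assoc]

theorem mon_zero {M : Type*} [Monoid M] {k : ℕ} (X : Fin k → M) :
    (List.ofFn fun i => X i ^ (0 : Fin k → ℕ) i).prod = 1 := by
  simp

theorem mon_single {M : Type*} [Monoid M] : ∀ {k : ℕ} (X : Fin k → M) (i : Fin k),
    (List.ofFn fun j => X j ^ (Pi.single i 1 : Fin k → ℕ) j).prod = X i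
  | 0, X, i => i.elim0
  | k+1, X, i => by
    refine Fin.cases ?_ (fun i => ?_) i
    · simp [List.ofFn_succ]
    · have ih := mon_single (fun i : Fin k => X i.succ) i
      simp only [List.ofFn_succ, List.prod_cons]
      rw [← ih]
      simp [Pi.single_apply]

theorem mon_smul {M N : Type*} [Monoid M] [CommMonoid N] [MulAction N M] [IsScalarTower N M M]
    [SMulCommClass N M M] (c : N) : ∀ {k : ℕ} (X : Fin k → M) (u : Fin k → ℕ),
    (List.ofFn fun j => (c • X j) ^ u j).prod = c ^ (∑ j, u j) • (List.ofFn fun j => X j ^ u j).prod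
  | 0, X, i => by simp
  | k+1, X, u => by
    have ih := mon_smul c (fun i : Fin k => X i.succ) (fun i => u i.succ)
    simp only [List.ofFn_succ, List.prod_cons, ih, Fin.sum_univ_succ]
    rw [smul_pow, pow_add, mul_smul, smul_mul_assoc, mul_smul_comm]

/-- Multi-power. -/
def mon {k : ℕ} {M : Type*} [Monoid M] (X : Fin k → M) (u : Fin k → ℕ) : M :=
  (List.ofFn fun i => X i ^ u i).prod

theorem mon_e {k : ℕ} {M : Type*} [Monoid M] (X : Fin k → M)
    (hX : ∀ i j, Commute (X i) (X j)) (u : Fin k → ℕ) (i : Fin k) :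
    mon X (u + Pi.single i 1) = mon X u * X i := by
  unfold mon
  rw [mon_add X hX, mon_single]

theorem mon_e' {k : ℕ} {M : Type*} [Monoid M] (X : Fin k → M)
    (hX : ∀ i j, Commute (X i) (X j)) (u : Fin k → ℕ) (i : Fin k) :
    mon X (u + Pi.single i 1) = X i * mon X u := by
  rw [add_comm]; unfold mon
  rw [mon_add X hX, mon_single]

/-- partial defect -/
def dfl (X : Fin k → (H →L[ℂ] H)) (l : List (Fin k)) : H →L[ℂ] H :=
  ((l.map fun i => fun Y : H →L[ℂ] H => Y - X i * Y * adjoint (X i)).foldr (· ∘ ·) id) 1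

theorem dfl_nil (X : Fin k → (H →L[ℂ] H)) : dfl X [] = 1 := rfl
theorem dfl_cons (X : Fin k → (H →L[ℂ] H)) (i : Fin k) (l : List (Fin k)) :
    dfl X (i :: l) = dfl X l - X i * dfl X l * adjoint (X i) := rfl
theorem defect_eq (X : Fin k → (H →L[ℂ] H)) : defect X = dfl X (List.finRange k) := by
  unfold defect dfl
  rw [List.ofFn_eq_map]

open Classical in
/-- intermediate kernel -/
def Fk (X : Fin k → (H →L[ℂ] H)) (l : List (Fin k)) (α β : Fin k → ℕ) : H →L[ℂ] H :=
  if ∀ j ∈ l, α j = β j then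
    mon X (β - α) * dfl X l * mon (fun i => adjoint (X i)) (α - β) else 0

theorem Fk_cons (X : Fin k → (H →L[ℂ] H)) (hX : ∀ i j, Commute (X i) (X j)) (i : Fin k)
    (l : List (Fin k)) (hi : i ∉ l) (α β : Fin k → ℕ) :
    Fk X (i :: l) α β = Fk X l α β - Fk X l α (β + Pi.single i 1) * adjoint (X i)
      - X i * Fk X l (α + Pi.single i 1) β
      + X i * Fk X l (α + Pi.single i 1) (β + Pi.single i 1) * adjoint (X i) := by
  have hX' : ∀ i j, Commute (adjoint (X i)) (adjoint (X j)) := fun i j => (hX i j).star_star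
  have hne : ∀ j ∈ l, j ≠ i := fun j hj h => hi (h ▸ hj)
  have h1 : (∀ j ∈ l, α j = (β + Pi.single i 1 : Fin k → ℕ) j) ↔ ∀ j ∈ l, α j = β j :=
    forall₂_congr fun j hj => by simp [hne j hj]
  have h2 : (∀ j ∈ l, (α + Pi.single i 1 : Fin k → ℕ) j = β j) ↔ ∀ j ∈ l, α j = β j :=
    forall₂_congr fun j hj => by simp [hne j hj]
  have h3 : (∀ j ∈ l, (α + Pi.single i 1 : Fin k → ℕ) j = (β + Pi.single i 1 : Fin k → ℕ) j) ↔ ∀ j ∈ l, α j = β j :=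
    forall₂_congr fun j hj => by simp [hne j hj]
  unfold Fk
  rw [if_congr h1 rfl rfl, if_congr h2 rfl rfl, if_congr h3 rfl rfl]
  by_cases hl : ∀ j ∈ l, α j = β j
  swap
  · rw [if_neg hl, if_neg hl, if_neg hl, if_neg hl, if_neg]
    · simp
    · exact fun h => hl fun j hj => h j (List.mem_cons_of_mem _ hj)
  simp only [if_pos hl, add_tsub_add_eq_tsub_right, List.forall_mem_cons, dfl_cons]
  set D := dfl X l
  set Y := fun i => adjoint (X i)
  rcases lt_trichotomy (α i) (β i) with h | h | h
  · rw [if_neg (by intro h'; exact h.ne h'.1)]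
    have e1 : β + Pi.single i 1 - α = (β - α) + Pi.single i 1 := by
      ext j; by_cases hj : j = i
      · subst hj; simp; omega
      · simp [hj]
    have e2 : α - (β + Pi.single i 1) = α - β := by
      ext j; by_cases hj : j = i
      · subst hj; simp; omega
      · simp [hj]
    have e3 : β - α = (β - (α + Pi.single i 1)) + Pi.single i 1 := by
      ext j; by_cases hj : j = i
      · subst hj; simp; omega
      · simp [hj]
    have e4 : (α + Pi.single i 1) - β = α - β := by
      ext j; by_cases hj : j = i
      · subst hj; simp; omega
      · simp [hj]
    have e5 : mon X (β - α) = X i * mon X (β - (α + Pi.single i 1)) := by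
      conv_lhs => rw [e3]
      rw [mon_e' X hX]
    rw [e1, e2, e4, mon_e' X hX]
    simp only [← mul_assoc, ← e5]
    abel
  · rw [if_pos ⟨h, hl⟩]
    have e1 : β + Pi.single i 1 - α = (β - α) + Pi.single i 1 := by
      ext j; by_cases hj : j = i
      · subst hj; simp; omega
      · simp [hj]
    have e2 : α - (β + Pi.single i 1) = α - β := by
      ext j; by_cases hj : j = i
      · subst hj; simp; omega
      · simp [hj]
    have e3 : (β - (α + Pi.single i 1)) = β - α := by
      ext j; by_cases hj : j = i
      · subst hj; simp; omega
      · simp [hj]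
    have e4 : (α + Pi.single i 1) - β = (α - β) + Pi.single i 1 := by
      ext j; by_cases hj : j = i
      · subst hj; simp; omega
      · simp [hj]
    have e5 : mon X (β - α) * X i = X i * mon X (β - α) := by
      rw [← mon_e X hX, mon_e' X hX]
    have e6 : mon Y (α - β) * Y i = Y i * mon Y (α - β) := by
      rw [← mon_e Y hX', mon_e' Y hX']
    rw [e1, e2, e3, e4, mon_e' X hX, mon_e Y hX']
    have : mon X (β - α) * (D - X i * D * adjoint (X i)) * mon Y (α - β) =
      mon X (β - α) * D * mon Y (α - β) -
        (mon X (β - α) * X i) * D * (Y i * mon Y (α - β)) := by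
      simp only [Y, mul_sub, sub_mul, mul_assoc]
    rw [this, e5, ← e6]
    simp only [mul_assoc]
    simp only [Y]
    abel
  · rw [if_neg (by intro h'; exact h.ne' h'.1)]
    have e1 : β + Pi.single i 1 - α = (β - α) := by
      ext j; by_cases hj : j = i
      · subst hj; simp; omega
      · simp [hj]
    have e2 : α - β = (α - (β + Pi.single i 1)) + Pi.single i 1 := by
      ext j; by_cases hj : j = i
      · subst hj; simp; omega
      · simp [hj]
    have e3 : (β - (α + Pi.single i 1)) = β - α := by
      ext j; by_cases hj : j = i
      · subst hj; simp; omega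
      · simp [hj]
    have e4 : (α + Pi.single i 1) - β = (α - β) + Pi.single i 1 := by
      ext j; by_cases hj : j = i
      · subst hj; simp; omega
      · simp [hj]
    have e5 : mon Y (α - β) = mon Y (α - (β + Pi.single i 1)) * adjoint (X i) := by
      conv_lhs => rw [e2]
      rw [mon_e Y hX']
    rw [e1, e3, e4, mon_e Y hX']
    simp only [mul_assoc, ← e5]
    abel

/-- Entries determine the operator. -/
theorem op_ext1 {F : Type*} [NormedAddCommGroup F] [NormedSpace ℂ F] {S T : L2 k H →L[ℂ] F}
    (h : ∀ α h, S (lp.single 2 α h) = T (lp.single 2 α h)) : S = T := by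
  apply lp.ext_continuousLinearMap (by simp)
  intro i
  ext x
  exact h i x

theorem vec_ext {x y : L2 k H} (h : ∀ α m, inner ℂ x (lp.single 2 α m) = inner ℂ y (lp.single 2 α m)) :
    x = y := by
  ext α
  apply ext_inner_right ℂ
  intro m
  simpa [lp.inner_single_right] using h α m

theorem op_ext2 {S T : L2 k H →L[ℂ] L2 k H}
    (h : ∀ α β h m, inner ℂ (S (lp.single 2 β h)) (lp.single 2 α m) =
      inner ℂ (T (lp.single 2 β h)) (lp.single 2 α m)) : S = T :=
  op_ext1 fun β x => vec_ext fun α m => h α β x m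

/-- Shift operators commute. -/
theorem L_comm (X : Fin k → (H →L[ℂ] H)) (hX : ∀ i j, Commute (X i) (X j))
    (L : Fin k → (L2 k H →L[ℂ] L2 k H))
    (hL : ∀ (i : Fin k) (α : Fin k → ℕ) (h : H),
      L i (lp.single 2 α h) = lp.single 2 (α + Pi.single i 1) (adjoint (X i) h)) (i j : Fin k) :
    Commute (L i) (L j) := by
  have hX' : Commute (adjoint (X i)) (adjoint (X j)) := (hX i j).star_star
  apply op_ext1
  intro α h
  simp only [mul_apply_eq_comp, hL]
  rw [add_right_comm]
  congr 1
  exact congrArg (fun T : H →L[ℂ] H => T h) hX'.eq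

theorem W_form (X : Fin k → (H →L[ℂ] H)) (hX : ∀ i j, Commute (X i) (X j))
    (L : Fin k → (L2 k H →L[ℂ] L2 k H))
    (hL : ∀ (i : Fin k) (α : Fin k → ℕ) (h : H),
      L i (lp.single 2 α h) = lp.single 2 (α + Pi.single i 1) (adjoint (X i) h))
    (P : L2 k H →L[ℂ] L2 k H)
    (hP : ∀ (α β : Fin k → ℕ) (h m : H),
      inner ℂ (P (lp.single 2 β h)) (lp.single 2 α m) =
        inner ℂ ((mon X (β - α) * mon (fun i => adjoint (X i)) (α - β)) h) m)
    (l : List (Fin k)) (hl : l.Nodup) : ∀ (α β : Fin k → ℕ) (h m : H),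
    inner ℂ (P ((l.map fun i => 1 - L i).prod (lp.single 2 β h)))
      ((l.map fun i => 1 - L i).prod (lp.single 2 α m)) = inner ℂ (Fk X l α β h) m := by
  induction l with
  | nil =>
    intro α β h m
    simp [Fk, dfl_nil, hP]
  | cons i l ih =>
    intro α β h m
    obtain ⟨hi, hl'⟩ := List.nodup_cons.1 hl
    have ih := ih hl'
    have hc : Commute (1 - L i) (l.map fun i => 1 - L i).prod := by
      apply Commute.list_prod_right
      intro x hx
      obtain ⟨j, -, rfl⟩ := List.mem_map.1 hx
      exact ((Commute.one_left _).sub_left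
        ((Commute.one_right _).sub_right (L_comm X hX L hL i j)))
    rw [List.map_cons, List.prod_cons, hc.eq]
    have key : ∀ β h, ((l.map fun i => 1 - L i).prod * (1 - L i)) (lp.single 2 β h) =
      (l.map fun i => 1 - L i).prod (lp.single 2 β h) -
      (l.map fun i => 1 - L i).prod (lp.single 2 (β + Pi.single i 1) (adjoint (X i) h)) := by
      intro β h
      rw [mul_apply_eq_comp, sub_apply, hL, one_apply_eq_self, map_sub]
    rw [key, key, map_sub, inner_sub_left, inner_sub_right, inner_sub_right, ih, ih, ih, ih,
      Fk_cons X hX i l hi]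
    simp only [add_apply, sub_apply, mul_apply_eq_comp, inner_add_left, inner_sub_left,
      adjoint_inner_right]
    ring

/-- `I ⊗ T`. -/
def tens (T : H →L[ℂ] H) : L2 k H →L[ℂ] L2 k H :=
  lp.mapCLM 2 (fun _ => T) (norm_nonneg T) (fun _ => le_rfl)

theorem tens_apply (T : H →L[ℂ] H) (f : L2 k H) (α : Fin k → ℕ) : tens T f α = T (f α) := by
  simp [tens]

theorem tens_single (T : H →L[ℂ] H) (α : Fin k → ℕ) (h : H) :
    (tens T : L2 k H →L[ℂ] L2 k H) (lp.single 2 α h) = lp.single 2 α (T h) := by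
  ext β
  rw [tens_apply]
  by_cases hb : β = α
  · subst hb; simp
  · simp [hb]

theorem tens_sub (S T : H →L[ℂ] H) : (tens (S - T) : L2 k H →L[ℂ] L2 k H) = tens S - tens T := by
  apply op_ext1
  intro α h
  simp [tens_single]

theorem tens_mul (S T : H →L[ℂ] H) : (tens (S * T) : L2 k H →L[ℂ] L2 k H) = tens S * tens T := by
  apply op_ext1
  intro α h
  simp [tens_single]

theorem tens_one : (tens (1 : H →L[ℂ] H) : L2 k H →L[ℂ] L2 k H) = 1 := by
  apply op_ext1
  intro α h
  simp [tens_single]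

theorem tens_cont : Continuous (tens : (H →L[ℂ] H) → (L2 k H →L[ℂ] L2 k H)) := by
  apply LipschitzWith.continuous (K := 1)
  apply LipschitzWith.of_dist_le_mul
  intro S T
  rw [dist_eq_norm, dist_eq_norm, ← tens_sub]
  rw [NNReal.coe_one, one_mul]
  exact lp.norm_mapCLM_le _ _ _ _

theorem tens_unit {T : H →L[ℂ] H} (h : IsUnit T) : IsUnit (tens T : L2 k H →L[ℂ] L2 k H) := by
  obtain ⟨u, rfl⟩ := h
  refine ⟨⟨tens u, tens (↑u⁻¹ : H →L[ℂ] H), ?_, ?_⟩, rfl⟩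
  · rw [← tens_mul, Units.mul_inv, tens_one]
  · rw [← tens_mul, Units.inv_mul, tens_one]

theorem tens_symm {T : H →L[ℂ] H} (h : T.IsPositive) (x y : L2 k H) :
    inner ℂ (tens T x) y = inner ℂ x (tens T y) := by
  rw [lp.inner_eq_tsum, lp.inner_eq_tsum]
  congr 1
  ext α
  rw [tens_apply, tens_apply]
  exact h.isSymmetric _ _

theorem shift_norm (i : Fin k) (Y : H →L[ℂ] H) (L : L2 k H →L[ℂ] L2 k H)
    (hL : ∀ (α : Fin k → ℕ) (h : H),
      L (lp.single 2 α h) = lp.single 2 (α + Pi.single i 1) (Y h)) : ‖L‖ ≤ ‖Y‖ := by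
  apply opNorm_le_bound _ (norm_nonneg _)
  intro f
  have h2 : (0 : ℝ) < (2 : ENNReal).toReal := by norm_num
  have hs := lp.hasSum_single (p := 2) (by simp) f
  have h1 : Tendsto (fun s : Finset (Fin k → ℕ) => ‖L (∑ α ∈ s, lp.single 2 α (f α))‖) atTop
      (𝓝 ‖L f‖) := ((L.continuous.tendsto _).comp hs).norm
  have h3 : Tendsto (fun s : Finset (Fin k → ℕ) => ‖Y‖ * ‖(∑ α ∈ s, lp.single 2 α (f α) : L2 k H)‖) atTop
      (𝓝 (‖Y‖ * ‖f‖)) := hs.norm.const_mul _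
  refine le_of_tendsto_of_tendsto' h1 h3 fun s => ?_
  rw [← Real.rpow_le_rpow_iff (z := (2 : ENNReal).toReal) (norm_nonneg _) (by positivity) h2,
    Real.mul_rpow (norm_nonneg _) (norm_nonneg _), lp.norm_sum_single h2, map_sum]
  have : ∑ α ∈ s, L (lp.single 2 α (f α)) =
      ∑ β ∈ s.map ⟨fun α => α + Pi.single i 1, add_left_injective _⟩,
        lp.single 2 β ((fun β => Y (f (β - Pi.single i 1))) β) := by
    rw [Finset.sum_map]
    refine Finset.sum_congr rfl fun α _ => ?_
    simp [hL]
  rw [this, lp.norm_sum_single h2, Finset.sum_map, Finset.mul_sum]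
  refine Finset.sum_le_sum fun α _ => ?_
  rw [← Real.mul_rpow (norm_nonneg _) (norm_nonneg _)]
  apply Real.rpow_le_rpow (norm_nonneg _) _ h2.le
  simpa using Y.le_opNorm (f α)

theorem W_unit (L : Fin k → (L2 k H →L[ℂ] L2 k H)) (hL : ∀ i, ‖L i‖ < 1) :
    IsUnit (List.ofFn fun i => 1 - L i).prod := by
  have : ∀ l : List (L2 k H →L[ℂ] L2 k H), (∀ x ∈ l, IsUnit x) → IsUnit l.prod := by
    intro l
    induction l with
    | nil => simp
    | cons a l ih =>
      intro h
      rw [List.prod_cons]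
      exact (h a (by simp)).mul (ih fun x hx => h x (by simp [hx]))
  apply this
  intro x hx
  obtain ⟨i, rfl⟩ := (List.mem_ofFn' _ _).1 hx
  exact (Units.oneSub (L i) (hL i)).isUnit

theorem P_eq (X : Fin k → (H →L[ℂ] H)) (hX : ∀ i j, Commute (X i) (X j))
    (L : Fin k → (L2 k H →L[ℂ] L2 k H))
    (hL : ∀ (i : Fin k) (α : Fin k → ℕ) (h : H),
      L i (lp.single 2 α h) = lp.single 2 (α + Pi.single i 1) (adjoint (X i) h))
    (hL1 : ∀ i, ‖L i‖ < 1)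
    (P : L2 k H →L[ℂ] L2 k H)
    (hP : ∀ (α β : Fin k → ℕ) (h m : H),
      inner ℂ (P (lp.single 2 β h)) (lp.single 2 α m) =
        inner ℂ ((mon X (β - α) * mon (fun i => adjoint (X i)) (α - β)) h) m)
    (x y : L2 k H) :
    inner ℂ (P x) y = inner ℂ (tens (defect X) (Ring.inverse (List.ofFn fun i => 1 - L i).prod x))
      (Ring.inverse (List.ofFn fun i => 1 - L i).prod y) := by
  have hW := W_unit L hL1
  set W := (List.ofFn fun i => 1 - L i).prod with hWdef
  have key : adjoint W * (P * W) = tens (defect X) := by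
    apply op_ext2
    intro α β h m
    rw [mul_apply_eq_comp, mul_apply_eq_comp, adjoint_inner_left, hWdef, List.ofFn_eq_map,
      W_form X hX L hL P hP _ (List.nodup_finRange k), tens_single, lp.inner_single_right,
      defect_eq]
    unfold Fk
    by_cases hab : α = β
    · subst hab
      simp [mon]
    · rw [if_neg]
      · simp [hab]
      · intro h'
        exact hab (funext fun j => h' j (by simp))
  rw [← key, mul_apply_eq_comp, adjoint_inner_left]
  have hWW : ∀ z, W (Ring.inverse W z) = z := fun z => by
    rw [← mul_apply_eq_comp, Ring.mul_inverse_cancel _ hW, one_apply_eq_self]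
  rw [mul_apply_eq_comp, hWW, hWW]

theorem tendsto_app {E : Type*} [NormedAddCommGroup E] [NormedSpace ℂ E] {l : Filter ℝ}
    {f : ℝ → E →L[ℂ] E} {T : E →L[ℂ] E} {g : ℝ → E} {x : E} (hf : Tendsto f l (𝓝 T))
    (hg : Tendsto g l (𝓝 x)) : Tendsto (fun r => f r (g r)) l (𝓝 (T x)) :=
  (isBoundedBilinearMap_apply.continuous.tendsto (T, x)).comp (hf.prodMk_nhds hg)

theorem C_entries (X : Fin k → (H →L[ℂ] H)) (hX : memPolydisk X)
    (D : H →L[ℂ] H) (hD : D.IsPositive ∧ D * D = defect X)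
    (L : Fin k → (L2 k H →L[ℂ] L2 k H))
    (hL : ∀ (i : Fin k) (α : Fin k → ℕ) (h : H),
      L i (lp.single 2 α h) = lp.single 2 (α + Pi.single i 1) (adjoint (X i) h))
    (ID : L2 k H →L[ℂ] L2 k H)
    (hID : ∀ (α : Fin k → ℕ) (h : H), ID (lp.single 2 α h) = lp.single 2 α (D h))
    (P : ℝ → (L2 k H →L[ℂ] L2 k H))
    (hP : ∀ r ∈ Set.Ico (0 : ℝ) 1, IsPoissonKernel X r (P r)) :
    IsUnit (ID * Ring.inverse ((List.ofFn fun i => 1 - L i).prod)) ∧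
    ∀ (α β : Fin k → ℕ) (h m : H),
      inner ℂ ((ID * Ring.inverse ((List.ofFn fun i => 1 - L i).prod)) (lp.single 2 β h))
        ((ID * Ring.inverse ((List.ofFn fun i => 1 - L i).prod)) (lp.single 2 α m)) =
      inner ℂ ((mon X (β - α) * mon (fun i => adjoint (X i)) (α - β)) h) m := by
  obtain ⟨hc, hn, -, hu⟩ := hX
  have hIDt : ID = tens D := op_ext1 fun α h => by rw [hID, tens_single]
  have hL1 : ∀ i, ‖L i‖ < 1 := fun i =>
    ((shift_norm i _ (L i) (hL i)).trans_eq (LinearIsometryEquiv.norm_map _ _)).trans_lt (hn i)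
  have hW := W_unit L hL1
  have hDu : IsUnit D := by
    rw [← hD.2] at hu
    exact (Commute.isUnit_mul_iff (Commute.refl D)).1 hu |>.1
  refine ⟨?_, ?_⟩
  · rw [hIDt]
    exact (tens_unit hDu).mul hW.ringInverse
  intro α β h m
  have hrew : inner ℂ ((ID * Ring.inverse ((List.ofFn fun i => 1 - L i).prod)) (lp.single 2 β h))
        ((ID * Ring.inverse ((List.ofFn fun i => 1 - L i).prod)) (lp.single 2 α m)) =
      inner ℂ (tens (defect X) (Ring.inverse (List.ofFn fun i => 1 - L i).prod (lp.single 2 β h)))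
      (Ring.inverse (List.ofFn fun i => 1 - L i).prod (lp.single 2 α m)) := by
    rw [mul_apply_eq_comp, mul_apply_eq_comp, hIDt, ← tens_symm hD.1, ← hD.2, tens_mul,
      mul_apply_eq_comp]
  rw [hrew]
  -- families in r
  have hWc : Continuous fun r : ℝ => (List.ofFn fun i => 1 - (r : ℂ) • L i).prod := by
    simp only [List.ofFn_eq_map]
    apply continuous_list_prod
    intro i _
    fun_prop
  have hdc : Continuous fun r : ℝ => defect (fun i => (r : ℂ) • X i) := by
    simp only [defect_eq]
    induction List.finRange k with
    | nil => simp only [dfl_nil]; fun_prop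
    | cons i l ih =>
      simp only [dfl_cons, map_smulₛₗ]
      simp only [Complex.conj_ofReal]
      fun_prop
  have hWi : Tendsto (fun r : ℝ => Ring.inverse (List.ofFn fun i => 1 - (r : ℂ) • L i).prod)
      (𝓝[<] 1) (𝓝 (Ring.inverse (List.ofFn fun i => 1 - L i).prod)) := by
    have h0 : Tendsto (fun r : ℝ => (List.ofFn fun i => 1 - (r : ℂ) • L i).prod)
      (𝓝[<] 1) (𝓝 ((List.ofFn fun i => 1 - L i).prod)) := by
      have := hWc.tendsto 1
      simp only [Complex.ofReal_one, one_smul] at this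
      exact this.mono_left nhdsWithin_le_nhds
    obtain ⟨u, hu⟩ := hW
    rw [← hu] at h0 ⊢
    exact (NormedRing.inverse_continuousAt u).tendsto.comp h0
  have hdi : Tendsto (fun r : ℝ => (tens (defect (fun i => (r : ℂ) • X i)) : L2 k H →L[ℂ] L2 k H))
      (𝓝[<] 1) (𝓝 (tens (defect X))) := by
    have := (tens_cont (k := k).comp hdc).tendsto 1
    simp only [Function.comp_def, Complex.ofReal_one, one_smul] at this
    exact this.mono_left nhdsWithin_le_nhds
  have hx := tendsto_app hWi (tendsto_const_nhds (x := (lp.single 2 β h : L2 k H)))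
  have hy := tendsto_app hWi (tendsto_const_nhds (x := (lp.single 2 α m : L2 k H)))
  have hlim1 := (tendsto_app hdi hx).inner (𝕜 := ℂ) hy
  have hlim2 : Tendsto (fun r : ℝ => ((r ^ (∑ i, ((α i - β i) + (β i - α i))) : ℝ) : ℂ) *
        inner ℂ ((mon X (β - α) * mon (fun i => adjoint (X i)) (α - β)) h) m) (𝓝[<] 1)
        (𝓝 (inner ℂ ((mon X (β - α) * mon (fun i => adjoint (X i)) (α - β)) h) m)) := by
    have hcont : Continuous (fun r : ℝ => ((r ^ (∑ i, ((α i - β i) + (β i - α i))) : ℝ) : ℂ) *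
        inner ℂ ((mon X (β - α) * mon (fun i => adjoint (X i)) (α - β)) h) m) := by fun_prop
    have := hcont.tendsto 1
    simp only [one_pow, Complex.ofReal_one, one_mul] at this
    exact this.mono_left nhdsWithin_le_nhds
  refine tendsto_nhds_unique (hlim1.congr' ?_) hlim2
  have hev : ∀ᶠ r : ℝ in 𝓝[<] 1, r ∈ Set.Ico (0 : ℝ) 1 :=
    Ico_mem_nhdsLT (by norm_num)
  filter_upwards [hev] with r hr
  have hrn : ‖(r : ℂ)‖ ≤ 1 := by simpa [abs_of_nonneg hr.1] using hr.2.le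
  have hent : ∀ (α β : Fin k → ℕ) (h m : H),
      inner ℂ (P r (lp.single 2 β h)) (lp.single 2 α m) =
        inner ℂ ((mon (fun i => (r : ℂ) • X i) (β - α) *
          mon (fun i => adjoint ((r : ℂ) • X i)) (α - β)) h) m := by
    intro α β h m
    rw [hP r hr α β h m]
    have e1 : mon (fun i => (r : ℂ) • X i) (β - α) = (r : ℂ) ^ (∑ i, (β - α) i) • mon X (β - α) :=
      mon_smul _ _ _
    have e2 : mon (fun i => adjoint ((r : ℂ) • X i)) (α - β) =
        (r : ℂ) ^ (∑ i, (α - β) i) • mon (fun i => adjoint (X i)) (α - β) := by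
      simp only [map_smulₛₗ, Complex.conj_ofReal]
      exact mon_smul _ _ _
    rw [e1, e2, smul_mul_smul_comm, ← pow_add, smul_apply, inner_smul_left, map_pow,
      Complex.conj_ofReal, Complex.ofReal_pow, ← Finset.sum_add_distrib]
    congr 2
    exact Finset.sum_congr rfl fun i _ => add_comm _ _
  rw [← P_eq (fun i => (r : ℂ) • X i) (fun i j => ((hc i j).smul_left _).smul_right _)
    (fun i => (r : ℂ) • L i) _ _ (P r) hent, hP r hr α β h m]
  · rfl
  · intro i α h
    rw [smul_apply, hL, map_smulₛₗ, Complex.conj_ofReal, smul_apply, lp.single_smul]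
  · intro i
    rw [norm_smul]
    exact (mul_le_of_le_one_left (norm_nonneg _) hrn).trans_lt (hL1 i)

theorem pos_iff {E : Type*} [NormedAddCommGroup E] [InnerProductSpace ℂ E] (T : E →L[ℂ] E) :
    T.IsPositive ↔ ∀ x, 0 ≤ inner ℂ (T x) x := by
  rw [isPositive_iff_complex]
  refine forall_congr' fun x => ?_
  rw [Complex.nonneg_iff]
  constructor
  · rintro ⟨h1, h2⟩
    refine ⟨h2, ?_⟩
    rw [← h1]
    simp
  · rintro ⟨h1, h2⟩
    refine ⟨?_, h1⟩
    apply Complex.ext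
    · simp
    · simpa using h2

theorem pos_fin (T : L2 k H →L[ℂ] L2 k H) :
    T.IsPositive ↔ ∀ (s : Finset (Fin k → ℕ)) (h : (Fin k → ℕ) → H),
      0 ≤ ∑ α ∈ s, ∑ β ∈ s, inner ℂ (T (lp.single 2 β (h β))) (lp.single 2 α (h α)) := by
  have hexp : ∀ (s : Finset (Fin k → ℕ)) (h : (Fin k → ℕ) → H),
      inner ℂ (T (∑ β ∈ s, lp.single 2 β (h β))) (∑ α ∈ s, lp.single 2 α (h α)) =
      ∑ α ∈ s, ∑ β ∈ s, inner ℂ (T (lp.single 2 β (h β))) (lp.single 2 α (h α)) := by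
    intro s h
    rw [map_sum, inner_sum]
    refine Finset.sum_congr rfl fun α _ => ?_
    rw [sum_inner]
  rw [pos_iff]
  constructor
  · intro hT s h
    rw [← hexp]
    exact hT _
  · intro hT x
    have hs := lp.hasSum_single (p := 2) (by simp) x
    have hs' : Tendsto (fun s : Finset (Fin k → ℕ) => ∑ α ∈ s, lp.single 2 α (x α)) atTop (𝓝 x) := hs
    have h1 := (((T.continuous.tendsto _).comp hs').inner (𝕜 := ℂ) hs')
    refine ge_of_tendsto' h1 fun s => ?_
    simp only [Function.comp]
    rw [hexp s (fun α => x α)]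
    exact hT _ _

theorem gram (r : ℝ) (N : ℕ) : ∀ a b : ℕ, a ≤ N → b ≤ N →
    r ^ ((a - b) + (b - a)) = (∑ n ∈ Finset.range N, (1 - r ^ 2) *
      ((if a ≤ n then r ^ (n - a) else 0) * (if b ≤ n then r ^ (n - b) else 0))) +
      (if a ≤ N then r ^ (N - a) else 0) * (if b ≤ N then r ^ (N - b) else 0) := by
  induction N with
  | zero =>
    intro a b ha hb
    obtain rfl : a = 0 := by omega
    obtain rfl : b = 0 := by omega
    simp
  | succ N ih =>
    intro a b ha hb
    by_cases ha' : a ≤ N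
    · by_cases hb' : b ≤ N
      · rw [ih a b ha' hb', Finset.sum_range_succ]
        simp only [ha, hb, ha', hb', if_true]
        rw [show N + 1 - a = (N - a) + 1 by omega, show N + 1 - b = (N - b) + 1 by omega]
        ring
      · obtain rfl : b = N + 1 := by omega
        rw [Finset.sum_eq_zero]
        · simp only [ha, if_true, le_refl]
          rw [show a - (N + 1) + (N + 1 - a) = N + 1 - a by omega]
          simp
        · intro n hn
          have := Finset.mem_range.1 hn
          rw [if_neg (show ¬ (N + 1 ≤ n) by omega)]
          simp
    · obtain rfl : a = N + 1 := by omega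
      rw [Finset.sum_eq_zero]
      · simp only [hb, if_true, le_refl]
        rw [show (N + 1) - b + (b - (N + 1)) = N + 1 - b by omega]
        simp
      · intro n hn
        have := Finset.mem_range.1 hn
        rw [if_neg (show ¬ (N + 1 ≤ n) by omega)]
        simp

/-- positive-definiteness of a weighted kernel -/
def Psd (T : L2 k H →L[ℂ] L2 k H) (w : (Fin k → ℕ) → (Fin k → ℕ) → ℝ) : Prop :=
  ∀ (s : Finset (Fin k → ℕ)) (h : (Fin k → ℕ) → H),
      0 ≤ ∑ α ∈ s, ∑ β ∈ s, (w α β : ℂ) *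
        inner ℂ (T (lp.single 2 β (h β))) (lp.single 2 α (h α))

theorem psd_step (T : L2 k H →L[ℂ] L2 k H) (w : (Fin k → ℕ) → (Fin k → ℕ) → ℝ) (hw : Psd T w)
    (r : ℝ) (hr : r ∈ Set.Ico (0 : ℝ) 1) (i : Fin k) :
    Psd T (fun α β => r ^ ((α i - β i) + (β i - α i)) * w α β) := by
  intro s h
  set N := s.sup (fun α => α i) with hN
  have hle : ∀ α ∈ s, α i ≤ N := fun α hα => Finset.le_sup (f := fun α : Fin k → ℕ => α i) hα
  let g : ℕ → ℕ → ℝ := fun n a => if a ≤ n then r ^ (n - a) else 0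
  let Q : ℕ → ℂ := fun n => ∑ α ∈ s, ∑ β ∈ s, (w α β : ℂ) *
        inner ℂ (T (lp.single 2 β ((g n (β i) : ℂ) • h β))) (lp.single 2 α ((g n (α i) : ℂ) • h α))
  have hQ : ∀ n, 0 ≤ Q n := fun n => hw s _
  have hQe : ∀ n, Q n = ∑ α ∈ s, ∑ β ∈ s, ((g n (α i) * g n (β i) * w α β : ℝ) : ℂ) *
        inner ℂ (T (lp.single 2 β (h β))) (lp.single 2 α (h α)) := by
    intro n
    refine Finset.sum_congr rfl fun α _ => Finset.sum_congr rfl fun β _ => ?_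
    rw [lp.single_smul, lp.single_smul, map_smul, inner_smul_left, inner_smul_right,
      Complex.conj_ofReal]
    push_cast
    ring
  have : ∑ α ∈ s, ∑ β ∈ s, ((r ^ ((α i - β i) + (β i - α i)) * w α β : ℝ) : ℂ) *
        inner ℂ (T (lp.single 2 β (h β))) (lp.single 2 α (h α)) =
      (∑ n ∈ Finset.range N, ((1 - r ^ 2 : ℝ) : ℂ) * Q n) + Q N := by
    simp only [hQe, Finset.mul_sum]
    rw [Finset.sum_comm (s := Finset.range N), ← Finset.sum_add_distrib]
    refine Finset.sum_congr rfl fun α hα => ?_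
    rw [Finset.sum_comm (s := Finset.range N), ← Finset.sum_add_distrib]
    refine Finset.sum_congr rfl fun β hβ => ?_
    rw [gram r N _ _ (hle α hα) (hle β hβ)]
    simp only [← mul_assoc, ← Complex.ofReal_mul]
    rw [← Finset.sum_mul, ← add_mul, ← Complex.ofReal_sum, ← Complex.ofReal_add]
    congr 2
    rw [add_mul, Finset.sum_mul]
  simp only [this]
  refine add_nonneg (Finset.sum_nonneg fun n _ => mul_nonneg ?_ (hQ n)) (hQ N)
  rw [Complex.zero_le_real]
  nlinarith [hr.1, hr.2]

theorem psd_all (T : L2 k H →L[ℂ] L2 k H) (hw : T.IsPositive)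
    (r : ℝ) (hr : r ∈ Set.Ico (0 : ℝ) 1) (t : Finset (Fin k)) :
    Psd T (fun α β => r ^ (∑ i ∈ t, ((α i - β i) + (β i - α i)))) := by
  induction t using Finset.induction_on with
  | empty =>
    intro s h
    simpa using (pos_fin T).1 hw s h
  | insert i t hi ih =>
    have := psd_step T _ ih r hr i
    simpa only [Finset.sum_insert hi, pow_add] using this

theorem fam_pos (T : ℝ → (L2 k H →L[ℂ] L2 k H)) (T1 : L2 k H →L[ℂ] L2 k H)
    (hT : ∀ r ∈ Set.Ico (0 : ℝ) 1, ∀ (α β : Fin k → ℕ) (h m : H),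
      inner ℂ (T r (lp.single 2 β h)) (lp.single 2 α m) =
      ((r ^ (∑ i, ((α i - β i) + (β i - α i))) : ℝ) : ℂ) *
        inner ℂ (T1 (lp.single 2 β h)) (lp.single 2 α m)) :
    (∀ r ∈ Set.Ico (0 : ℝ) 1, (T r).IsPositive) ↔ T1.IsPositive := by
  constructor
  · intro hp
    rw [pos_fin]
    intro s h
    have hc : Continuous fun r : ℝ => ∑ α ∈ s, ∑ β ∈ s,
        ((r ^ (∑ i, ((α i - β i) + (β i - α i))) : ℝ) : ℂ) *
        inner ℂ (T1 (lp.single 2 β (h β))) (lp.single 2 α (h α)) := by fun_prop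
    have h1 := (hc.tendsto 1).mono_left (nhdsWithin_le_nhds (s := Set.Iio 1))
    simp only [one_pow, Complex.ofReal_one, one_mul] at h1
    refine ge_of_tendsto h1 ?_
    have hev : ∀ᶠ r : ℝ in 𝓝[<] 1, r ∈ Set.Ico (0 : ℝ) 1 := Ico_mem_nhdsLT (by norm_num)
    filter_upwards [hev] with r hr
    have := (pos_fin _).1 (hp r hr) s h
    simpa only [hT r hr] using this
  · intro hp r hr
    rw [pos_fin]
    intro s h
    have := psd_all T1 hp r hr Finset.univ s h
    simpa only [hT r hr] using this

theorem norm_char {E : Type*} [NormedAddCommGroup E] [InnerProductSpace ℂ E] [CompleteSpace E]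
    (S T : E →L[ℂ] E) (hT : IsUnit T) (c : ℝ) (hc : 1 ≤ c) :
    ‖S * Ring.inverse T‖ ≤ c ↔ ∀ x, ‖S x‖ ^ 2 ≤ c ^ 2 * ‖T x‖ ^ 2 := by
  have e1 : ∀ x, T (Ring.inverse T x) = x := fun z => by
    rw [← mul_apply_eq_comp, Ring.mul_inverse_cancel _ hT, one_apply_eq_self]
  have e2 : ∀ x, Ring.inverse T (T x) = x := fun z => by
    rw [← mul_apply_eq_comp, Ring.inverse_mul_cancel _ hT, one_apply_eq_self]
  constructor
  · intro h x
    have := (S * Ring.inverse T).le_of_opNorm_le h (T x)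
    rw [mul_apply_eq_comp, e2] at this
    rw [← mul_pow]
    gcongr
  · intro h
    apply opNorm_le_bound _ (by linarith)
    intro x
    have := h (Ring.inverse T x)
    rw [e1, ← mul_pow] at this
    exact le_of_sq_le_sq this (by positivity)

theorem inner_form {E : Type*} [NormedAddCommGroup E] [InnerProductSpace ℂ E] [CompleteSpace E]
    (S : E →L[ℂ] E) (x : E) : inner ℂ ((adjoint S * S) x) x = ((‖S x‖ ^ 2 : ℝ) : ℂ) := by
  rw [mul_apply_eq_comp, adjoint_inner_left, inner_self_eq_norm_sq_to_K]
  push_cast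
  rfl

theorem sandwich_pos {E : Type*} [NormedAddCommGroup E] [InnerProductSpace ℂ E] [CompleteSpace E]
    (S T : E →L[ℂ] E) (c d : ℝ) :
    ((c : ℂ) • (adjoint T * T) - (d : ℂ) • (adjoint S * S)).IsPositive ↔
      ∀ x, d * ‖S x‖ ^ 2 ≤ c * ‖T x‖ ^ 2 := by
  rw [pos_iff]
  refine forall_congr' fun x => ?_
  rw [sub_apply, smul_apply, smul_apply, inner_sub_left, inner_smul_left, inner_smul_left,
    inner_form, inner_form, Complex.conj_ofReal, Complex.conj_ofReal, sub_nonneg,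
    ← Complex.ofReal_mul, ← Complex.ofReal_mul, Complex.real_le_real]

/-- For `A, B ∈ D^k(H)`, `A` and `B` are Poisson equivalent and
`δ_P(A,B) = ln max {‖C_A C_B⁻¹‖, ‖C_B C_A⁻¹‖}`, where
`C_X = (I ⊗ Δ_X(I)^{1/2}) ∘ ∏ (I - Λ_i(X_i*))⁻¹`.  Here `D_X` denotes the positive square
root of `Δ_X(I)`, `L_X i` the operator `Λ_i(X_i*)` on `ℓ²(ℕ^k; H)`, and `ID_X` the operator
`I ⊗ D_X` acting entrywise. -/
theorem stmt_10 (hk : 1 ≤ k) (A B : Fin k → (H →L[ℂ] H))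
    (hA : memPolydisk A) (hB : memPolydisk B)
    (DA DB : H →L[ℂ] H)
    (hDA : DA.IsPositive ∧ DA * DA = defect A)
    (hDB : DB.IsPositive ∧ DB * DB = defect B)
    (LA LB : Fin k → (L2 k H →L[ℂ] L2 k H))
    (hLA : ∀ (i : Fin k) (α : Fin k → ℕ) (h : H),
      LA i (lp.single 2 α h) = lp.single 2 (α + Pi.single i 1) (adjoint (A i) h))
    (hLB : ∀ (i : Fin k) (α : Fin k → ℕ) (h : H),
      LB i (lp.single 2 α h) = lp.single 2 (α + Pi.single i 1) (adjoint (B i) h))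
    (IDA IDB : L2 k H →L[ℂ] L2 k H)
    (hIDA : ∀ (α : Fin k → ℕ) (h : H), IDA (lp.single 2 α h) = lp.single 2 α (DA h))
    (hIDB : ∀ (α : Fin k → ℕ) (h : H), IDB (lp.single 2 α h) = lp.single 2 α (DB h))
    (PA PB : ℝ → (L2 k H →L[ℂ] L2 k H))
    (hPA : ∀ r ∈ Set.Ico (0 : ℝ) 1, IsPoissonKernel A r (PA r))
    (hPB : ∀ r ∈ Set.Ico (0 : ℝ) 1, IsPoissonKernel B r (PB r)) :
    PoissonEquiv PA PB ∧
      deltaP PA PB =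
        Real.log (max
          ‖(IDA * Ring.inverse ((List.ofFn fun i => 1 - LA i).prod)) *
            Ring.inverse (IDB * Ring.inverse ((List.ofFn fun i => 1 - LB i).prod))‖
          ‖(IDB * Ring.inverse ((List.ofFn fun i => 1 - LB i).prod)) *
            Ring.inverse (IDA * Ring.inverse ((List.ofFn fun i => 1 - LA i).prod))‖) := by
  obtain ⟨uA, eA⟩ := C_entries A hA DA hDA LA hLA IDA hIDA PA hPA
  obtain ⟨uB, eB⟩ := C_entries B hB DB hDB LB hLB IDB hIDB PB hPB
  set CA := IDA * Ring.inverse ((List.ofFn fun i => 1 - LA i).prod)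
  set CB := IDB * Ring.inverse ((List.ofFn fun i => 1 - LB i).prod)
  have fA : ∀ r ∈ Set.Ico (0 : ℝ) 1, ∀ (α β : Fin k → ℕ) (h m : H),
      inner ℂ (PA r (lp.single 2 β h)) (lp.single 2 α m) =
      ((r ^ (∑ i, ((α i - β i) + (β i - α i))) : ℝ) : ℂ) *
        inner ℂ ((adjoint CA * CA) (lp.single 2 β h)) (lp.single 2 α m) := by
    intro r hr α β h m
    rw [mul_apply_eq_comp, adjoint_inner_left, eA, hPA r hr α β h m]
    rfl
  have fB : ∀ r ∈ Set.Ico (0 : ℝ) 1, ∀ (α β : Fin k → ℕ) (h m : H),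
      inner ℂ (PB r (lp.single 2 β h)) (lp.single 2 α m) =
      ((r ^ (∑ i, ((α i - β i) + (β i - α i))) : ℝ) : ℂ) *
        inner ℂ ((adjoint CB * CB) (lp.single 2 β h)) (lp.single 2 α m) := by
    intro r hr α β h m
    rw [mul_apply_eq_comp, adjoint_inner_left, eB, hPB r hr α β h m]
    rfl
  have hset : ∀ c : ℝ, 1 ≤ c → (PoissonSandwich PA PB c ↔
      max ‖CA * Ring.inverse CB‖ ‖CB * Ring.inverse CA‖ ≤ c) := by
    intro c hc
    have hc0 : (0 : ℝ) < c ^ 2 := by positivity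
    have h1 := fam_pos (fun r => PA r - ((c : ℂ) ^ 2)⁻¹ • PB r)
      (adjoint CA * CA - ((c : ℂ) ^ 2)⁻¹ • (adjoint CB * CB)) (by
        intro r hr α β h m
        rw [sub_apply, sub_apply, smul_apply, smul_apply, inner_sub_left, inner_sub_left,
          inner_smul_left, inner_smul_left, fA r hr, fB r hr]
        ring)
    have h2 := fam_pos (fun r => ((c : ℂ) ^ 2) • PB r - PA r)
      (((c : ℂ) ^ 2) • (adjoint CB * CB) - adjoint CA * CA) (by
        intro r hr α β h m
        rw [sub_apply, sub_apply, smul_apply, smul_apply, inner_sub_left, inner_sub_left,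
          inner_smul_left, inner_smul_left, fA r hr, fB r hr]
        ring)
    have h3 : PoissonSandwich PA PB c ↔
        (adjoint CA * CA - ((c : ℂ) ^ 2)⁻¹ • (adjoint CB * CB)).IsPositive ∧
        (((c : ℂ) ^ 2) • (adjoint CB * CB) - adjoint CA * CA).IsPositive := by
      rw [← h1, ← h2]
      unfold PoissonSandwich opLE
      exact ⟨fun h => ⟨fun r hr => (h r hr).1, fun r hr => (h r hr).2⟩,
        fun h r hr => ⟨h.1 r hr, h.2 r hr⟩⟩
    have h4 : (adjoint CA * CA - ((c : ℂ) ^ 2)⁻¹ • (adjoint CB * CB)).IsPositive ↔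
        ∀ x, ‖CB x‖ ^ 2 ≤ c ^ 2 * ‖CA x‖ ^ 2 := by
      have := sandwich_pos CB CA 1 (c ^ 2)⁻¹
      rw [Complex.ofReal_one, one_smul, Complex.ofReal_inv, Complex.ofReal_pow] at this
      rw [this]
      refine forall_congr' fun x => ?_
      rw [inv_mul_le_iff₀ hc0, one_mul]
    have h5 := sandwich_pos CA CB (c ^ 2) 1
    rw [Complex.ofReal_one, one_smul, Complex.ofReal_pow] at h5
    simp only [one_mul] at h5
    rw [h3, h4, h5, max_le_iff, norm_char CA CB uB c hc, norm_char CB CA uA c hc, and_comm]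
  set M := max ‖CA * Ring.inverse CB‖ ‖CB * Ring.inverse CA‖ with hM
  have hS : {c : ℝ | 1 ≤ c ∧ PoissonSandwich PA PB c} = Set.Ici (max 1 M) := by
    ext c
    simp only [Set.mem_ofPred_eq, Set.mem_Ici, max_le_iff]
    exact and_congr_right fun h => hset c h
  refine ⟨⟨max 1 M, le_max_left _ _, (hset _ (le_max_left _ _)).2 (le_max_right _ _)⟩, ?_⟩
  unfold deltaP
  rw [hS, csInf_Ici]
  rcases subsingleton_or_nontrivial (L2 k H) with hsub | hnt
  · have h0 : ∀ T : L2 k H →L[ℂ] L2 k H, ‖T‖ = 0 := fun T => by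
      rw [show T = 0 from ContinuousLinearMap.ext fun x => Subsingleton.elim _ _, norm_zero]
    have hM0 : M = 0 := by rw [hM, h0, h0, max_self]
    rw [hM0]
    simp
  · congr 1
    apply max_eq_right
    by_contra hlt
    push Not at hlt
    have h1 : (CA * Ring.inverse CB) * (CB * Ring.inverse CA) = 1 := by
      rw [mul_assoc, ← mul_assoc (Ring.inverse CB), Ring.inverse_mul_cancel _ uB, one_mul,
        Ring.mul_inverse_cancel _ uA]
    have h2 := norm_mul_le (CA * Ring.inverse CB) (CB * Ring.inverse CA)
    rw [h1, norm_one] at h2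
    have h3 : ‖CA * Ring.inverse CB‖ < 1 := (le_max_left _ _).trans_lt hlt
    have h4 : ‖CB * Ring.inverse CA‖ < 1 := (le_max_right _ _).trans_lt hlt
    nlinarith [norm_nonneg (CA * Ring.inverse CB), norm_nonneg (CB * Ring.inverse CA)]

end
end

section
/- Let A = (A_1,…,A_k) and B = (B_1,…,B_k) be k-tuples of pairwise commuting contractions on a complex Hilbert space H. Then for every i ∈ {1,…,k}, ‖A_i − B_i‖ ≤ sup_{r∈[0,1)} ‖𝒫(R, rA) − 𝒫(R, rB)‖. -/
open ContinuousLinearMap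

noncomputable section

variable {k : ℕ} {H : Type*} [NormedAddCommGroup H] [InnerProductSpace ℂ H] [CompleteSpace H]

open scoped ENNReal

theorem aux_prod {M : Type*} [Monoid M] : ∀ (n : ℕ) (x : Fin n → M) (i : Fin n),
    (List.ofFn fun j => x j ^ (if j = i then 1 else 0 : ℕ)).prod = x i := by
  intro n
  induction n with
  | zero => intro x i; exact i.elim0
  | succ n ih =>
    intro x i
    rw [List.ofFn_succ, List.prod_cons]
    refine Fin.cases ?_ (fun i => ?_) i
    · simp [Fin.succ_ne_zero]
    · have := ih (fun j => x j.succ) i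
      simp only [Fin.succ_inj]
      rw [this]
      simp [(Fin.succ_ne_zero i).symm]

theorem aux_one {M : Type*} [Monoid M] (n : ℕ) :
    (List.ofFn fun _ : Fin n => (1 : M)).prod = 1 := by
  simp

theorem aux_kernel (X : Fin k → (H →L[ℂ] H)) (r : ℝ) (P : L2 k H →L[ℂ] L2 k H)
    (hP : IsPoissonKernel X r P) (i : Fin k) (h l : H) :
    inner (𝕜 := ℂ) (P (lp.single 2 (fun j => if j = i then 1 else 0) h)) (lp.single 2 0 l) =
      (r : ℂ) * inner (𝕜 := ℂ) (X i h) l := by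
  rw [hP]
  have h1 : (∑ j : Fin k, (((0 : Fin k → ℕ) j - (if j = i then 1 else 0)) +
      ((if j = i then 1 else 0) - (0 : Fin k → ℕ) j))) = 1 := by
    simp
  rw [h1]
  simp only [Pi.zero_apply, Nat.zero_sub, pow_zero, Nat.sub_zero, aux_one, mul_one, pow_one]
  rw [aux_prod]

theorem aux_bound (A B : Fin k → (H →L[ℂ] H)) (r : ℝ) (hr : 0 ≤ r) (P Q : L2 k H →L[ℂ] L2 k H)
    (hP : IsPoissonKernel A r P) (hQ : IsPoissonKernel B r Q) (i : Fin k) :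
    r * ‖A i - B i‖ ≤ ‖P - Q‖ := by
  have : ‖(r : ℂ) • (A i - B i)‖ ≤ ‖P - Q‖ := by
    refine ContinuousLinearMap.opNorm_le_bound _ (norm_nonneg _) fun h => ?_
    set l := (A i - B i) h with hl
    have e : inner (𝕜 := ℂ) ((P - Q) (lp.single 2 (fun j => if j = i then 1 else 0) h))
        (lp.single 2 0 l) = (r : ℂ) * inner (𝕜 := ℂ) l l := by
      rw [ContinuousLinearMap.sub_apply, inner_sub_left, aux_kernel A r P hP,
        aux_kernel B r Q hQ, ← mul_sub, ← inner_sub_left, ← ContinuousLinearMap.sub_apply]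
    have b := norm_inner_le_norm (𝕜 := ℂ)
      ((P - Q) (lp.single 2 (fun j => if j = i then 1 else 0) h)) (lp.single 2 0 l)
    rw [e, norm_mul, Complex.norm_real, Real.norm_of_nonneg hr, inner_self_eq_norm_sq_to_K,
      lp.norm_single (by norm_num)] at b
    have c := (P - Q).le_opNorm (lp.single 2 (fun j => if j = i then 1 else 0) h)
    rw [lp.norm_single (by norm_num)] at c
    have d : ‖((r : ℂ) • (A i - B i)) h‖ = r * ‖l‖ := by
      rw [ContinuousLinearMap.smul_apply, norm_smul, Complex.norm_real, Real.norm_of_nonneg hr]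
    rw [d]
    rcases (norm_nonneg l).eq_or_lt with h0 | h0
    · rw [← h0]; simp; positivity
    · have b' : r * ‖l‖ ^ 2 ≤ ‖(P - Q) (lp.single 2 (fun j => if j = i then 1 else 0) h)‖ * ‖l‖ := by
        simpa using b
      refine le_trans ?_ c
      nlinarith
  rwa [norm_smul, Complex.norm_real, Real.norm_of_nonneg hr] at this

/-- For `k`-tuples `A`, `B` of pairwise commuting contractions,
`‖A_i - B_i‖ ≤ sup_{r ∈ [0,1)} ‖𝒫(R, rA) - 𝒫(R, rB)‖` for every `i` (the supremum being
taken in `ℝ≥0∞`). -/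
theorem stmt_11 (hk : 1 ≤ k) (A B : Fin k → (H →L[ℂ] H))
    (hAco : ∀ i j, Commute (A i) (A j)) (hA1 : ∀ i, ‖A i‖ ≤ 1)
    (hBco : ∀ i j, Commute (B i) (B j)) (hB1 : ∀ i, ‖B i‖ ≤ 1)
    (PA PB : ℝ → (L2 k H →L[ℂ] L2 k H))
    (hPA : ∀ r ∈ Set.Ico (0 : ℝ) 1, IsPoissonKernel A r (PA r))
    (hPB : ∀ r ∈ Set.Ico (0 : ℝ) 1, IsPoissonKernel B r (PB r)) :
    ∀ i, (‖A i - B i‖₊ : ℝ≥0∞) ≤ ⨆ r ∈ Set.Ico (0 : ℝ) 1, (‖PA r - PB r‖₊ : ℝ≥0∞) := by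
  intro i
  set M := ⨆ r ∈ Set.Ico (0 : ℝ) 1, (‖PA r - PB r‖₊ : ℝ≥0∞) with hM
  have key : ∀ r ∈ Set.Ico (0 : ℝ) 1, (‖PA r - PB r‖₊ : ℝ≥0∞) ≤ M := fun r hr =>
    le_iSup₂_of_le (f := fun (r : ℝ) (_ : r ∈ Set.Ico (0 : ℝ) 1) => (‖PA r - PB r‖₊ : ℝ≥0∞))
      r hr le_rfl
  rcases eq_or_ne M ⊤ with hT | hT
  · rw [hT]; exact le_top
  clear_value M
  lift M to NNReal using hT
  rw [ENNReal.coe_le_coe, ← NNReal.coe_le_coe, coe_nnnorm]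
  have step : ∀ r ∈ Set.Ico (0 : ℝ) 1, r * ‖A i - B i‖ ≤ M := fun r hr =>
    (aux_bound A B r hr.1 _ _ (hPA r hr) (hPB r hr) i).trans
      (by simpa using NNReal.coe_le_coe.2 (ENNReal.coe_le_coe.1 (key r hr)))
  by_contra! hc
  have hM0 : (0 : ℝ) ≤ M := M.2
  have hx : 0 < ‖A i - B i‖ := hM0.trans_lt hc
  obtain ⟨y, hy1, hy2⟩ := exists_between hc
  have := step (y / ‖A i - B i‖) ⟨by have := hM0.trans hy1.le; positivity, (div_lt_one hx).2 hy2⟩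
  rw [div_mul_cancel₀ _ hx.ne'] at this
  linarith

end
end

section
/- Let A, B ∈ D^k(H). Then 𝒫(R, A) and 𝒫(R, B) are positive invertible operators, A and B are Poisson equivalent, and (1/2)·ln( 1 + d_P(A,B) / max{ sup_{r∈[0,1)}‖𝒫(R,rA)‖, sup_{r∈[0,1)}‖𝒫(R,rB)‖ } ) ≤ δ_P(A,B) ≤ (1/2)·ln( 1 + max{ ‖𝒫(R,A)^{-1}‖, ‖𝒫(R,B)^{-1}‖ }·d_P(A,B) ). -/
open ContinuousLinearMap

noncomputable section

variable {k : ℕ} {H : Type*} [NormedAddCommGroup H] [InnerProductSpace ℂ H] [CompleteSpace H]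

set_option linter.unusedSectionVars false

theorem aux_one_le {A : Type*} [CStarAlgebra A] [PartialOrder A] [StarOrderedRing A]
    (a : A) (ha : 0 ≤ a) (hu : IsUnit a) : (1 : A) ≤ ‖Ring.inverse a‖ • a := by
  obtain ⟨u, rfl⟩ := hu
  rw [Ring.inverse_unit]
  have hi : (0 : A) ≤ ↑u⁻¹ := CFC.inv_nonneg_of_nonneg u ha
  have h1 : (↑u⁻¹ : A) ≤ algebraMap ℝ A ‖(↑u⁻¹ : A)‖ :=
    IsSelfAdjoint.le_algebraMap_norm_self (IsSelfAdjoint.of_nonneg hi)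
  have hs := CFC.sqrt_nonneg (u : A)
  have hss : CFC.sqrt (u : A) * CFC.sqrt (u : A) = u := CFC.sqrt_mul_sqrt_self (u : A) ha
  have hc : Commute (CFC.sqrt (u : A)) (u : A) := by
    rw [Commute, SemiconjBy]
    generalize CFC.sqrt (u : A) = s at hss
    rw [← hss, mul_assoc]
  have hc' : Commute (CFC.sqrt (u : A)) (↑u⁻¹ : A) := hc.units_inv_right
  have h2 := conjugate_le_conjugate_of_nonneg h1 hs
  rw [hc'.eq, mul_assoc, hss, Units.inv_mul, Algebra.algebraMap_eq_smul_one, mul_smul_comm,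
    mul_one, smul_mul_assoc, hss] at h2
  exact h2

theorem aux_norm_le {A : Type*} [CStarAlgebra A] [PartialOrder A] [StarOrderedRing A]
    (a : A) (M : ℝ) (hM : 0 ≤ M) (h1 : a ≤ M • (1 : A)) (h2 : -a ≤ M • (1 : A)) : ‖a‖ ≤ M := by
  rw [← Algebra.algebraMap_eq_smul_one] at h1 h2
  have hsa : IsSelfAdjoint a := by
    have h3 : IsSelfAdjoint (algebraMap ℝ A M - a) := IsSelfAdjoint.of_nonneg (sub_nonneg.2 h1)
    have h4 : IsSelfAdjoint (algebraMap ℝ A M) := IsSelfAdjoint.algebraMap _ (by simp [IsSelfAdjoint])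
    simpa using h4.sub h3
  rcases subsingleton_or_nontrivial A with _ | _
  · rw [Subsingleton.elim a 0, norm_zero]; exact hM
  rcases CStarAlgebra.norm_or_neg_norm_mem_spectrum hsa with h | h
  · exact (le_algebraMap_iff_spectrum_le hsa).1 h1 _ h
  · have := (algebraMap_le_iff_le_spectrum (r := -M) hsa).1 (by rw [map_neg]; exact neg_le.1 h2) _ h
    linarith

theorem aux_le_norm {A : Type*} [CStarAlgebra A] [PartialOrder A] [StarOrderedRing A]
    (a : A) (ha : IsSelfAdjoint a) : a ≤ ‖a‖ • (1 : A) := by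
  rw [← Algebra.algebraMap_eq_smul_one]
  exact ha.le_algebraMap_norm_self

/-- matrix entries of an operator -/
def HasKer (Q : L2 k H →L[ℂ] L2 k H) (K : (Fin k → ℕ) → (Fin k → ℕ) → (H →L[ℂ] H)) : Prop :=
  ∀ α β h, (Q (lp.single 2 β h)) α = K α β h

/-- full product -/
def XX (X : Fin k → (H →L[ℂ] H)) (γ : Fin k → ℕ) : H →L[ℂ] H :=
  (List.ofFn fun i => X i ^ γ i).prod

theorem IsPoissonKernel.hasKer {X : Fin k → (H →L[ℂ] H)} {r : ℝ} {P : L2 k H →L[ℂ] L2 k H}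
    (hP : IsPoissonKernel X r P) :
    HasKer P (fun α β => ((r ^ (∑ i, ((α i - β i) + (β i - α i))) : ℝ) : ℂ) •
      (XX X (β - α) * XX (fun i => adjoint (X i)) (α - β))) := by
  intro α β h
  refine ext_inner_right ℂ fun l => ?_
  have := hP α β h l
  rw [lp.inner_single_right] at this
  rw [this, _root_.smul_apply, inner_smul_left, Complex.conj_ofReal]
  rfl

theorem XX_zero (X : Fin k → (H →L[ℂ] H)) : XX X 0 = 1 := by
  simp [XX]

theorem XX_add_single {n : ℕ} (X : Fin n → (H →L[ℂ] H)) (hX : ∀ i j, Commute (X i) (X j))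
    (γ : Fin n → ℕ) (j : Fin n) :
    XX X (γ + Pi.single j 1) = X j * XX X γ := by
  induction n with
  | zero => exact j.elim0
  | succ n ih =>
    have ih' := ih (fun i => X i.succ) (fun i j => hX _ _) (fun i => γ i.succ)
    simp only [XX, List.ofFn_succ, List.prod_cons] at ih' ⊢
    refine Fin.cases ?_ (fun j => ?_) j
    · simp [pow_succ', mul_assoc, Pi.single_apply]
    · have := ih' j
      have e : (fun i : Fin n => (X i.succ) ^ ((γ + Pi.single j.succ 1 : Fin (n+1) → ℕ) i.succ)) =
          fun i : Fin n => (X i.succ) ^ (((fun i => γ i.succ) + Pi.single j 1 : Fin n → ℕ) i) := by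
        funext i; simp [Pi.single_apply]
      rw [e, this]
      have e0 : (γ + Pi.single j.succ 1 : Fin (n+1) → ℕ) 0 = γ 0 := by simp [Pi.single_apply]
      rw [e0, ← mul_assoc, ← mul_assoc, ((hX 0 j.succ).pow_left (γ 0)).eq]

theorem XX_commute {n : ℕ} (X : Fin n → (H →L[ℂ] H)) (hX : ∀ i j, Commute (X i) (X j))
    (γ : Fin n → ℕ) (j : Fin n) : Commute (X j) (XX X γ) := by
  apply Commute.list_prod_right
  intro x hx
  rw [List.mem_ofFn] at hx
  obtain ⟨i, rfl⟩ := hx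
  exact (hX j i).pow_right _

/-- backward weighted shift -/
def bs (j : Fin k) (Y : H →L[ℂ] H) : L2 k H →L[ℂ] L2 k H :=
  LinearMap.mkContinuous
    { toFun := fun f => ⟨fun α => Y (f (α + Pi.single j 1)), by
        refine memℓp_gen ?_
        have hf := (lp.memℓp f).summable (by norm_num : 0 < (2 : ENNReal).toReal)
        have hinj : Function.Injective (fun α : Fin k → ℕ => α + Pi.single j 1) :=
          add_left_injective _
        have := (hf.comp_injective hinj).mul_left (‖Y‖ ^ (2 : ENNReal).toReal)
        refine Summable.of_nonneg_of_le (fun _ => by positivity) (fun α => ?_) this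
        simp only [Function.comp]
        rw [← Real.mul_rpow (norm_nonneg _) (norm_nonneg _)]
        exact Real.rpow_le_rpow (norm_nonneg _) (Y.le_opNorm _) (by norm_num)⟩
      map_add' := fun f g => by ext α; exact map_add Y _ _
      map_smul' := fun c f => by ext α; exact map_smul Y _ _ }
    ‖Y‖ (fun f => by
      have h2 : 0 < (2 : ENNReal).toReal := by norm_num
      refine lp.norm_le_of_tsum_le h2 (by positivity) ?_
      have hf := (lp.memℓp f).summable h2
      have hinj : Function.Injective (fun α : Fin k → ℕ => α + Pi.single j 1) :=
        add_left_injective _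
      have hs := (hf.comp_injective hinj).mul_left (‖Y‖ ^ (2 : ENNReal).toReal)
      have hle : ∀ α : Fin k → ℕ, ‖Y (f (α + Pi.single j 1))‖ ^ (2 : ENNReal).toReal ≤
          ‖Y‖ ^ (2 : ENNReal).toReal * ‖f (α + Pi.single j 1)‖ ^ (2 : ENNReal).toReal := fun α => by
        rw [← Real.mul_rpow (norm_nonneg _) (norm_nonneg _)]
        exact Real.rpow_le_rpow (norm_nonneg _) (Y.le_opNorm _) (by norm_num)
      have hs' := Summable.of_nonneg_of_le (fun _ => by positivity) hle hs
      rw [Real.mul_rpow (norm_nonneg _) (norm_nonneg _), lp.norm_rpow_eq_tsum h2 f]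
      refine (hs'.tsum_le_tsum hle hs).trans ?_
      rw [tsum_mul_left]
      refine mul_le_mul_of_nonneg_left ?_ (by positivity)
      exact Summable.tsum_le_tsum_of_inj _ hinj (fun _ _ => by positivity) (fun _ => le_rfl)
        (hf.comp_injective hinj) hf)

theorem bs_apply (j : Fin k) (Y : H →L[ℂ] H) (f : L2 k H) (α : Fin k → ℕ) :
    (bs j Y f) α = Y (f (α + Pi.single j 1)) := rfl

theorem bs_norm (j : Fin k) (Y : H →L[ℂ] H) : ‖bs j Y‖ ≤ ‖Y‖ :=
  LinearMap.mkContinuous_norm_le _ (norm_nonneg _) _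

theorem bs_adjoint_single (j : Fin k) (Y : H →L[ℂ] H) (β : Fin k → ℕ) (h : H) :
    adjoint (bs j Y) (lp.single 2 β h) = lp.single 2 (β + Pi.single j 1) (adjoint Y h) := by
  refine ext_inner_right ℂ fun f => ?_
  rw [adjoint_inner_left, lp.inner_single_left, lp.inner_single_left, bs_apply,
    adjoint_inner_left]

/-- the factor `1 - R_j^* ⊗ X_j` -/
def NN (X : Fin k → (H →L[ℂ] H)) (j : Fin k) : L2 k H →L[ℂ] L2 k H := 1 - bs j (X j)

theorem NN_unit (X : Fin k → (H →L[ℂ] H)) (hX : ∀ i, ‖X i‖ < 1) (j : Fin k) :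
    IsUnit (NN X j) := isUnit_one_sub_of_norm_lt_one ((bs_norm _ _).trans_lt (hX j))

theorem NN_conj_ker (X : Fin k → (H →L[ℂ] H)) (j : Fin k) (Q : L2 k H →L[ℂ] L2 k H)
    (K : (Fin k → ℕ) → (Fin k → ℕ) → (H →L[ℂ] H)) (hQ : HasKer Q K) :
    HasKer (NN X j * Q * adjoint (NN X j)) (fun α β => K α β - X j * K (α + Pi.single j 1) β
      - K α (β + Pi.single j 1) * adjoint (X j)
      + X j * K (α + Pi.single j 1) (β + Pi.single j 1) * adjoint (X j)) := by
  intro α β h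
  have e1 : adjoint (NN X j) (lp.single 2 β h) =
      lp.single 2 β h - lp.single 2 (β + Pi.single j 1) (adjoint (X j) h) := by
    rw [NN, map_sub, _root_.sub_apply, bs_adjoint_single]
    congr 1
    rw [← ContinuousLinearMap.star_eq_adjoint, star_one]; rfl
  rw [mul_apply_eq_comp, e1, mul_apply_eq_comp, map_sub]
  set u := Q (lp.single 2 β h) with hu
  set v := Q (lp.single 2 (β + Pi.single j 1) (adjoint (X j) h)) with hv
  have e2 : (NN X j (u - v)) α = (u α - v α) - X j (u (α + Pi.single j 1) - v (α + Pi.single j 1)) := by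
    rw [NN, _root_.sub_apply, lp.coeFn_sub, Pi.sub_apply, bs_apply]; rfl
  rw [e2, hu, hv, hQ, hQ, hQ, hQ]
  simp only [_root_.sub_apply, _root_.add_apply,
    mul_apply_eq_comp, map_sub]
  abel

/-- partial defect -/
def pdef (X : Fin k → (H →L[ℂ] H)) : List (Fin k) → (H →L[ℂ] H)
  | [] => 1
  | j :: L => pdef X L - X j * pdef X L * adjoint (X j)

/-- partial conjugation -/
def pcj (X : Fin k → (H →L[ℂ] H)) (P : L2 k H →L[ℂ] L2 k H) : List (Fin k) → (L2 k H →L[ℂ] L2 k H)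
  | [] => P
  | j :: L => NN X j * pcj X P L * adjoint (NN X j)

theorem pdef_eq (X : Fin k → (H →L[ℂ] H)) : pdef X (List.finRange k) = defect X := by
  rw [defect, List.ofFn_eq_map]
  generalize List.finRange k = L
  induction L with
  | nil => rfl
  | cons j L ih => simp only [pdef, List.map_cons, List.foldr_cons, Function.comp, ih]

open Classical in
theorem pcj_ker (X : Fin k → (H →L[ℂ] H)) (hX : ∀ i j, Commute (X i) (X j))
    (P : L2 k H →L[ℂ] L2 k H)
    (hP : IsPoissonKernel X 1 P) (L : List (Fin k)) (hL : L.Nodup) :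
    HasKer (pcj X P L) (fun α β => if (∀ i ∈ L, α i = β i) then
      XX X (β - α) * pdef X L * XX (fun i => adjoint (X i)) (α - β) else 0) := by
  induction L with
  | nil => 
    have := hP.hasKer
    simpa [pcj, pdef] using this
  | cons j L ih =>
    rw [List.nodup_cons] at hL
    have hj := hL.1
    have hX' : ∀ i j, Commute (adjoint (X i)) (adjoint (X j)) := fun i j => by
      simpa [← ContinuousLinearMap.star_eq_adjoint] using (hX i j).star_star
    intro α β h
    rw [pcj, NN_conj_ker X j _ _ (ih hL.2) α β h]
    congr 1
    have hadd : ∀ (γ : Fin k → ℕ) i, i ∈ L → (γ + Pi.single j 1 : Fin k → ℕ) i = γ i := by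
      intro γ i hi
      have : i ≠ j := fun h => hj (h ▸ hi)
      simp [this]
    have c1 : (∀ i ∈ L, (α + Pi.single j 1 : Fin k → ℕ) i = β i) ↔ ∀ i ∈ L, α i = β i :=
      forall₂_congr fun i hi => by rw [hadd _ i hi]
    have c2 : (∀ i ∈ L, α i = (β + Pi.single j 1 : Fin k → ℕ) i) ↔ ∀ i ∈ L, α i = β i :=
      forall₂_congr fun i hi => by rw [hadd _ i hi]
    have c3 : (∀ i ∈ L, (α + Pi.single j 1 : Fin k → ℕ) i = (β + Pi.single j 1 : Fin k → ℕ) i) ↔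
        ∀ i ∈ L, α i = β i :=
      forall₂_congr fun i hi => by rw [hadd _ i hi, hadd _ i hi]
    beta_reduce
    rw [if_congr c1 rfl rfl, if_congr c2 rfl rfl, if_congr c3 rfl rfl,
      if_congr List.forall_mem_cons rfl rfl]
    by_cases hc : ∀ i ∈ L, α i = β i
    swap
    · simp [hc]
    simp only [if_pos hc, and_iff_left hc]
    have s1 : (β + Pi.single j 1 - (α + Pi.single j 1) : Fin k → ℕ) = β - α := by
      funext i; exact Nat.add_sub_add_right _ _ _
    have s2 : (α + Pi.single j 1 - (β + Pi.single j 1) : Fin k → ℕ) = α - β := by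
      funext i; exact Nat.add_sub_add_right _ _ _
    rw [s1, s2]
    have hcX := XX_commute X hX (β - α) j
    have hcX' := XX_commute _ hX' (α - β) j
    rcases lt_trichotomy (α j) (β j) with hlt | heq | hgt
    · rw [if_neg hlt.ne]
      have t1 : (β - α : Fin k → ℕ) = (β - (α + Pi.single j 1)) + Pi.single j 1 := by
        funext i
        by_cases hi : i = j
        · subst hi; simp; omega
        · simp [hi]
      have t2 : (α + Pi.single j 1 - β : Fin k → ℕ) = α - β := by
        funext i
        by_cases hi : i = j
        · subst hi; simp; omega
        · simp [hi]
      have t3 : (β + Pi.single j 1 - α : Fin k → ℕ) = (β - α) + Pi.single j 1 := by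
        funext i
        by_cases hi : i = j
        · subst hi; simp; omega
        · simp [hi]
      have t4 : (α - (β + Pi.single j 1) : Fin k → ℕ) = α - β := by
        funext i
        by_cases hi : i = j
        · subst hi; simp; omega
        · simp [hi]
      have e : XX X (β - α) = X j * XX X (β - (α + Pi.single j 1)) := by
        conv_lhs => rw [t1]
        rw [XX_add_single X hX]
      rw [t2, t3, t4, XX_add_single X hX, e]
      simp only [mul_assoc]; abel
    · rw [if_pos heq]
      have t1 : (β - (α + Pi.single j 1) : Fin k → ℕ) = β - α := by
        funext i
        by_cases hi : i = j
        · subst hi; simp; omega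
        · simp [hi]
      have t2 : (α + Pi.single j 1 - β : Fin k → ℕ) = α - β + Pi.single j 1 := by
        funext i
        by_cases hi : i = j
        · subst hi; simp; omega
        · simp [hi]
      have t3 : (β + Pi.single j 1 - α : Fin k → ℕ) = (β - α) + Pi.single j 1 := by
        funext i
        by_cases hi : i = j
        · subst hi; simp; omega
        · simp [hi]
      have t4 : (α - (β + Pi.single j 1) : Fin k → ℕ) = α - β := by
        funext i
        by_cases hi : i = j
        · subst hi; simp; omega
        · simp [hi]
      rw [t1, t2, t3, t4, XX_add_single X hX, XX_add_single _ hX', pdef]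
      simp only [mul_sub, sub_mul]
      have e1 : X j * (XX X (β - α) * pdef X L * (adjoint (X j) * XX (fun i => adjoint (X i)) (α - β)))
        = XX X (β - α) * (X j * pdef X L * adjoint (X j)) * XX (fun i => adjoint (X i)) (α - β) := by
        simp only [← mul_assoc]; rw [hcX.eq]
      have e2 : X j * XX X (β - α) * pdef X L * XX (fun i => adjoint (X i)) (α - β) * adjoint (X j)
        = XX X (β - α) * (X j * pdef X L * adjoint (X j)) * XX (fun i => adjoint (X i)) (α - β) := by
        rw [mul_assoc _ _ (adjoint (X j)), ← hcX'.eq]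
        simp only [← mul_assoc]; rw [hcX.eq]
      have e3 : X j * (XX X (β - α) * pdef X L * XX (fun i => adjoint (X i)) (α - β)) * adjoint (X j)
        = XX X (β - α) * (X j * pdef X L * adjoint (X j)) * XX (fun i => adjoint (X i)) (α - β) := by
        rw [← e2]; simp only [mul_assoc]
      rw [e1, e2, e3]; abel
    · rw [if_neg hgt.ne']
      have t1 : (α - β : Fin k → ℕ) = (α - (β + Pi.single j 1)) + Pi.single j 1 := by
        funext i
        by_cases hi : i = j
        · subst hi; simp; omega
        · simp [hi]
      have t2 : (β + Pi.single j 1 - α : Fin k → ℕ) = β - α := by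
        funext i
        by_cases hi : i = j
        · subst hi; simp; omega
        · simp [hi]
      have t3 : (α + Pi.single j 1 - β : Fin k → ℕ) = (α - β) + Pi.single j 1 := by
        funext i
        by_cases hi : i = j
        · subst hi; simp; omega
        · simp [hi]
      have t4 : (β - (α + Pi.single j 1) : Fin k → ℕ) = β - α := by
        funext i
        by_cases hi : i = j
        · subst hi; simp; omega
        · simp [hi]
      have e : XX (fun i => adjoint (X i)) (α - β) =
          XX (fun i => adjoint (X i)) (α - (β + Pi.single j 1)) * adjoint (X j) := by
        conv_lhs => rw [t1]
        rw [XX_add_single _ hX', (XX_commute _ hX' _ j).eq]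
      rw [t2, t3, t4, XX_add_single _ hX', hcX'.eq, e]
      simp only [mul_assoc]; abel
section
open scoped ComplexOrder

theorem pos_of_finite (Q : L2 k H →L[ℂ] L2 k H) (K : (Fin k → ℕ) → (Fin k → ℕ) → (H →L[ℂ] H))
    (hQ : HasKer Q K)
    (h : ∀ (s : Finset (Fin k → ℕ)) (g : (Fin k → ℕ) → H),
      0 ≤ ∑ α ∈ s, ∑ β ∈ s, inner ℂ (K α β (g β)) (g α)) : 0 ≤ Q := by
  have key : ∀ f : L2 k H, 0 ≤ inner ℂ (Q f) f := by
    intro f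
    have hs := lp.hasSum_single (E := fun _ : Fin k → ℕ => H) (p := 2) ENNReal.ofNat_ne_top f
    have hc : Continuous (fun x : L2 k H => inner ℂ (Q x) x) := by fun_prop
    have ht := (hc.tendsto f).comp hs
    have hcl : IsClosed {z : ℂ | 0 ≤ z} := isClosed_Ici
    refine hcl.mem_of_tendsto ht (Filter.Eventually.of_forall fun s => ?_)
    simp only [Set.mem_setOf_eq, Function.comp]
    refine (h s f).trans_eq ?_
    rw [inner_sum]
    refine Finset.sum_congr rfl fun α _ => ?_
    rw [map_sum, sum_inner]
    refine Finset.sum_congr rfl fun β _ => ?_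
    rw [lp.inner_single_right, hQ]
  rw [ContinuousLinearMap.nonneg_iff_isPositive, ContinuousLinearMap.isPositive_iff_complex]
  intro x
  have := key x
  rw [Complex.le_def] at this
  refine ⟨?_, this.1⟩
  apply Complex.ext
  · simp
  · simpa using this.2

theorem finite_of_pos (Q : L2 k H →L[ℂ] L2 k H) (K : (Fin k → ℕ) → (Fin k → ℕ) → (H →L[ℂ] H))
    (hQ : HasKer Q K) (h : 0 ≤ Q) (s : Finset (Fin k → ℕ)) (g : (Fin k → ℕ) → H) :
      0 ≤ ∑ α ∈ s, ∑ β ∈ s, inner ℂ (K α β (g β)) (g α) := by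
  rw [ContinuousLinearMap.nonneg_iff_isPositive] at h
  refine (h.inner_nonneg_left (∑ α ∈ s, lp.single 2 α (g α))).trans_eq ?_
  rw [inner_sum]
  refine Finset.sum_congr rfl fun α _ => ?_
  rw [map_sum, sum_inner]
  refine Finset.sum_congr rfl fun β _ => ?_
  rw [lp.inner_single_right, hQ]

theorem HasKer.smul_sub {Q : L2 k H →L[ℂ] L2 k H} {K : (Fin k → ℕ) → (Fin k → ℕ) → (H →L[ℂ] H)}
    (hQ : HasKer Q K) (a b : ℝ) :
    HasKer (a • Q + b • (1 : L2 k H →L[ℂ] L2 k H))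
      (fun α β => a • K α β + b • (if α = β then 1 else 0)) := by
  intro α β h
  have : (a • Q + b • (1 : L2 k H →L[ℂ] L2 k H)) (lp.single 2 β h) =
    a • Q (lp.single 2 β h) + b • lp.single 2 β h := rfl
  rw [this, lp.coeFn_add, Pi.add_apply, lp.coeFn_smul, lp.coeFn_smul, Pi.smul_apply, Pi.smul_apply,
    hQ, _root_.add_apply, _root_.smul_apply,
    _root_.smul_apply, lp.single_apply]
  by_cases hab : α = β
  · subst hab; simp
  · simp [hab]

theorem ar_aux (r : ℝ) (d m : ℕ) :
    ∑ p ∈ Finset.range (m + 1), (if p = 0 then 1 else 1 - r ^ 2) * (r ^ (m - p) * r ^ (m + d - p))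
      = r ^ d := by
  induction m with
  | zero => simp
  | succ m ih =>
    rw [Finset.sum_range_succ]
    have : ∀ p ∈ Finset.range (m + 1),
        (if p = 0 then 1 else 1 - r ^ 2) * (r ^ (m + 1 - p) * r ^ (m + 1 + d - p)) =
        r ^ 2 * ((if p = 0 then 1 else 1 - r ^ 2) * (r ^ (m - p) * r ^ (m + d - p))) := by
      intro p hp
      rw [Finset.mem_range] at hp
      have h1 : m + 1 - p = (m - p) + 1 := by omega
      have h2 : m + 1 + d - p = (m + d - p) + 1 := by omega
      rw [h1, h2]; ring
    rw [Finset.sum_congr rfl this, ← Finset.mul_sum, ih]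
    have h3 : m + 1 + d - (m + 1) = d := by omega
    rw [h3]; simp; ring

theorem ar_aux2 (r : ℝ) (N m n : ℕ) (hm : m < N) (hmn : m ≤ n) :
    ∑ p ∈ Finset.range N, (if p = 0 then 1 else 1 - r ^ 2) *
      ((if p ≤ m then r ^ (m - p) else 0) * (if p ≤ n then r ^ (n - p) else 0))
      = r ^ (n - m) := by
  obtain ⟨d, rfl⟩ := Nat.exists_eq_add_of_le hmn
  have h := ar_aux r d m
  rw [show m + d - m = d by omega, ← h]
  symm
  have hsub : Finset.range (m + 1) ⊆ Finset.range N := Finset.range_subset_range.2 hm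
  refine Finset.sum_subset_zero_on_sdiff hsub ?_ ?_
  · intro p hp
    simp only [Finset.mem_sdiff, Finset.mem_range] at hp
    rw [if_neg (show ¬ p ≤ m by omega)]; simp
  · intro p hp
    rw [Finset.mem_range] at hp
    rw [if_pos (show p ≤ m by omega), if_pos (show p ≤ m + d by omega)]

theorem ar_kernel (r : ℝ) (N m n : ℕ) (hm : m < N) (hn : n < N) :
    r ^ ((m - n) + (n - m)) = ∑ p ∈ Finset.range N, (if p = 0 then 1 else 1 - r ^ 2) *
      ((if p ≤ m then r ^ (m - p) else 0) * (if p ≤ n then r ^ (n - p) else 0)) := by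
  rcases le_total m n with h | h
  · rw [ar_aux2 r N m n hm h]; congr 1; omega
  · rw [show m - n + (n - m) = m - n by omega, ← ar_aux2 r N n m hn h]
    refine Finset.sum_congr rfl fun p _ => ?_
    ring

theorem schur_one (r : ℝ) (hr0 : 0 ≤ r) (hr1 : r ≤ 1) (s : Finset (Fin k → ℕ)) (j : Fin k)
    (M : (Fin k → ℕ) → (Fin k → ℕ) → ℂ)
    (hM : ∀ c : (Fin k → ℕ) → ℝ, 0 ≤ ∑ α ∈ s, ∑ β ∈ s, ((c α * c β : ℝ) : ℂ) * M α β)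
    (c : (Fin k → ℕ) → ℝ) :
    0 ≤ ∑ α ∈ s, ∑ β ∈ s, ((c α * c β : ℝ) : ℂ) *
      (((r ^ ((α j - β j) + (β j - α j)) : ℝ) : ℂ) * M α β) := by
  obtain ⟨N, hN⟩ : ∃ N, ∀ α ∈ s, α j < N :=
    ⟨s.sup (fun α => α j) + 1, fun α hα =>
      Nat.lt_succ_of_le (Finset.le_sup (f := fun α : Fin k → ℕ => α j) hα)⟩
  set w : ℕ → ℝ := fun p => if p = 0 then 1 else 1 - r ^ 2 with hw
  have hw0 : ∀ p, 0 ≤ w p := by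
    intro p; simp only [hw]; split_ifs
    · norm_num
    · nlinarith
  set u : ℕ → (Fin k → ℕ) → ℝ := fun p α => if p ≤ α j then r ^ (α j - p) else 0 with hu
  have e : ∑ α ∈ s, ∑ β ∈ s, ((c α * c β : ℝ) : ℂ) *
      (((r ^ ((α j - β j) + (β j - α j)) : ℝ) : ℂ) * M α β) =
      ∑ p ∈ Finset.range N, (w p : ℂ) *
        ∑ α ∈ s, ∑ β ∈ s, (((c α * u p α) * (c β * u p β) : ℝ) : ℂ) * M α β := by
    simp only [Finset.mul_sum]
    rw [Finset.sum_comm]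
    conv_rhs => rw [Finset.sum_comm]
    rw [Finset.sum_comm]
    refine Finset.sum_congr rfl fun α hα => ?_
    rw [Finset.sum_comm (s := Finset.range N)]
    refine Finset.sum_congr rfl fun β hβ => ?_
    rw [ar_kernel r N _ _ (hN α hα) (hN β hβ)]
    rw [Complex.ofReal_sum, Finset.sum_mul, Finset.mul_sum]
    refine Finset.sum_congr rfl fun p _ => ?_
    simp only [← hw, hu]
    push_cast
    ring
  rw [e]
  refine Finset.sum_nonneg fun p _ => mul_nonneg ?_ (hM fun α => c α * u p α)
  exact_mod_cast hw0 p

theorem schur_all (r : ℝ) (hr0 : 0 ≤ r) (hr1 : r ≤ 1) (s : Finset (Fin k → ℕ))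
    (M : (Fin k → ℕ) → (Fin k → ℕ) → ℂ)
    (hM : ∀ c : (Fin k → ℕ) → ℝ, 0 ≤ ∑ α ∈ s, ∑ β ∈ s, ((c α * c β : ℝ) : ℂ) * M α β)
    (t : Finset (Fin k)) (c : (Fin k → ℕ) → ℝ) :
    0 ≤ ∑ α ∈ s, ∑ β ∈ s, ((c α * c β : ℝ) : ℂ) *
      (((r ^ (∑ j ∈ t, ((α j - β j) + (β j - α j))) : ℝ) : ℂ) * M α β) := by
  induction t using Finset.induction_on generalizing c with
  | empty => simpa using hM c
  | insert j t hj ih =>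
    have := schur_one r hr0 hr1 s j _ ih c
    refine this.trans_eq ?_
    refine Finset.sum_congr rfl fun α _ => Finset.sum_congr rfl fun β _ => ?_
    rw [Finset.sum_insert hj, pow_add r (_ + _)]
    push_cast
    ring

theorem schur_pos (r : ℝ) (hr0 : 0 ≤ r) (hr1 : r ≤ 1) (Q Q' : L2 k H →L[ℂ] L2 k H)
    (K K' : (Fin k → ℕ) → (Fin k → ℕ) → (H →L[ℂ] H)) (hQ : HasKer Q K) (hQ' : HasKer Q' K')
    (hK : ∀ α β, K' α β = ((r ^ (∑ i, ((α i - β i) + (β i - α i))) : ℝ) : ℂ) • K α β)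
    (h : 0 ≤ Q) : 0 ≤ Q' := by
  refine pos_of_finite Q' K' hQ' fun s g => ?_
  have := schur_all r hr0 hr1 s (fun α β => inner ℂ (K α β (g β)) (g α)) (fun c => ?_)
    Finset.univ (fun _ => 1)
  · refine this.trans_eq ?_
    refine Finset.sum_congr rfl fun α _ => Finset.sum_congr rfl fun β _ => ?_
    rw [hK, _root_.smul_apply, inner_smul_left, Complex.conj_ofReal]
    simp
  · refine (finite_of_pos Q K hQ h s (fun α => (c α : ℂ) • g α)).trans_eq ?_
    refine Finset.sum_congr rfl fun α _ => Finset.sum_congr rfl fun β _ => ?_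
    rw [map_smul, inner_smul_left, inner_smul_right, Complex.conj_ofReal]
    push_cast
    ring

theorem schur_poisson (X : Fin k → (H →L[ℂ] H)) (P1 P : L2 k H →L[ℂ] L2 k H) (r : ℝ)
    (hr0 : 0 ≤ r) (hr1 : r ≤ 1) (h1 : IsPoissonKernel X 1 P1) (h : IsPoissonKernel X r P)
    (a b : ℝ) (hp : 0 ≤ a • P1 + b • (1 : L2 k H →L[ℂ] L2 k H)) :
    0 ≤ a • P + b • (1 : L2 k H →L[ℂ] L2 k H) := by
  refine schur_pos r hr0 hr1 _ _ _ _ (h1.hasKer.smul_sub a b) (h.hasKer.smul_sub a b) ?_ hp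
  intro α β
  rw [smul_add]
  congr 1
  · simp only [one_pow, Complex.ofReal_one, one_smul]
    rw [smul_comm]
  · by_cases hab : α = β
    · subst hab; simp
    · simp [hab]

theorem diag_pos (Q : L2 k H →L[ℂ] L2 k H) (Y : H →L[ℂ] H)
    (hQ : HasKer Q (fun α β => if α = β then Y else 0)) (hY : 0 ≤ Y) : 0 ≤ Q := by
  refine pos_of_finite Q _ hQ fun s g => ?_
  rw [ContinuousLinearMap.nonneg_iff_isPositive] at hY
  refine Finset.sum_nonneg fun α _ => Finset.sum_nonneg fun β _ => ?_
  by_cases hab : α = β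
  · subst hab; simpa using hY.inner_nonneg_left _
  · simp [hab]

theorem diag_unit (Q : L2 k H →L[ℂ] L2 k H) (Y : H →L[ℂ] H)
    (hQ : HasKer Q (fun α β => if α = β then Y else 0)) (hY : 0 ≤ Y) (hu : IsUnit Y) :
    IsUnit Q := by
  have h1 := aux_one_le Y hY hu
  set N := ‖Ring.inverse Y‖ with hN
  have hN0 : 0 ≤ N := norm_nonneg _
  have h2 : 0 ≤ (N + 1) • Y + (-1 : ℝ) • (1 : H →L[ℂ] H) := by
    have : (N + 1) • Y + (-1 : ℝ) • (1 : H →L[ℂ] H) = (N • Y - 1) + Y := by module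
    rw [this]; exact add_nonneg (sub_nonneg.2 h1 : (0 : H →L[ℂ] H) ≤ _) hY
  have h3 : 0 ≤ (N + 1) • Q + (-1 : ℝ) • (1 : L2 k H →L[ℂ] L2 k H) := by
    refine diag_pos _ _ ?_ h2
    have := hQ.smul_sub (N + 1) (-1)
    intro α β h
    rw [this α β h]
    by_cases hab : α = β
    · simp [hab]
    · simp [hab]
  have h4 : (1 : L2 k H →L[ℂ] L2 k H) ≤ (N + 1) • Q := by
    rw [← sub_nonneg]; convert h3 using 1; module
  have h5 : IsUnit ((N + 1) • Q) := CStarAlgebra.isUnit_of_le 1 h4 isStrictlyPositive_one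
  have h6 : Q = (N + 1)⁻¹ • ((N + 1) • Q) := by
    rw [smul_smul, inv_mul_cancel₀ (by positivity), one_smul]
  have h7 : Q = algebraMap ℝ (L2 k H →L[ℂ] L2 k H) (N + 1)⁻¹ * ((N + 1) • Q) := by
    rw [← Algebra.smul_def]; exact h6
  rw [h7]
  exact (IsUnit.map (algebraMap ℝ (L2 k H →L[ℂ] L2 k H))
    (IsUnit.mk0 _ (by positivity : (N + 1)⁻¹ ≠ 0))).mul h5

theorem poisson_pos (X : Fin k → (H →L[ℂ] H)) (hX : memPolydisk X) (P : L2 k H →L[ℂ] L2 k H)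
    (hP : IsPoissonKernel X 1 P) : 0 ≤ P ∧ IsUnit P := by
  obtain ⟨hc, hn, hd, hu⟩ := hX
  rw [← ContinuousLinearMap.nonneg_iff_isPositive] at hd
  have hk := pcj_ker X hc P hP (List.finRange k) (List.nodup_finRange k)
  have hk' : HasKer (pcj X P (List.finRange k)) (fun α β => if α = β then defect X else 0) := by
    intro α β h
    rw [hk α β h, pdef_eq]
    by_cases hab : α = β
    · subst hab; simp [XX_zero]
    · have : ¬ ∀ i ∈ List.finRange k, α i = β i := fun h => hab (funext fun i => h i (by simp))
      beta_reduce
      rw [if_neg this, if_neg hab]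
  have main : 0 ≤ pcj X P (List.finRange k) ∧ IsUnit (pcj X P (List.finRange k)) :=
    ⟨diag_pos _ _ hk' hd, diag_unit _ _ hk' hd hu⟩
  revert main
  generalize List.finRange k = L
  induction L with
  | nil => exact id
  | cons j L ih =>
    rintro ⟨h1, h2⟩
    apply ih
    obtain ⟨u, hu⟩ := NN_unit X hn j
    rw [pcj, ← hu, ← ContinuousLinearMap.star_eq_adjoint] at h1 h2
    have e : pcj X P L = (↑u⁻¹ : L2 k H →L[ℂ] L2 k H) * (↑u * pcj X P L * star (u : L2 k H →L[ℂ] L2 k H))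
        * star (↑u⁻¹ : L2 k H →L[ℂ] L2 k H) := by
      have : star (u : L2 k H →L[ℂ] L2 k H) * star (↑u⁻¹ : L2 k H →L[ℂ] L2 k H) = 1 := by
        rw [← star_mul]; simp
      rw [mul_assoc, mul_assoc, mul_assoc, this, mul_one, Units.inv_mul_cancel_left]
    constructor
    · rw [e]; exact star_right_conjugate_nonneg h1 _
    · rw [e]; exact (u⁻¹.isUnit.mul h2).mul u⁻¹.isUnit.star

end

theorem poisson_bounds (X : Fin k → (H →L[ℂ] H)) (P1 P : L2 k H →L[ℂ] L2 k H) (r : ℝ)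
    (hr : r ∈ Set.Ico (0 : ℝ) 1) (h1 : IsPoissonKernel X 1 P1) (h : IsPoissonKernel X r P)
    (h0 : 0 ≤ P1) (hu : IsUnit P1) :
    0 ≤ P ∧ ‖P‖ ≤ ‖P1‖ ∧ (1 : L2 k H →L[ℂ] L2 k H) ≤ ‖Ring.inverse P1‖ • P := by
  have hS := schur_poisson X P1 P r hr.1 hr.2.le h1 h
  have hp : 0 ≤ P := by
    have := hS 1 0 (by simpa using h0)
    simpa using this
  refine ⟨hp, ?_, ?_⟩
  · have h2 := aux_le_norm P1 (IsSelfAdjoint.of_nonneg h0)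
    have h3 := hS (-1) ‖P1‖ (by
      rw [← sub_nonneg] at h2
      convert h2 using 1; module)
    refine aux_norm_le P _ (norm_nonneg _) ?_ ?_
    · rw [← sub_nonneg]; convert h3 using 1; module
    · refine (neg_nonpos.2 hp).trans ?_
      exact h0.trans h2
  · have h2 := aux_one_le P1 h0 hu
    have h3 := hS ‖Ring.inverse P1‖ (-1) (by
      rw [← sub_nonneg] at h2
      convert h2 using 1; module)
    rw [← sub_nonneg]; convert h3 using 1; module

theorem opLE_iff {E : Type*} [NormedAddCommGroup E] [InnerProductSpace ℂ E] [CompleteSpace E]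
    (S T : E →L[ℂ] E) : opLE S T ↔ S ≤ T := Iff.rfl

theorem csmul_eq {E : Type*} [NormedAddCommGroup E] [InnerProductSpace ℂ E] [CompleteSpace E]
    (c : ℝ) (T : E →L[ℂ] E) : ((c : ℂ) ^ 2) • T = (c ^ 2) • T := by
  rw [← Complex.ofReal_pow]; exact Complex.coe_smul _ _

theorem csmul_inv_eq {E : Type*} [NormedAddCommGroup E] [InnerProductSpace ℂ E] [CompleteSpace E]
    (c : ℝ) (T : E →L[ℂ] E) : ((c : ℂ) ^ 2)⁻¹ • T = (c ^ 2)⁻¹ • T := by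
  rw [← Complex.ofReal_pow, ← Complex.ofReal_inv]; exact Complex.coe_smul _ _

theorem op_smul_nonneg {E : Type*} [NormedAddCommGroup E] [InnerProductSpace ℂ E] [CompleteSpace E]
    (c : ℝ) (hc : 0 ≤ c) (T : E →L[ℂ] E) (hT : 0 ≤ T) : 0 ≤ c • T := smul_nonneg hc hT

theorem op_smul_le {E : Type*} [NormedAddCommGroup E] [InnerProductSpace ℂ E] [CompleteSpace E]
    (c : ℝ) (hc : 0 ≤ c) (S T : E →L[ℂ] E) (hT : S ≤ T) : c • S ≤ c • T := by
  rw [← sub_nonneg, ← smul_sub]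
  exact op_smul_nonneg c hc _ (sub_nonneg.2 hT)

theorem op_inv_le_iff {E : Type*} [NormedAddCommGroup E] [InnerProductSpace ℂ E] [CompleteSpace E]
    (c : ℝ) (hc : 0 < c) (S T : E →L[ℂ] E) : c⁻¹ • S ≤ T ↔ S ≤ c • T := by
  refine ⟨fun h => ?_, fun h => ?_⟩
  · have := op_smul_le c hc.le _ _ h
    rwa [smul_smul, mul_inv_cancel₀ hc.ne', one_smul] at this
  · have := op_smul_le c⁻¹ (by positivity) _ _ h
    rwa [smul_smul, inv_mul_cancel₀ hc.ne', one_smul] at this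

theorem sandwich_iff (PA PB : ℝ → (L2 k H →L[ℂ] L2 k H)) (c : ℝ) (hc : 1 ≤ c) :
    PoissonSandwich PA PB c ↔ ∀ r ∈ Set.Ico (0 : ℝ) 1,
      PB r ≤ (c ^ 2) • PA r ∧ PA r ≤ (c ^ 2) • PB r := by
  unfold PoissonSandwich
  refine forall₂_congr fun r _ => ?_
  rw [opLE_iff, opLE_iff, csmul_eq, csmul_inv_eq]
  exact and_congr (op_inv_le_iff _ (by positivity) _ _) Iff.rfl

/-- one-sided domination from a difference bound -/
theorem dom_aux {E : Type*} [NormedAddCommGroup E] [InnerProductSpace ℂ E] [CompleteSpace E]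
    (S T : E →L[ℂ] E) (hS : 0 ≤ S) (hT : 0 ≤ T) (d N M : ℝ) (hd : ‖S - T‖ ≤ d) (hNM : N ≤ M)
    (h1 : (1 : E →L[ℂ] E) ≤ N • T) : S ≤ (1 + M * d) • T := by
  have hd0 : 0 ≤ d := (norm_nonneg _).trans hd
  have hsa : IsSelfAdjoint (S - T) := (IsSelfAdjoint.of_nonneg hS).sub (IsSelfAdjoint.of_nonneg hT)
  have e1 := aux_le_norm (S - T) hsa
  have e2 := op_smul_nonneg (d - ‖S - T‖) (sub_nonneg.2 hd) (1 : E →L[ℂ] E)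
    ((nonneg_iff_isPositive _).2 isPositive_one)
  have e3 := op_smul_nonneg d hd0 _ (sub_nonneg.2 h1)
  have e4 := op_smul_nonneg ((M - N) * d) (mul_nonneg (sub_nonneg.2 hNM) hd0) T hT
  rw [← sub_nonneg] at e1 ⊢
  have := add_nonneg (add_nonneg (add_nonneg e1 e2) e3) e4
  convert this using 1
  module

theorem diff_aux {E : Type*} [NormedAddCommGroup E] [InnerProductSpace ℂ E] [CompleteSpace E]
    (S T : E →L[ℂ] E) (hT : 0 ≤ T) (q M : ℝ) (hq : 1 ≤ q)
    (hM : ‖T‖ ≤ M) (h : S ≤ q • T) : S - T ≤ ((q - 1) * M) • (1 : E →L[ℂ] E) := by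
  have e1 := aux_le_norm T (IsSelfAdjoint.of_nonneg hT)
  have e2 := op_smul_nonneg (M - ‖T‖) (sub_nonneg.2 hM) (1 : E →L[ℂ] E)
    ((nonneg_iff_isPositive _).2 isPositive_one)
  rw [← sub_nonneg] at e1 h ⊢
  have e3 := op_smul_nonneg (q - 1) (sub_nonneg.2 hq) _ (add_nonneg e1 e2)
  have := add_nonneg h e3
  convert this using 1
  module

theorem final_aux (PA PB : ℝ → (L2 k H →L[ℂ] L2 k H)) (a b NA NB : ℝ)
    (hNA : 0 ≤ NA) (hNB : 0 ≤ NB)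
    (hA : ∀ r ∈ Set.Ico (0 : ℝ) 1, 0 ≤ PA r ∧ ‖PA r‖ ≤ a ∧
      (1 : L2 k H →L[ℂ] L2 k H) ≤ NA • PA r)
    (hB : ∀ r ∈ Set.Ico (0 : ℝ) 1, 0 ≤ PB r ∧ ‖PB r‖ ≤ b ∧
      (1 : L2 k H →L[ℂ] L2 k H) ≤ NB • PB r) :
    PoissonEquiv PA PB ∧
    (1 / 2) * Real.log (1 +
        (sSup {y : ℝ | ∃ r ∈ Set.Ico (0 : ℝ) 1, y = ‖PA r - PB r‖}) /
          max (sSup {y : ℝ | ∃ r ∈ Set.Ico (0 : ℝ) 1, y = ‖PA r‖})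
              (sSup {y : ℝ | ∃ r ∈ Set.Ico (0 : ℝ) 1, y = ‖PB r‖})) ≤ deltaP PA PB ∧
    deltaP PA PB ≤ (1 / 2) * Real.log (1 +
        max NA NB *
          sSup {y : ℝ | ∃ r ∈ Set.Ico (0 : ℝ) 1, y = ‖PA r - PB r‖}) := by
  set SD := {y : ℝ | ∃ r ∈ Set.Ico (0 : ℝ) 1, y = ‖PA r - PB r‖} with hSD
  set SA := {y : ℝ | ∃ r ∈ Set.Ico (0 : ℝ) 1, y = ‖PA r‖} with hSA
  set SB := {y : ℝ | ∃ r ∈ Set.Ico (0 : ℝ) 1, y = ‖PB r‖} with hSB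
  have bA : BddAbove SA := ⟨a, by rintro y ⟨r, hr, rfl⟩; exact (hA r hr).2.1⟩
  have bB : BddAbove SB := ⟨b, by rintro y ⟨r, hr, rfl⟩; exact (hB r hr).2.1⟩
  have bD : BddAbove SD := ⟨a + b, by
    rintro y ⟨r, hr, rfl⟩
    exact (norm_sub_le _ _).trans (add_le_add (hA r hr).2.1 (hB r hr).2.1)⟩
  have h00 : (0 : ℝ) ∈ Set.Ico (0 : ℝ) 1 := by simp
  have neD : SD.Nonempty := ⟨_, 0, h00, rfl⟩
  have leA : ∀ r ∈ Set.Ico (0 : ℝ) 1, ‖PA r‖ ≤ sSup SA := fun r hr => le_csSup bA ⟨r, hr, rfl⟩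
  have leB : ∀ r ∈ Set.Ico (0 : ℝ) 1, ‖PB r‖ ≤ sSup SB := fun r hr => le_csSup bB ⟨r, hr, rfl⟩
  have leD : ∀ r ∈ Set.Ico (0 : ℝ) 1, ‖PA r - PB r‖ ≤ sSup SD :=
    fun r hr => le_csSup bD ⟨r, hr, rfl⟩
  have hd0 : 0 ≤ sSup SD := (norm_nonneg _).trans (leD 0 h00)
  set d := sSup SD
  set N := max NA NB
  set M := max (sSup SA) (sSup SB) with hMdef
  have hN0 : 0 ≤ N := le_max_of_le_left hNA
  have hM0 : 0 ≤ M := le_max_of_le_left ((norm_nonneg _).trans (leA 0 h00))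
  have hq : 1 ≤ 1 + N * d := by nlinarith [mul_nonneg hN0 hd0]
  have hc1 : 1 ≤ √(1 + N * d) := Real.one_le_sqrt.2 hq
  have hsq : √(1 + N * d) ^ 2 = 1 + N * d := Real.sq_sqrt (by linarith)
  have hsand : PoissonSandwich PA PB √(1 + N * d) := by
    rw [sandwich_iff _ _ _ hc1, hsq]
    intro r hr
    obtain ⟨a1, a2, a3⟩ := hA r hr
    obtain ⟨b1, b2, b3⟩ := hB r hr
    exact ⟨dom_aux _ _ b1 a1 d NA N (by rw [norm_sub_rev]; exact leD r hr) (le_max_left _ _) a3,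
      dom_aux _ _ a1 b1 d NB N (leD r hr) (le_max_right _ _) b3⟩
  have hmem : √(1 + N * d) ∈ {c : ℝ | 1 ≤ c ∧ PoissonSandwich PA PB c} := ⟨hc1, hsand⟩
  have hbb : BddBelow {c : ℝ | 1 ≤ c ∧ PoissonSandwich PA PB c} := ⟨1, fun c hc => hc.1⟩
  have hinf1 : 1 ≤ sInf {c : ℝ | 1 ≤ c ∧ PoissonSandwich PA PB c} :=
    le_csInf ⟨_, hmem⟩ fun c hc => hc.1
  refine ⟨⟨_, hc1, hsand⟩, ?_, ?_⟩
  · have hlow : ∀ c ∈ {c : ℝ | 1 ≤ c ∧ PoissonSandwich PA PB c}, √(1 + d / M) ≤ c := by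
      rintro c ⟨hc, hs⟩
      rw [sandwich_iff _ _ _ hc] at hs
      have hcq : 1 ≤ c ^ 2 := one_le_pow₀ hc
      have hdM : d ≤ (c ^ 2 - 1) * M := by
        refine csSup_le neD ?_
        rintro y ⟨r, hr, rfl⟩
        refine aux_norm_le _ _ (mul_nonneg (by linarith) hM0) ?_ ?_
        · exact diff_aux _ _ (hB r hr).1 _ _ hcq ((leB r hr).trans (le_max_right _ _)) (hs r hr).2
        · rw [neg_sub]
          exact diff_aux _ _ (hA r hr).1 _ _ hcq ((leA r hr).trans (le_max_left _ _)) (hs r hr).1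
      refine Real.sqrt_le_iff.2 ⟨by linarith, ?_⟩
      have : d / M ≤ c ^ 2 - 1 := div_le_of_le_mul₀ hM0 (by linarith) hdM
      linarith
    have hdiv : 0 ≤ d / M := div_nonneg hd0 hM0
    have h1 := le_csInf ⟨_, hmem⟩ hlow
    have h2 := Real.log_le_log (Real.sqrt_pos.2 (by linarith)) h1
    rw [Real.log_sqrt (by linarith)] at h2
    rw [deltaP]
    linarith
  · have h1 := csInf_le hbb hmem
    have h2 := Real.log_le_log (by linarith) h1
    rw [Real.log_sqrt (by linarith)] at h2
    rw [deltaP]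
    linarith

/-- For `A, B ∈ D^k(H)`: `𝒫(R, A)` and `𝒫(R, B)` are positive invertible,
`A` and `B` are Poisson equivalent, and
`(1/2) ln(1 + d_P(A,B) / max{sup_r ‖𝒫(R,rA)‖, sup_r ‖𝒫(R,rB)‖}) ≤ δ_P(A,B)
 ≤ (1/2) ln(1 + max{‖𝒫(R,A)⁻¹‖, ‖𝒫(R,B)⁻¹‖} · d_P(A,B))`,
where `d_P(A,B) = sup_{r ∈ [0,1)} ‖𝒫(R,rA) - 𝒫(R,rB)‖`. -/
theorem stmt_12 (hk : 1 ≤ k) (A B : Fin k → (H →L[ℂ] H))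
    (hA : memPolydisk A) (hB : memPolydisk B)
    (PA PB : ℝ → (L2 k H →L[ℂ] L2 k H))
    (hPA : ∀ r ∈ Set.Ico (0 : ℝ) 1, IsPoissonKernel A r (PA r))
    (hPB : ∀ r ∈ Set.Ico (0 : ℝ) 1, IsPoissonKernel B r (PB r))
    (PA1 PB1 : L2 k H →L[ℂ] L2 k H)
    (hPA1 : IsPoissonKernel A 1 PA1) (hPB1 : IsPoissonKernel B 1 PB1) :
    (PA1.IsPositive ∧ IsUnit PA1) ∧ (PB1.IsPositive ∧ IsUnit PB1) ∧
    PoissonEquiv PA PB ∧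
    (1 / 2) * Real.log (1 +
        (sSup {y : ℝ | ∃ r ∈ Set.Ico (0 : ℝ) 1, y = ‖PA r - PB r‖}) /
          max (sSup {y : ℝ | ∃ r ∈ Set.Ico (0 : ℝ) 1, y = ‖PA r‖})
              (sSup {y : ℝ | ∃ r ∈ Set.Ico (0 : ℝ) 1, y = ‖PB r‖})) ≤ deltaP PA PB ∧
    deltaP PA PB ≤ (1 / 2) * Real.log (1 +
        max ‖Ring.inverse PA1‖ ‖Ring.inverse PB1‖ *
          sSup {y : ℝ | ∃ r ∈ Set.Ico (0 : ℝ) 1, y = ‖PA r - PB r‖}) := by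
  obtain ⟨hA0, hAu⟩ := poisson_pos A hA PA1 hPA1
  obtain ⟨hB0, hBu⟩ := poisson_pos B hB PB1 hPB1
  have hPA' := fun r hr => poisson_bounds A PA1 (PA r) r hr hPA1 (hPA r hr) hA0 hAu
  have hPB' := fun r hr => poisson_bounds B PB1 (PB r) r hr hPB1 (hPB r hr) hB0 hBu
  exact ⟨⟨(nonneg_iff_isPositive _).1 hA0, hAu⟩, ⟨(nonneg_iff_isPositive _).1 hB0, hBu⟩,
    final_aux PA PB ‖PA1‖ ‖PB1‖ ‖Ring.inverse PA1‖ ‖Ring.inverse PB1‖ (norm_nonneg _) (norm_nonneg _)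
      hPA' hPB'⟩

end
end
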